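/- arXiv:2404.13703 — 2 statements merged into one kernel-verified Lean document; each statement's English description precedes it below -/
import Mathlib

section
/- Suppose the initial datum Q_init satisfies Assumption (A2). Then there exists a unique classical solution (Q,N) of the Q-system on a maximal existence interval [0,τ*), where 0 < τ* ≤ ∞ (maximal in the sense that any classical solution on [0,T) with the same initial datum satisfies T ≤ τ* and coincides with (Q,N) on [0,T)). Moreover, if τ* < ∞ then N(τ) → +∞ as τ → τ*⁻. -/
open Real Set MeasureTheory Filter Topology
open scoped ENNReal

noncomputable section

/-- The time interval `[0, T)` in `ℝ`, where `T : ℝ≥0∞` may be `∞`. -/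
def Ico0 (T : ℝ≥0∞) : Set ℝ := {τ : ℝ | 0 ≤ τ ∧ ENNReal.ofReal τ < T}

/-- Partial derivative in the time variable (one-sided at `τ = 0`). -/
def pdTau (Q : ℝ → ℝ → ℝ) (τ η : ℝ) : ℝ := derivWithin (fun s => Q s η) (Ici 0) τ

/-- Partial derivative in the spatial variable (one-sided at `η = 0` and `η = 1`). -/
def pdEta (Q : ℝ → ℝ → ℝ) (τ η : ℝ) : ℝ := derivWithin (fun x => Q τ x) (Icc 0 1) η

/-- Assumption 1.1: `K ∈ C²(ℝ)` with `K'`, `K''` bounded on `ℝ` and `K > 0` on `[0, Φ_F]`. -/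
structure KAssump (K : ℝ → ℝ) (ΦF : ℝ) : Prop where
  smooth : ContDiff ℝ 2 K
  bdd1 : ∃ C : ℝ, ∀ x : ℝ, |deriv K x| ≤ C
  bdd2 : ∃ C : ℝ, ∀ x : ℝ, |deriv (deriv K) x| ≤ C
  pos : ∀ φ ∈ Icc (0 : ℝ) ΦF, 0 < K φ

/-- `k_min := K'(0) + ∫₀^{Φ_F} min(K''(φ), 0) dφ`. -/
def kmin (K : ℝ → ℝ) (ΦF : ℝ) : ℝ :=
  deriv K 0 + ∫ φ in (0 : ℝ)..ΦF, min (deriv (deriv K) φ) 0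

/-- `k_max := K'(0) + ∫₀^{Φ_F} max(K''(φ), 0) dφ`. -/
def kmax (K : ℝ → ℝ) (ΦF : ℝ) : ℝ :=
  deriv K 0 + ∫ φ in (0 : ℝ)..ΦF, max (deriv (deriv K) φ) 0

/-- Assumption (A2) on the initial datum. -/
structure A2 (K : ℝ → ℝ) (ΦF : ℝ) (Qinit : ℝ → ℝ) : Prop where
  reg : ContDiffOn ℝ 1 Qinit (Icc 0 1)
  mono : MonotoneOn Qinit (Icc 0 1)
  init0 : Qinit 0 = 0
  init1 : Qinit 1 = ΦF
  deriv1 : K ΦF < derivWithin Qinit (Icc 0 1) 1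
  compat : derivWithin Qinit (Icc 0 1) 1 - derivWithin Qinit (Icc 0 1) 0 = K ΦF - K 0

/-- A classical solution `(Q, N)` of the Q-system on `[0, T)` with initial datum `Qinit`. -/
structure IsQSol (K : ℝ → ℝ) (ΦF : ℝ) (T : ℝ≥0∞) (Qinit : ℝ → ℝ)
    (Q : ℝ → ℝ → ℝ) (N : ℝ → ℝ) : Prop where
  initReg : ContDiffOn ℝ 1 Qinit (Icc 0 1)
  initMono : MonotoneOn Qinit (Icc 0 1)
  init0 : Qinit 0 = 0
  init1 : Qinit 1 = ΦF
  initDeriv : K ΦF < derivWithin Qinit (Icc 0 1) 1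
  reg : ContDiffOn ℝ 1 (Function.uncurry Q) (Ico0 T ×ˢ Icc (0 : ℝ) 1)
  mono : ∀ τ ∈ Ico0 T, MonotoneOn (Q τ) (Icc 0 1)
  Ncont : ContinuousOn N (Ico0 T)
  Npos : ∀ τ ∈ Ico0 T, 0 < N τ
  pde : ∀ τ ∈ Ico0 T, ∀ η ∈ Ioo (0 : ℝ) 1,
    pdTau Q τ η + pdEta Q τ η = 1 / N τ + K (Q τ η)
  bc : ∀ τ ∈ Ico0 T, Q τ 0 = 0
  Ndef : ∀ τ ∈ Ico0 T, 1 / N τ = pdEta Q τ 1 - K ΦF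
  init : ∀ η ∈ Icc (0 : ℝ) 1, Q 0 η = Qinit η
  constraint : ∀ τ ∈ Ico0 T, K ΦF < pdEta Q τ 1

/-- A classical solution `(Q, Ñ)` of the relaxed system on `[0, T)` with initial datum `Qinit`,
where `Ñ` is unconstrained in sign. -/
structure IsRelaxedSol (K : ℝ → ℝ) (ΦF : ℝ) (T : ℝ≥0∞) (Qinit : ℝ → ℝ)
    (Q : ℝ → ℝ → ℝ) (Ntil : ℝ → ℝ) : Prop where
  initReg : ContDiffOn ℝ 1 Qinit (Icc 0 1)
  init0 : Qinit 0 = 0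
  init1 : Qinit 1 = ΦF
  reg : ContDiffOn ℝ 1 (Function.uncurry Q) (Ico0 T ×ˢ Icc (0 : ℝ) 1)
  Ncont : ContinuousOn Ntil (Ico0 T)
  pde : ∀ τ ∈ Ico0 T, ∀ η ∈ Ioo (0 : ℝ) 1,
    pdTau Q τ η + pdEta Q τ η = Ntil τ + K (Q τ η)
  bc : ∀ τ ∈ Ico0 T, Q τ 0 = 0
  Ndef : ∀ τ ∈ Ico0 T, Ntil τ = pdEta Q τ 1 - K ΦF
  init : ∀ η ∈ Icc (0 : ℝ) 1, Q 0 η = Qinit η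

/-- A steady state `(Q*, N*)` of the Q-system. -/
def IsSteadyState (K : ℝ → ℝ) (ΦF : ℝ) (Qs : ℝ → ℝ) (Ns : ℝ) : Prop :=
  ContDiffOn ℝ 1 Qs (Icc 0 1) ∧ 0 < Ns ∧
    (∀ η ∈ Icc (0 : ℝ) 1, derivWithin Qs (Icc 0 1) η = K (Qs η) + 1 / Ns) ∧
    Qs 0 = 0 ∧ Qs 1 = ΦF

/-- `P₀ f := f - ∫₀¹ f`. -/
def P0 (f : ℝ → ℝ) (η : ℝ) : ℝ := f η - ∫ x in (0 : ℝ)..1, f x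

/-- `H_init := Q_init' - K ∘ Q_init` (derivative within `[0,1]`). -/
def Hinit (K : ℝ → ℝ) (Qinit : ℝ → ℝ) (η : ℝ) : ℝ :=
  derivWithin Qinit (Icc 0 1) η - K (Qinit η)

/-- Weighted boundedness and continuity. -/
def WGood (w u : ℝ → ℝ) : Prop := Continuous u ∧ ∃ C, ∀ t, |u t| ≤ C * w t

theorem weighted_fixed (w : ℝ → ℝ) (hw : Continuous w) (hpos : ∀ t, 0 < w t)
    (Γ : (ℝ → ℝ) → ℝ → ℝ)
    (hcont : ∀ u, WGood w u → Continuous (Γ u))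
    (hcontr : ∀ u v, WGood w u → WGood w v → ∀ M, (∀ t, |u t - v t| ≤ M * w t) →
      ∀ t, |Γ u t - Γ v t| ≤ M / 2 * w t)
    (hzero : ∃ C, ∀ t, |Γ (fun _ => 0) t| ≤ C * w t) :
    ∃ u, WGood w u ∧ Γ u = u := by
  classical
  obtain ⟨C0, hC0⟩ := hzero
  have g0 : WGood w (fun _ => 0) := ⟨continuous_const, 0, by simp⟩
  have gf : ∀ f : BoundedContinuousFunction ℝ ℝ, WGood w (fun s => f s * w s) := by
    intro f
    refine ⟨f.continuous.mul hw, ‖f‖, fun t => ?_⟩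
    rw [abs_mul, abs_of_pos (hpos t)]
    exact mul_le_mul_of_nonneg_right (f.norm_coe_le_norm t) (hpos t).le
  let F : BoundedContinuousFunction ℝ ℝ → BoundedContinuousFunction ℝ ℝ := fun f =>
    BoundedContinuousFunction.ofNormedAddCommGroup (fun t => Γ (fun s => f s * w s) t / w t)
      ((hcont _ (gf f)).div hw (fun t => (hpos t).ne')) (‖f‖ / 2 + C0) (by
        intro t
        rw [Real.norm_eq_abs, abs_div, abs_of_pos (hpos t), div_le_iff₀ (hpos t)]
        have h1 := hcontr _ _ (gf f) g0 ‖f‖ (by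
          intro t
          rw [sub_zero, abs_mul, abs_of_pos (hpos t)]
          exact mul_le_mul_of_nonneg_right (f.norm_coe_le_norm t) (hpos t).le) t
        have h2 := hC0 t
        have h3 := abs_sub_abs_le_abs_sub (Γ (fun s => f s * w s) t) (Γ (fun _ => 0) t)
        linarith)
  have hF : ContractingWith (1/2 : NNReal) F := by
    refine ⟨by rw [← NNReal.coe_lt_coe]; norm_num, ?_⟩
    refine LipschitzWith.of_dist_le_mul fun f g => ?_
    rw [BoundedContinuousFunction.dist_le (by positivity)]
    intro t
    change dist (Γ (fun s => f s * w s) t / w t) (Γ (fun s => g s * w s) t / w t) ≤ _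
    rw [Real.dist_eq, ← sub_div, abs_div, abs_of_pos (hpos t), div_le_iff₀ (hpos t)]
    have h1 := hcontr _ _ (gf f) (gf g) (dist f g) (by
      intro t
      rw [← sub_mul, abs_mul, abs_of_pos (hpos t)]
      refine mul_le_mul_of_nonneg_right ?_ (hpos t).le
      rw [← Real.dist_eq]
      exact BoundedContinuousFunction.dist_coe_le_dist t) t
    refine h1.trans_eq ?_
    push_cast
    ring
  have hfix := hF.fixedPoint_isFixedPt
  set f := ContractingWith.fixedPoint F hF
  refine ⟨fun s => f s * w s, gf f, ?_⟩
  funext t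
  have : (F f) t = f t := by rw [hfix]
  change Γ (fun s => f s * w s) t / w t = f t at this
  rw [div_eq_iff (hpos t).ne'] at this
  exact this

/-- Solutions of the scalar equation `y' = K (S t + y)`. -/
def IsSolODE (K S y : ℝ → ℝ) : Prop := ∀ t, HasDerivAt y (K (S t + y t)) t

theorem abs_sinh_le_cosh (x : ℝ) : |sinh x| ≤ cosh x := by
  rw [abs_le]
  constructor
  · have := Real.cosh_add_sinh x; have := exp_pos x; linarith
  · have := Real.cosh_sub_sinh x; have := exp_pos (-x); linarith

theorem integral_cosh_bound (lam : ℝ) (hl : 0 < lam) (t : ℝ) :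
    |∫ r in (0:ℝ)..t, cosh (lam * r)| ≤ cosh (lam * t) / lam := by
  have : ∫ r in (0:ℝ)..t, cosh (lam * r) = sinh (lam * t) / lam := by
    rw [intervalIntegral.integral_eq_sub_of_hasDerivAt (f := fun r => sinh (lam * r) / lam)]
    · simp
    · intro x _
      have h := ((hasDerivAt_id x).const_mul lam).sinh.div_const lam
      simpa [hl.ne'] using h
    · exact (by fun_prop : Continuous fun r => cosh (lam * r)).intervalIntegrable _ _
  rw [this, abs_div, abs_of_pos hl]
  exact div_le_div_of_nonneg_right (abs_sinh_le_cosh _) hl.le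

theorem exists_ode0 (K S : ℝ → ℝ) (L lam : ℝ) (hL : 1 ≤ L) (hlam : 2 * L ≤ lam)
    (hKc : Continuous K) (hK : ∀ x y, |K x - K y| ≤ L * |x - y|)
    (hS : WGood (fun t => cosh (lam * t)) S) (y0 : ℝ) :
    ∃ y, IsSolODE K S y ∧ y 0 = y0 := by
  obtain ⟨hSc, C, hC⟩ := hS
  have hl : 0 < lam := by linarith
  have hwc : Continuous fun r => cosh (lam * r) := by fun_prop
  obtain ⟨u, ⟨huc, -⟩, hu⟩ := weighted_fixed (fun t => cosh (lam * t)) (by fun_prop)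
    (fun t => cosh_pos _) (fun u t => y0 + ∫ r in (0:ℝ)..t, K (S r + u r)) (by
      rintro u ⟨huc, -⟩
      exact continuous_const.add (intervalIntegral.continuous_primitive
        (fun a b => (by fun_prop : Continuous fun r => K (S r + u r)).intervalIntegrable _ _) _)) (by
      rintro u v ⟨huc, -⟩ ⟨hvc, -⟩ M hM t
      have hM0 : 0 ≤ M := by have := (abs_nonneg _).trans (hM 0); simpa using this
      rw [add_sub_add_left_eq_sub, ← intervalIntegral.integral_sub
        ((by fun_prop : Continuous fun r => K (S r + u r)).intervalIntegrable _ _)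
        ((by fun_prop : Continuous fun r => K (S r + v r)).intervalIntegrable _ _)]
      have h1 : ‖∫ r in (0:ℝ)..t, (K (S r + u r) - K (S r + v r))‖ ≤
          |∫ r in (0:ℝ)..t, L * M * cosh (lam * r)| := by
        refine intervalIntegral.norm_integral_le_abs_of_norm_le (ae_of_all _ fun r => ?_)
          ((continuous_const.mul hwc).intervalIntegrable _ _)
        rw [Real.norm_eq_abs]
        refine (hK _ _).trans ?_
        rw [add_sub_add_left_eq_sub, mul_assoc]
        exact mul_le_mul_of_nonneg_left (hM r) (by linarith)
      rw [intervalIntegral.integral_const_mul, abs_mul, abs_of_nonneg (by positivity)] at h1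
      refine h1.trans ((mul_le_mul_of_nonneg_left (integral_cosh_bound lam hl t)
        (by positivity)).trans ?_)
      rw [mul_div_assoc', div_le_iff₀ hl]
      have := mul_nonneg hM0 (cosh_pos (lam * t)).le
      nlinarith) (by
      refine ⟨|y0| + (|K 0| + L * C) / lam, fun t => ?_⟩
      have hC0 : 0 ≤ C := by have := (abs_nonneg _).trans (hC 0); simpa using this
      have h1 : ‖∫ r in (0:ℝ)..t, K (S r + 0)‖ ≤
          |∫ r in (0:ℝ)..t, (|K 0| + L * C) * cosh (lam * r)| := by
        refine intervalIntegral.norm_integral_le_abs_of_norm_le (ae_of_all _ fun r => ?_)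
          ((continuous_const.mul hwc).intervalIntegrable _ _)
        rw [Real.norm_eq_abs]
        have h2 := hK (S r + 0) 0
        have h3 := abs_sub_abs_le_abs_sub (K (S r + 0)) (K 0)
        simp only [add_zero, sub_zero] at *
        have h4 := mul_le_mul_of_nonneg_left (hC r) (by linarith : 0 ≤ L)
        have h5 := mul_le_mul_of_nonneg_left (one_le_cosh (lam * r)) (abs_nonneg (K 0))
        nlinarith
      rw [intervalIntegral.integral_const_mul, abs_mul, abs_of_nonneg (by positivity)] at h1
      have h2 := mul_le_mul_of_nonneg_left (integral_cosh_bound lam hl t)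
        (by positivity : 0 ≤ |K 0| + L * C)
      have h3 := mul_le_mul_of_nonneg_left (one_le_cosh (lam * t)) (abs_nonneg y0)
      rw [Real.norm_eq_abs] at h1
      have h4 := abs_add_le y0 (∫ r in (0:ℝ)..t, K (S r + 0))
      have h5 : (|K 0| + L * C) * (cosh (lam * t) / lam) =
        (|K 0| + L * C) / lam * cosh (lam * t) := by ring
      nlinarith)
  refine ⟨u, fun t => ?_, ?_⟩
  · have hc : Continuous fun r => K (S r + u r) := by fun_prop
    have := (intervalIntegral.integral_hasDerivAt_right (hc.intervalIntegrable 0 t)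
      hc.aestronglyMeasurable.stronglyMeasurableAtFilter hc.continuousAt).const_add y0
    rw [← hu]
    have h2 : K (S t + (fun t => y0 + ∫ r in (0:ℝ)..t, K (S r + u r)) t) = K (S t + u t) := by
      rw [hu]
    rw [h2]
    exact this
  · rw [← hu]; simp

theorem WGood.shift {lam : ℝ} {S : ℝ → ℝ} (hS : WGood (fun t => cosh (lam * t)) S) (s : ℝ) :
    WGood (fun t => cosh (lam * t)) (fun t => S (t + s)) := by
  obtain ⟨hSc, C, hC⟩ := hS
  have hC0 : 0 ≤ C := by have := (abs_nonneg _).trans (hC 0); simpa using this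
  refine ⟨by fun_prop, C * (2 * cosh (lam * s)), fun t => (hC _).trans ?_⟩
  rw [mul_assoc]
  refine mul_le_mul_of_nonneg_left ?_ hC0
  beta_reduce
  rw [mul_add, cosh_add]
  have h1 := abs_sinh_le_cosh (lam * t)
  have h2 := abs_sinh_le_cosh (lam * s)
  have h3 := mul_le_mul h1 h2 (abs_nonneg _) (cosh_pos _).le
  rw [← abs_mul] at h3
  have := le_abs_self (sinh (lam * t) * sinh (lam * s))
  nlinarith

theorem exists_ode (K S : ℝ → ℝ) (L lam : ℝ) (hL : 1 ≤ L) (hlam : 2 * L ≤ lam)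
    (hKc : Continuous K) (hK : ∀ x y, |K x - K y| ≤ L * |x - y|)
    (hS : WGood (fun t => cosh (lam * t)) S) (s y0 : ℝ) :
    ∃ y, IsSolODE K S y ∧ y s = y0 := by
  obtain ⟨y, hy, h0⟩ := exists_ode0 K _ L lam hL hlam hKc hK (hS.shift s) y0
  refine ⟨fun t => y (t - s), fun t => ?_, by simpa using h0⟩
  have := (hy (t - s)).comp_sub_const t s
  simpa using this

/-- uniqueness for the scalar ODE -/
theorem ode_unique {K S : ℝ → ℝ} {L : ℝ} (hL : 1 ≤ L)
    (hK : ∀ x y, |K x - K y| ≤ L * |x - y|) {y z : ℝ → ℝ}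
    (hy : IsSolODE K S y) (hz : IsSolODE K S z) (s : ℝ) (h : y s = z s) : y = z := by
  refine ODE_solution_unique_univ (v := fun t x => K (S t + x)) (s := fun _ => univ)
    (K := L.toNNReal) (t₀ := s) (fun t => ?_) (fun t => ⟨hy t, mem_univ _⟩)
    (fun t => ⟨hz t, mem_univ _⟩) h
  refine (LipschitzWith.of_dist_le_mul fun a b => ?_).lipschitzOnWith
  rw [Real.coe_toNNReal _ (by linarith), Real.dist_eq, Real.dist_eq]
  refine (hK _ _).trans ?_
  rw [add_sub_add_left_eq_sub]

/-- The flow from time zero, and its inverse. -/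
structure QFlow (K S : ℝ → ℝ) (ψ χ : ℝ → ℝ → ℝ) : Prop where
  init : ∀ y, ψ 0 y = y
  sol : ∀ y, IsSolODE K S (fun t => ψ t y)
  inv : ∀ t z, ψ t (χ t z) = z

theorem exists_flow (K S : ℝ → ℝ) (L lam : ℝ) (hL : 1 ≤ L) (hlam : 2 * L ≤ lam)
    (hKc : Continuous K) (hK : ∀ x y, |K x - K y| ≤ L * |x - y|)
    (hS : WGood (fun t => cosh (lam * t)) S) : ∃ p : (ℝ → ℝ → ℝ) × (ℝ → ℝ → ℝ),
      QFlow K S p.1 p.2 := by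
  choose Y hY hY0 using exists_ode K S L lam hL hlam hKc hK hS
  refine ⟨⟨fun t y => Y 0 y t, fun t z => Y t z 0⟩, ⟨fun y => hY0 0 y, fun y => hY 0 y, ?_⟩⟩
  intro t z
  have : Y 0 (Y t z 0) = Y t z := ode_unique hL hK (hY _ _) (hY _ _) 0 (hY0 _ _)
  change Y 0 (Y t z 0) t = z
  rw [this, hY0]

/-- Regularity of `K` used below. -/
structure KReg (K : ℝ → ℝ) (L : ℝ) : Prop where
  one_le : 1 ≤ L
  diff : ∀ x, HasDerivAt K (deriv K x) x
  dcont : Continuous (deriv K)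
  lip : ∀ x y, |K x - K y| ≤ L * |x - y|

theorem KReg.cont {K : ℝ → ℝ} {L : ℝ} (hK : KReg K L) : Continuous K :=
  continuous_iff_continuousAt.2 fun x => (hK.diff x).continuousAt

/-- derivative of the flow with respect to the initial value -/
noncomputable def flowE (K S : ℝ → ℝ) (ψ : ℝ → ℝ → ℝ) (t y : ℝ) : ℝ :=
  exp (∫ r in (0:ℝ)..t, deriv K (S r + ψ r y))

namespace QFlow

variable {K S : ℝ → ℝ} {L : ℝ} {ψ χ : ℝ → ℝ → ℝ}

theorem cont_t (h : QFlow K S ψ χ) (y : ℝ) : Continuous (fun t => ψ t y) :=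
  continuous_iff_continuousAt.2 fun t => (h.sol y t).continuousAt

theorem sol_eq (h : QFlow K S ψ χ) (hK : KReg K L) {y : ℝ → ℝ} (hy : IsSolODE K S y) (s t : ℝ) :
    y t = ψ t (χ s (y s)) := by
  have := ode_unique hK.one_le hK.lip hy (h.sol (χ s (y s))) s (h.inv _ _).symm
  exact congrFun this t

theorem inj (h : QFlow K S ψ χ) (hK : KReg K L) {t y z : ℝ} (hyz : ψ t y = ψ t z) : y = z := by
  have := ode_unique hK.one_le hK.lip (h.sol y) (h.sol z) t hyz
  have := congrFun this 0
  simpa [h.init] using this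

theorem linv (h : QFlow K S ψ χ) (hK : KReg K L) (t y : ℝ) : χ t (ψ t y) = y :=
  h.inj hK (t := t) (h.inv _ _)

theorem chi_zero (h : QFlow K S ψ χ) (hK : KReg K L) (y : ℝ) : χ 0 y = y := by
  have := h.linv hK 0 y
  rwa [h.init] at this

theorem diff_formula (h : QFlow K S ψ χ) (hS : Continuous S) (hK : KReg K L) {y z : ℝ} (hyz : y ≠ z)
    (t : ℝ) : ψ t y - ψ t z = (y - z) *
      exp (∫ r in (0:ℝ)..t, (K (S r + ψ r y) - K (S r + ψ r z)) / (ψ r y - ψ r z)) := by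
  have hne : ∀ r, ψ r y - ψ r z ≠ 0 := fun r hr => hyz (h.inj hK (sub_eq_zero.1 hr))
  have hc := hK.cont
  have hy := h.cont_t y
  have hz := h.cont_t z
  set g : ℝ → ℝ := fun r => (K (S r + ψ r y) - K (S r + ψ r z)) / (ψ r y - ψ r z) with hg
  have hgc : Continuous g := by
    refine Continuous.div (by fun_prop) (by fun_prop) hne
  have hG : ∀ t, HasDerivAt (fun t => ∫ r in (0:ℝ)..t, g r) (g t) t := fun t =>
    intervalIntegral.integral_hasDerivAt_right (hgc.intervalIntegrable 0 t)
      hgc.aestronglyMeasurable.stronglyMeasurableAtFilter hgc.continuousAt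
  have hF : ∀ t, HasDerivAt (fun t => (ψ t y - ψ t z) * exp (-∫ r in (0:ℝ)..t, g r)) 0 t := by
    intro t
    have h1 := ((h.sol y t).fun_sub (h.sol z t)).fun_mul (hG t).fun_neg.exp
    refine h1.congr_deriv ?_
    have : K (S t + ψ t y) - K (S t + ψ t z) = g t * (ψ t y - ψ t z) := by
      rw [hg]; exact (div_mul_cancel₀ _ (hne t)).symm
    rw [this]
    ring
  have hconst := is_const_of_deriv_eq_zero (fun t => (hF t).differentiableAt)
    (fun t => (hF t).deriv) t 0
  simp only [intervalIntegral.integral_same, neg_zero, exp_zero, mul_one, h.init] at hconst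
  rw [← hconst, mul_assoc, ← exp_add, neg_add_cancel, exp_zero, mul_one]

theorem slope_bound (_h : QFlow K S ψ χ) (hK : KReg K L) (y z r : ℝ) :
    ‖(K (S r + ψ r y) - K (S r + ψ r z)) / (ψ r y - ψ r z)‖ ≤ L := by
  rw [norm_div, Real.norm_eq_abs, Real.norm_eq_abs]
  refine div_le_of_le_mul₀ (abs_nonneg _) (by linarith [hK.one_le]) ?_
  refine (hK.lip _ _).trans ?_
  rw [add_sub_add_left_eq_sub]

theorem int_bound (h : QFlow K S ψ χ) (hK : KReg K L) (y z t : ℝ) :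
    |∫ r in (0:ℝ)..t, (K (S r + ψ r y) - K (S r + ψ r z)) / (ψ r y - ψ r z)| ≤ L * |t| := by
  have := intervalIntegral.norm_integral_le_of_norm_le_const (a := 0) (b := t)
    (fun r _ => h.slope_bound hK y z r)
  simpa using this

theorem lip (h : QFlow K S ψ χ) (hS : Continuous S) (hK : KReg K L) (y z t : ℝ) :
    |ψ t y - ψ t z| ≤ exp (L * |t|) * |y - z| := by
  by_cases hyz : y = z
  · simp [hyz]
  rw [h.diff_formula hS hK hyz, abs_mul, abs_of_pos (exp_pos _), mul_comm]
  refine mul_le_mul_of_nonneg_right (exp_le_exp.2 ?_) (abs_nonneg _)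
  exact (le_abs_self _).trans (h.int_bound hK y z t)

theorem lip' (h : QFlow K S ψ χ) (hS : Continuous S) (hK : KReg K L) (y z t : ℝ) :
    |y - z| ≤ exp (L * |t|) * |ψ t y - ψ t z| := by
  by_cases hyz : y = z
  · simp [hyz]
  rw [h.diff_formula hS hK hyz, abs_mul, abs_of_pos (exp_pos _), mul_comm, mul_assoc, ← exp_add]
  refine le_mul_of_one_le_right (abs_nonneg _) (one_le_exp ?_)
  have := (neg_abs_le _).trans' (neg_le_neg (h.int_bound hK y z t))
  linarith

theorem cont (h : QFlow K S ψ χ) (hS : Continuous S) (hK : KReg K L) :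
    Continuous (fun p : ℝ × ℝ => ψ p.1 p.2) := by
  rw [continuous_iff_continuousAt]
  rintro ⟨t0, y0⟩
  have h1 : Tendsto (fun p : ℝ × ℝ => exp (L * |p.1|) * |p.2 - y0| + |ψ p.1 y0 - ψ t0 y0|)
      (𝓝 (t0, y0)) (𝓝 0) := by
    have hc : Continuous (fun p : ℝ × ℝ =>
        exp (L * |p.1|) * |p.2 - y0| + |ψ p.1 y0 - ψ t0 y0|) := by
      have := (h.cont_t y0).comp continuous_fst (Y := ℝ) (X := ℝ × ℝ)
      exact (by fun_prop : Continuous fun p : ℝ × ℝ => exp (L * |p.1|) * |p.2 - y0|).add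
        (this.sub continuous_const).abs
    have := hc.tendsto (t0, y0)
    simpa using this
  rw [ContinuousAt, tendsto_iff_dist_tendsto_zero]
  refine squeeze_zero (fun _ => dist_nonneg) (fun p => ?_) h1
  rw [Real.dist_eq]
  have := h.lip hS hK p.2 y0 p.1
  have h2 := abs_sub_le (ψ p.1 p.2) (ψ p.1 y0) (ψ t0 y0)
  linarith

theorem cont_chi (h : QFlow K S ψ χ) (hS : Continuous S) (hK : KReg K L) :
    Continuous (fun p : ℝ × ℝ => χ p.1 p.2) := by
  rw [continuous_iff_continuousAt]
  rintro ⟨t0, y0⟩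
  have h1 : Tendsto (fun p : ℝ × ℝ => exp (L * |p.1|) * |p.2 - ψ p.1 (χ t0 y0)|)
      (𝓝 (t0, y0)) (𝓝 0) := by
    have hc : Continuous (fun p : ℝ × ℝ => exp (L * |p.1|) * |p.2 - ψ p.1 (χ t0 y0)|) := by
      have := (h.cont_t (χ t0 y0)).comp continuous_fst (Y := ℝ) (X := ℝ × ℝ)
      exact (by fun_prop : Continuous fun p : ℝ × ℝ => exp (L * |p.1|)).mul
        (continuous_snd.sub this).abs
    have := hc.tendsto (t0, y0)
    simpa [h.inv] using this
  rw [ContinuousAt, tendsto_iff_dist_tendsto_zero]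
  refine squeeze_zero (fun _ => dist_nonneg) (fun p => ?_) h1
  rw [Real.dist_eq]
  have := h.lip' hS hK (χ p.1 p.2) (χ t0 y0) p.1
  rwa [h.inv] at this

theorem E_pos (t y : ℝ) : 0 < flowE K S ψ t y := exp_pos _

theorem E_zero (y : ℝ) : flowE K S ψ 0 y = 1 := by simp [flowE]

theorem E_cont (h : QFlow K S ψ χ) (hS : Continuous S) (hK : KReg K L) :
    Continuous (fun p : ℝ × ℝ => flowE K S ψ p.1 p.2) := by
  refine continuous_exp.comp ?_
  have hc : Continuous (Function.uncurry fun (p : ℝ × ℝ) (r : ℝ) => deriv K (S r + ψ r p.2)) := by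
    refine hK.dcont.comp ((hS.comp continuous_snd).add ?_)
    exact (h.cont hS hK).comp (continuous_snd.prodMk (continuous_snd.comp continuous_fst))
  exact intervalIntegral.continuous_parametric_intervalIntegral_of_continuous hc continuous_fst

theorem hasDerivAt_y (h : QFlow K S ψ χ) (hS : Continuous S) (hK : KReg K L) (t y : ℝ) :
    HasDerivAt (fun y => ψ t y) (flowE K S ψ t y) y := by
  rw [hasDerivAt_iff_tendsto_slope]
  have h1 : Tendsto (fun z => ∫ r in (0:ℝ)..t,
      (K (S r + ψ r z) - K (S r + ψ r y)) / (ψ r z - ψ r y)) (𝓝[≠] y)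
      (𝓝 (∫ r in (0:ℝ)..t, deriv K (S r + ψ r y))) := by
    refine intervalIntegral.tendsto_integral_filter_of_dominated_convergence (fun _ => L) ?_ ?_ ?_ ?_
    · filter_upwards [self_mem_nhdsWithin] with z hz
      have hne : ∀ r, ψ r z - ψ r y ≠ 0 := fun r hr => hz (h.inj hK (sub_eq_zero.1 hr))
      have hc := hK.cont
      have hy := h.cont_t y
      have hz := h.cont_t z
      exact (Continuous.div (by fun_prop) (by fun_prop) hne).aestronglyMeasurable
    · exact Eventually.of_forall fun z => ae_of_all _ fun r _ => h.slope_bound hK z y r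
    · exact intervalIntegrable_const
    · refine ae_of_all _ fun r _ => ?_
      have h2 := (hasDerivAt_iff_tendsto_slope.1 (hK.diff (S r + ψ r y)))
      have h3 : Tendsto (fun z => S r + ψ r z) (𝓝[≠] y) (𝓝[≠] (S r + ψ r y)) := by
        refine tendsto_nhdsWithin_iff.2 ⟨?_, ?_⟩
        · have hc : Continuous fun z => S r + ψ r z :=
            continuous_const.add ((h.cont hS hK).comp (continuous_const.prodMk continuous_id))
          exact (hc.tendsto y).mono_left nhdsWithin_le_nhds
        · filter_upwards [self_mem_nhdsWithin] with z hz
          intro hh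
          exact hz (h.inj hK (add_left_cancel hh))
      refine (h2.comp h3).congr fun z => ?_
      simp only [Function.comp, slope_def_field, add_sub_add_left_eq_sub]
  refine (((continuous_exp.tendsto _).comp h1).congr' ?_)
  filter_upwards [self_mem_nhdsWithin] with z hz
  have hz' : z ≠ y := hz
  rw [slope_def_field, h.diff_formula hS hK hz', Function.comp]
  rw [mul_div_cancel_left₀ _ (sub_ne_zero.2 hz')]

/-- the Fréchet derivative of the flow -/
noncomputable def flowD (K S : ℝ → ℝ) (ψ : ℝ → ℝ → ℝ) (p : ℝ × ℝ) : ℝ × ℝ →L[ℝ] ℝ :=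
  (ContinuousLinearMap.toSpanSingleton ℝ (K (S p.1 + ψ p.1 p.2))).coprod
    (ContinuousLinearMap.toSpanSingleton ℝ (flowE K S ψ p.1 p.2))

theorem hasFDerivAt (h : QFlow K S ψ χ) (hS : Continuous S) (hK : KReg K L) (p : ℝ × ℝ) :
    HasFDerivAt (fun p : ℝ × ℝ => ψ p.1 p.2) (flowD K S ψ p) p := by
  have c1 : Continuous fun p : ℝ × ℝ => K (S p.1 + ψ p.1 p.2) :=
    hK.cont.comp ((hS.comp continuous_fst).add (h.cont hS hK))
  have := hasStrictFDerivAt_uncurry_coprod (𝕜 := ℝ) (u := p) (f := ψ)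
    (f₁ := fun t y => ContinuousLinearMap.toSpanSingleton ℝ (K (S t + ψ t y)))
    (f₂ := fun t y => ContinuousLinearMap.toSpanSingleton ℝ (flowE K S ψ t y))
    (Eventually.of_forall fun v => (h.sol v.2 v.1).hasFDerivAt)
    (Eventually.of_forall fun v => (h.hasDerivAt_y hS hK v.1 v.2).hasFDerivAt)
    ((ContinuousLinearMap.toSpanSingletonCLE (𝕜 := ℝ) (E := ℝ)).continuous.comp
      c1).continuousAt
    ((ContinuousLinearMap.toSpanSingletonCLE (𝕜 := ℝ) (E := ℝ)).continuous.comp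
      (h.E_cont hS hK)).continuousAt
  exact this.hasFDerivAt

theorem contDiff (h : QFlow K S ψ χ) (hS : Continuous S) (hK : KReg K L) :
    ContDiff ℝ 1 (fun p : ℝ × ℝ => ψ p.1 p.2) := by
  rw [contDiff_one_iff_hasFDerivAt]
  refine ⟨flowD K S ψ, ?_, h.hasFDerivAt hS hK⟩
  have c1 : Continuous fun p : ℝ × ℝ => K (S p.1 + ψ p.1 p.2) :=
    hK.cont.comp ((hS.comp continuous_fst).add (h.cont hS hK))
  have e : flowD K S ψ = fun p => K (S p.1 + ψ p.1 p.2) • ContinuousLinearMap.fst ℝ ℝ ℝ +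
      flowE K S ψ p.1 p.2 • ContinuousLinearMap.snd ℝ ℝ ℝ := by
    funext p
    ext <;> simp [flowD]
  rw [e]
  exact (c1.smul continuous_const).add ((h.E_cont hS hK).smul continuous_const)

theorem contDiff_chi (h : QFlow K S ψ χ) (hS : Continuous S) (hK : KReg K L) :
    ContDiff ℝ 1 (fun p : ℝ × ℝ => χ p.1 p.2) := by
  let f : (ℝ × ℝ) ≃ₜ (ℝ × ℝ) :=
    { toFun := fun p => (p.1, ψ p.1 p.2)
      invFun := fun p => (p.1, χ p.1 p.2)
      left_inv := fun p => by simp [h.linv hK]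
      right_inv := fun p => by simp [h.inv]
      continuous_toFun := continuous_fst.prodMk (h.cont hS hK)
      continuous_invFun := continuous_fst.prodMk (h.cont_chi hS hK) }
  have hf : ContDiff ℝ 1 (f : ℝ × ℝ → ℝ × ℝ) := contDiff_fst.prodMk (h.contDiff hS hK)
  have := f.contDiff_symm (𝕜 := ℝ) (n := 1)
    (f₀' := fun p => (ContinuousLinearEquiv.refl ℝ ℝ).skewProd
      (ContinuousLinearEquiv.unitsEquivAut ℝ (Units.mk0 (flowE K S ψ p.1 p.2) (E_pos _ _).ne'))
      (ContinuousLinearMap.toSpanSingleton ℝ (K (S p.1 + ψ p.1 p.2)))) (by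
      intro p
      have h1 := (hasFDerivAt_fst (𝕜 := ℝ) (p := p)).prodMk (h.hasFDerivAt hS hK p)
      refine h1.congr_fderiv ?_
      ext <;> simp [flowD]) hf
  exact contDiff_snd.comp this

theorem chain (h : QFlow K S ψ χ) (hS : Continuous S) (hK : KReg K L) {a b : ℝ → ℝ} {a' b' : ℝ}
    {s : Set ℝ} {t : ℝ} (ha : HasDerivWithinAt a a' s t) (hb : HasDerivWithinAt b b' s t) :
    HasDerivWithinAt (fun t => ψ (a t) (b t))
      (K (S (a t) + ψ (a t) (b t)) * a' + flowE K S ψ (a t) (b t) * b') s t := by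
  have := (h.hasFDerivAt hS hK (a t, b t)).comp_hasDerivWithinAt t (ha.prodMk hb)
  refine this.congr_deriv ?_
  simp [flowD, mul_comm]

theorem strictMono (h : QFlow K S ψ χ) (hS : Continuous S) (hK : KReg K L) (t : ℝ) :
    StrictMono (ψ t) := by
  refine strictMono_of_deriv_pos fun y => ?_
  have := (h.hasDerivAt_y hS hK t y).deriv
  rw [this]
  exact E_pos _ _

end QFlow

theorem comparison {L ε d a b : ℝ} {D D' : ℝ → ℝ} (hL : 1 ≤ L) (hab : a ≤ b)
    (hD : ∀ t, HasDerivAt D (D' t) t)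
    (hb : ∀ t ∈ Icc a b, |D' t| ≤ L * |D t| + ε * exp (9 * L * t)) (ha : |D a| ≤ d)
    (hε : 0 ≤ ε) :
    |D b| ≤ exp (L * (b - a)) * d + ε / (8 * L) * exp (9 * L * b) := by
  have key : ∀ δ > 0, |D b| ≤ exp (L * (b - a)) * d + ε / (8 * L) * exp (9 * L * b) +
      δ * exp (9 * L * b) := by
    intro δ hδ
    have hB : ∀ x, HasDerivAt (fun t => exp (L * (t - a)) * d + (ε / (8 * L) + δ) * exp (9 * L * t))
        (exp (L * (x - a)) * L * d + (ε / (8 * L) + δ) * (exp (9 * L * x) * (9 * L))) x := by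
      intro x
      have h1 := ((((hasDerivAt_id x).sub_const a).const_mul L).exp).mul_const d
      have h2 := ((((hasDerivAt_id x)).const_mul (9 * L)).exp).const_mul (ε / (8 * L) + δ)
      have := h1.add h2
      simp only [id, mul_one] at this
      exact this
    have := image_norm_le_of_norm_deriv_right_lt_deriv_boundary' (f := D) (f' := D') (a := a) (b := b)
      (fun t _ => (hD t).continuousAt.continuousWithinAt) (fun t _ => (hD t).hasDerivWithinAt)
      (B := fun t => exp (L * (t - a)) * d + (ε / (8 * L) + δ) * exp (9 * L * t))
      (B' := fun x => exp (L * (x - a)) * L * d + (ε / (8 * L) + δ) * (exp (9 * L * x) * (9 * L)))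
      (by
        have : 0 ≤ (ε / (8 * L) + δ) * exp (9 * L * a) := by positivity
        simpa using by linarith)
      (fun t _ => (hB t).continuousAt.continuousWithinAt) (fun t _ => (hB t).hasDerivWithinAt)
      (by
        intro x hx hxe
        refine (hb x ⟨hx.1, hx.2.le⟩).trans_lt ?_
        rw [Real.norm_eq_abs] at hxe
        rw [hxe]
        have e1 : (ε / (8 * L) + δ) * (exp (9 * L * x) * (9 * L)) =
          L * ((ε / (8 * L) + δ) * exp (9 * L * x)) + ε * exp (9 * L * x) +
            8 * L * δ * exp (9 * L * x) := by
          field_simp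
          ring
        rw [e1]
        have : 0 < 8 * L * δ * exp (9 * L * x) := by positivity
        linarith) (right_mem_Icc.2 hab)
    rw [Real.norm_eq_abs] at this
    linarith
  have h0 : 0 < exp (9 * L * b) := exp_pos _
  refine le_of_forall_pos_le_add fun η hη => ?_
  have := key (η / exp (9 * L * b)) (by positivity)
  rwa [div_mul_cancel₀ _ h0.ne'] at this

theorem cosh_le_exp_of_nonneg {x : ℝ} (hx : 0 ≤ x) : cosh x ≤ exp x := by
  have := Real.cosh_add_sinh x
  have := Real.sinh_nonneg_iff.2 hx
  linarith

theorem exp_le_two_cosh (x : ℝ) : exp x ≤ 2 * cosh x := by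
  have := Real.cosh_add_sinh x
  have := le_abs_self (sinh x)
  have := abs_sinh_le_cosh x
  linarith

/-- label function -/
def Zlab (q S : ℝ → ℝ) (χ : ℝ → ℝ → ℝ) (a : ℝ) : ℝ :=
  χ (max (-a) 0) (q (max a 0) - S (max (-a) 0) + S 0)

theorem Zlab_cont {K S q : ℝ → ℝ} {L : ℝ} {ψ χ : ℝ → ℝ → ℝ} (h : QFlow K S ψ χ) (hS : Continuous S)
    (hq : Continuous q) (hK : KReg K L) : Continuous (Zlab q S χ) :=
  (h.cont_chi hS hK).comp ((by fun_prop : Continuous fun a : ℝ => max (-a) 0).prodMk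
    (by fun_prop : Continuous fun a : ℝ => q (max a 0) - S (max (-a) 0) + S 0))

theorem gamma_est {K q S₁ S₂ : ℝ → ℝ} {L : ℝ} {ψ₁ χ₁ ψ₂ χ₂ : ℝ → ℝ → ℝ} (hK : KReg K L)
    (h₁ : QFlow K S₁ ψ₁ χ₁) (h₂ : QFlow K S₂ ψ₂ χ₂) {τ M : ℝ} (hτ : 0 ≤ τ)
    (hM : ∀ t ∈ Icc 0 τ, |S₁ t - S₂ t| ≤ M * exp (9 * L * t)) :
    |ψ₁ τ (Zlab q S₁ χ₁ (1 - τ)) - ψ₂ τ (Zlab q S₂ χ₂ (1 - τ))| ≤ M / 4 * exp (9 * L * τ) := by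
  have hL := hK.one_le
  have hM0 : 0 ≤ M := by
    have := (abs_nonneg _).trans (hM 0 ⟨le_rfl, hτ⟩); simpa using this
  set z₁ := Zlab q S₁ χ₁ (1 - τ) with hz₁
  set z₂ := Zlab q S₂ χ₂ (1 - τ) with hz₂
  set t0 := max (-(1 - τ)) 0 with ht0
  have ht0τ : t0 ≤ τ := max_le (by linarith) hτ
  have ht00 : 0 ≤ t0 := le_max_right _ _
  have e1 : ψ₁ t0 z₁ = q (max (1 - τ) 0) - S₁ t0 + S₁ 0 := h₁.inv _ _
  have e2 : ψ₂ t0 z₂ = q (max (1 - τ) 0) - S₂ t0 + S₂ 0 := h₂.inv _ _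
  have hd : |ψ₁ t0 z₁ - ψ₂ t0 z₂| ≤ 2 * M * exp (9 * L * (τ - 1)) := by
    rw [e1, e2]
    rcases le_total τ 1 with h | h
    · have : t0 = 0 := max_eq_right (by linarith)
      rw [this]
      simp only [sub_add_cancel, sub_self, abs_zero]
      positivity
    · have ht : t0 = τ - 1 := by rw [ht0, max_eq_left (by linarith)]; ring
      have a1 := hM t0 ⟨ht00, ht0τ⟩
      have a2 := hM 0 ⟨le_rfl, hτ⟩
      rw [ht] at a1 ⊢
      have a3 : M * exp (9 * L * 0) ≤ M * exp (9 * L * (τ - 1)) := by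
        refine mul_le_mul_of_nonneg_left (exp_le_exp.2 ?_) hM0
        rw [mul_zero]
        exact mul_nonneg (by linarith) (by linarith)
      have : q (max (1 - τ) 0) - S₁ (τ - 1) + S₁ 0 - (q (max (1 - τ) 0) - S₂ (τ - 1) + S₂ 0) =
        (S₁ 0 - S₂ 0) - (S₁ (τ - 1) - S₂ (τ - 1)) := by ring
      rw [this]
      have := abs_sub (S₁ 0 - S₂ 0) (S₁ (τ - 1) - S₂ (τ - 1))
      linarith
  have := comparison (D := fun t => ψ₁ t z₁ - ψ₂ t z₂) (ε := L * M) hL ht0τ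
    (fun t => (h₁.sol z₁ t).fun_sub (h₂.sol z₂ t)) (by
      intro t ht
      refine (hK.lip _ _).trans ?_
      rw [mul_assoc L M, ← mul_add]
      refine mul_le_mul_of_nonneg_left ?_ (by linarith)
      have a1 := hM t ⟨ht00.trans ht.1, ht.2⟩
      have a2 : S₁ t + ψ₁ t z₁ - (S₂ t + ψ₂ t z₂) = (S₁ t - S₂ t) + (ψ₁ t z₁ - ψ₂ t z₂) := by ring
      rw [a2]
      have := abs_add_le (S₁ t - S₂ t) (ψ₁ t z₁ - ψ₂ t z₂)
      linarith) hd (by positivity)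
  refine this.trans ?_
  have b1 : exp (L * (τ - t0)) ≤ exp L := exp_le_exp.2 (by
    have : τ - 1 ≤ t0 := by rw [ht0]; exact le_max_of_le_left (by linarith)
    nlinarith)
  have b2 : exp (L * (τ - t0)) * (2 * M * exp (9 * L * (τ - 1))) ≤
      exp L * (2 * M * exp (9 * L * (τ - 1))) := mul_le_mul_of_nonneg_right b1 (by positivity)
  have b3 : exp L * exp (9 * L * (τ - 1)) = exp (-(4 * L)) ^ 2 * exp (9 * L * τ) := by
    rw [← exp_add, ← exp_nat_mul, ← exp_add]; congr 1; push_cast; ring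
  have b4 : exp (-(4 * L)) ≤ 1 / 5 := by
    rw [exp_neg, inv_eq_one_div]
    refine one_div_le_one_div_of_le (by norm_num) ?_
    have := add_one_le_exp (4 * L)
    linarith
  have b5 : exp (-(4 * L)) ^ 2 ≤ 1 / 25 := by
    have := exp_pos (-(4 * L))
    nlinarith
  have b6 : L * M / (8 * L) = M / 8 := by field_simp
  rw [b6]
  have b7 : exp L * (2 * M * exp (9 * L * (τ - 1))) ≤ 2 * M * (1 / 25 * exp (9 * L * τ)) := by
    have : exp L * (2 * M * exp (9 * L * (τ - 1))) = 2 * M * (exp L * exp (9 * L * (τ - 1))) := by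
      ring
    rw [this, b3]
    refine mul_le_mul_of_nonneg_left ?_ (by positivity)
    exact mul_le_mul_of_nonneg_right b5 (exp_pos _).le
  have b8 : 0 ≤ M * exp (9 * L * τ) := by positivity
  nlinarith

/-- Existence of the global fixed point `S`. -/
theorem exists_S {K q : ℝ → ℝ} {L ΦF Cq : ℝ} (hK : KReg K L) (hq : Continuous q)
    (hCq : ∀ x, |q x| ≤ Cq) (hq1 : q 1 = ΦF) :
    ∃ S ψ χ, WGood (fun t => cosh (9 * L * t)) S ∧ QFlow K S ψ χ ∧ S 0 = 0 ∧
      ∀ τ, 0 ≤ τ → S τ = ΦF - ψ τ (Zlab q S χ (1 - τ)) := by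
  classical
  have hL := hK.one_le
  let P : (ℝ → ℝ) → (ℝ → ℝ → ℝ) × (ℝ → ℝ → ℝ) := fun S =>
    Classical.epsilon fun p => QFlow K S p.1 p.2
  have hP : ∀ S, WGood (fun t => cosh (9 * L * t)) S → QFlow K S (P S).1 (P S).2 := fun S hS =>
    Classical.epsilon_spec (exists_flow K S L (9 * L) hL (by linarith) hK.cont hK.lip hS)
  obtain ⟨S, hS, hfix⟩ := weighted_fixed (fun t => cosh (9 * L * t)) (by fun_prop)
    (fun t => cosh_pos _)
    (fun S τ => ΦF - (P S).1 (max τ 0) (Zlab q S (P S).2 (1 - max τ 0))) (by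
      intro S hS
      have h := hP S hS
      have c1 : Continuous fun τ : ℝ => max τ 0 := by fun_prop
      exact continuous_const.sub ((h.cont hS.1 hK).comp
        (c1.prodMk ((Zlab_cont h hS.1 hq hK).comp (continuous_const.sub c1))))) (by
      intro S₁ S₂ hS₁ hS₂ M hM τ
      have hM0 : 0 ≤ M := by
        have := (abs_nonneg _).trans (hM 0); simpa using this
      have h0 : 0 ≤ max τ 0 := le_max_right _ _
      have := gamma_est (q := q) hK (hP S₁ hS₁) (hP S₂ hS₂) (M := M) h0 (by
        intro t ht
        refine (hM t).trans (mul_le_mul_of_nonneg_left (cosh_le_exp_of_nonneg ?_) hM0)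
        exact mul_nonneg (by linarith) ht.1)
      rw [sub_sub_sub_cancel_left, abs_sub_comm]
      refine this.trans ?_
      have h1 : exp (9 * L * max τ 0) ≤ 2 * cosh (9 * L * τ) := by
        rcases le_total τ 0 with h | h
        · rw [max_eq_right h]
          have := one_le_cosh (9 * L * τ)
          simp; linarith
        · rw [max_eq_left h]; exact exp_le_two_cosh _
      have := mul_le_mul_of_nonneg_left h1 (by positivity : 0 ≤ M / 4)
      linarith) (by
      have hS0 : WGood (fun t => cosh (9 * L * t)) (fun _ => 0) := ⟨continuous_const, 0, by simp⟩
      have h := hP _ hS0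
      refine ⟨|ΦF| + exp L * Cq + |K 0| / (8 * L) * 2, fun τ => ?_⟩
      have hτ : 0 ≤ max τ 0 := le_max_right _ _
      have hCq0 : 0 ≤ Cq := (abs_nonneg _).trans (hCq 0)
      generalize hσ : max τ 0 = σ at hτ ⊢
      set z := Zlab q (fun _ => 0) (P fun _ => 0).2 (1 - σ) with hz
      set t0 := max (-(1 - σ)) 0 with ht0
      have ht0τ : t0 ≤ σ := max_le (by linarith) hτ
      have ht00 : 0 ≤ t0 := le_max_right _ _
      have e1 : (P fun _ => 0).1 t0 z = q (max (1 - σ) 0) - 0 + 0 := h.inv _ _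
      have := comparison (D := fun t => (P fun _ => 0).1 t z) (ε := |K 0|) (d := Cq) hL ht0τ
        (fun t => h.sol z t) (by
          intro t ht
          have a1 := hK.lip (0 + (P fun _ => 0).1 t z) 0
          have a2 := abs_sub_abs_le_abs_sub (K (0 + (P fun _ => 0).1 t z)) (K 0)
          have a3 : 1 ≤ exp (9 * L * t) := one_le_exp
            (mul_nonneg (by linarith) (ht00.trans ht.1))
          have a4 := mul_le_mul_of_nonneg_left a3 (abs_nonneg (K 0))
          simp only [zero_add, sub_zero] at *
          linarith) (by
          simp only [e1]
          simpa using hCq _) (abs_nonneg _)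
      have h1 : exp (9 * L * σ) ≤ 2 * cosh (9 * L * τ) := by
        rw [← hσ]
        rcases le_total τ 0 with h | h
        · rw [max_eq_right h]
          have := one_le_cosh (9 * L * τ)
          simp; linarith
        · rw [max_eq_left h]; exact exp_le_two_cosh _
      have b1 : exp (L * (σ - t0)) ≤ exp L := exp_le_exp.2 (by
        have : σ - 1 ≤ t0 := by rw [ht0]; exact le_max_of_le_left (by linarith)
        nlinarith)
      have b2 := mul_le_mul_of_nonneg_right b1 hCq0
      have b3 := mul_le_mul_of_nonneg_left h1 (by positivity : 0 ≤ |K 0| / (8 * L))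
      have b4 := abs_sub ΦF ((P fun _ => 0).1 σ z)
      have b5 := one_le_cosh (9 * L * τ)
      have b6 : 0 ≤ |ΦF| + exp L * Cq := by positivity
      have b7 := mul_le_mul_of_nonneg_left b5 b6
      linarith)
  have h := hP S hS
  have hval : ∀ τ, 0 ≤ τ → S τ = ΦF - (P S).1 τ (Zlab q S (P S).2 (1 - τ)) := by
    intro τ hτ
    have := congrFun hfix τ
    simp only [max_eq_left hτ] at this
    exact this.symm
  refine ⟨S, (P S).1, (P S).2, hS, h, ?_, hval⟩
  have := hval 0 le_rfl
  rw [h.init, Zlab] at this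
  norm_num at this
  rw [h.chi_zero hK, hq1, sub_self] at this
  exact this

theorem glue_C1 {f : ℝ → ℝ} {a c b : ℝ} (hac : a < c) (hcb : c < b)
    (h1 : ContDiffOn ℝ 1 f (Icc a c)) (h2 : ContDiffOn ℝ 1 f (Icc c b))
    (hd : derivWithin f (Icc a c) c = derivWithin f (Icc c b) c) :
    ContDiffOn ℝ 1 f (Icc a b) := by
  have u1 := uniqueDiffOn_Icc hac
  have u2 := uniqueDiffOn_Icc hcb
  have u := uniqueDiffOn_Icc (hac.trans hcb)
  rw [contDiffOn_one_iff_derivWithin u1] at h1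
  rw [contDiffOn_one_iff_derivWithin u2] at h2
  rw [contDiffOn_one_iff_derivWithin u]
  classical
  set g : ℝ → ℝ := fun x => if x ≤ c then derivWithin f (Icc a c) x else derivWithin f (Icc c b) x
    with hg
  have g1 : ∀ x ∈ Icc a c, g x = derivWithin f (Icc a c) x := fun x hx => by simp [hg, hx.2]
  have g2 : ∀ x ∈ Icc c b, g x = derivWithin f (Icc c b) x := fun x hx => by
    rcases hx.1.eq_or_lt with h | h
    · subst h; simp [hg, hd]
    · simp [hg, not_le.2 h]
  have hun : Icc a c ∪ Icc c b = Icc a b := Icc_union_Icc_eq_Icc hac.le hcb.le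
  have gc : ContinuousOn g (Icc a b) := by
    rw [← hun]
    exact (h1.2.congr g1).union_of_isClosed (h2.2.congr g2) isClosed_Icc isClosed_Icc
  have d : ∀ x ∈ Icc a b, HasDerivWithinAt f (g x) (Icc a b) x := by
    intro x hx
    rcases lt_trichotomy x c with h | h | h
    · have hx1 : x ∈ Icc a c := ⟨hx.1, h.le⟩
      rw [g1 x hx1]
      refine (h1.1 x hx1).hasDerivWithinAt.mono_of_mem_nhdsWithin ?_
      filter_upwards [self_mem_nhdsWithin, mem_nhdsWithin_of_mem_nhds (Iio_mem_nhds h)] with y hy hy'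
      exact ⟨hy.1, le_of_lt hy'⟩
    · subst h
      rw [← hun]
      refine HasDerivWithinAt.union ?_ ?_
      · rw [g1 x ⟨hac.le, le_rfl⟩]; exact (h1.1 x ⟨hac.le, le_rfl⟩).hasDerivWithinAt
      · rw [g2 x ⟨le_rfl, hcb.le⟩]; exact (h2.1 x ⟨le_rfl, hcb.le⟩).hasDerivWithinAt
    · have hx1 : x ∈ Icc c b := ⟨h.le, hx.2⟩
      rw [g2 x hx1]
      refine (h2.1 x hx1).hasDerivWithinAt.mono_of_mem_nhdsWithin ?_
      filter_upwards [self_mem_nhdsWithin, mem_nhdsWithin_of_mem_nhds (Ioi_mem_nhds h)] with y hy hy'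
      exact ⟨le_of_lt hy', hy.2⟩
  exact ⟨fun x hx => (d x hx).differentiableWithinAt,
    gc.congr fun x hx => (d x hx).derivWithin (u x hx)⟩

/-- all the data of the global relaxed solution -/
structure QBase (K : ℝ → ℝ) (ΦF L : ℝ) (Qinit q S : ℝ → ℝ) (ψ χ : ℝ → ℝ → ℝ) : Prop where
  hK : KReg K L
  hS : Continuous S
  S0 : S 0 = 0
  flow : QFlow K S ψ χ
  hq : Continuous q
  qeq : ∀ x ∈ Icc (0:ℝ) 1, q x = Qinit x
  fix : ∀ τ, 0 ≤ τ → S τ = ΦF - ψ τ (Zlab q S χ (1 - τ))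
  reg : ContDiffOn ℝ 1 Qinit (Icc 0 1)
  mono : MonotoneOn Qinit (Icc 0 1)
  init0 : Qinit 0 = 0
  init1 : Qinit 1 = ΦF
  deriv1 : K ΦF < derivWithin Qinit (Icc 0 1) 1
  compat : derivWithin Qinit (Icc 0 1) 1 - derivWithin Qinit (Icc 0 1) 0 = K ΦF - K 0

namespace QBase
variable {K : ℝ → ℝ} {ΦF L : ℝ} {Qinit q S : ℝ → ℝ} {ψ χ : ℝ → ℝ → ℝ}

theorem Z_pos (B : QBase K ΦF L Qinit q S ψ χ) {a : ℝ} (ha : a ∈ Icc (0:ℝ) 1) :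
    Zlab q S χ a = Qinit a := by
  have h1 : max (-a) 0 = 0 := max_eq_right (by linarith [ha.1])
  rw [Zlab, h1, B.flow.chi_zero B.hK, max_eq_left ha.1, B.qeq a ha]; ring

theorem Z_neg (B : QBase K ΦF L Qinit q S ψ χ) {t : ℝ} (ht : 0 ≤ t) :
    Zlab q S χ (-t) = χ t (-S t) := by
  have h1 : max (-t) 0 = 0 := max_eq_right (by linarith)
  rw [Zlab, h1, neg_neg, max_eq_left ht, B.S0, B.qeq 0 ⟨le_rfl, zero_le_one⟩, B.init0]; simp

theorem psi_Z_neg (B : QBase K ΦF L Qinit q S ψ χ) {t : ℝ} (ht : 0 ≤ t) :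
    ψ t (Zlab q S χ (-t)) = - S t := by
  rw [B.Z_neg ht, B.flow.inv]

theorem S_C1 (B : QBase K ΦF L Qinit q S ψ χ) {s t : Set ℝ}
    (hZ : ContDiffOn ℝ 1 (Zlab q S χ) t) (hst : ∀ x ∈ s, 0 ≤ x ∧ 1 - x ∈ t) :
    ContDiffOn ℝ 1 S s := by
  have h1 : ContDiffOn ℝ 1 (fun τ => Zlab q S χ (1 - τ)) s :=
    hZ.comp (g := Zlab q S χ) (f := fun τ : ℝ => 1 - τ) (by fun_prop) fun x hx => (hst x hx).2
  have h2 : ContDiffOn ℝ 1 (fun τ => ψ τ (Zlab q S χ (1 - τ))) s :=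
    (B.flow.contDiff B.hS B.hK).comp_contDiffOn (contDiffOn_id.prodMk h1)
  exact (contDiffOn_const.sub h2).congr fun x hx => B.fix x (hst x hx).1

theorem S_deriv0 (B : QBase K ΦF L Qinit q S ψ χ) :
    HasDerivWithinAt S (derivWithin Qinit (Icc 0 1) 1 - K ΦF) (Ici 0) 0 := by
  have h0 : HasDerivWithinAt Qinit (derivWithin Qinit (Icc 0 1) 1) (Icc 0 1) 1 :=
    ((B.reg.differentiableOn one_ne_zero) 1 (by simp)).hasDerivWithinAt
  have h1 : HasDerivWithinAt (Zlab q S χ) (derivWithin Qinit (Icc 0 1) 1) (Icc 0 1) 1 :=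
    h0.congr (fun x hx => B.Z_pos hx) (B.Z_pos (by simp))
  have h2 : HasDerivWithinAt (fun τ => Zlab q S χ (1 - τ))
      (-derivWithin Qinit (Icc 0 1) 1) (Icc 0 1) 0 := by
    have := HasDerivWithinAt.scomp (h := fun τ : ℝ => 1 - τ) (h' := -1) (s := Icc (0:ℝ) 1) (0:ℝ)
      (by simpa using h1) ((hasDerivAt_id (0:ℝ)).const_sub 1).hasDerivWithinAt
      (fun x hx => by constructor <;> linarith [hx.1, hx.2])
    simpa [Function.comp_def] using this
  have h3 := B.flow.chain B.hS B.hK (hasDerivWithinAt_id (0:ℝ) (Icc 0 1)) h2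
  have h4 := (h3.const_sub ΦF).congr_of_mem (f₁ := S) (fun x hx => B.fix x hx.1) (by simp)
  have h5 : HasDerivWithinAt S (derivWithin Qinit (Icc 0 1) 1 - K ΦF) (Icc 0 1) 0 := by
    refine h4.congr_deriv ?_
    simp [B.S0, B.flow.init, QFlow.E_zero, B.Z_pos, B.init1, sub_eq_add_neg]
  refine h5.mono_of_mem_nhdsWithin ?_
  exact Icc_mem_nhdsGE_of_mem (by simp)

theorem Z_C1_aux (B : QBase K ΦF L Qinit q S ψ χ) (k : ℕ) :
    ContDiffOn ℝ 1 (Zlab q S χ) (Icc (-(k:ℝ)) 1) := by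
  have base : ContDiffOn ℝ 1 (Zlab q S χ) (Icc 0 1) := B.reg.congr fun x hx => B.Z_pos hx
  induction k with
  | zero => simpa using base
  | succ k ih =>
    have hk : (0:ℝ) ≤ k := Nat.cast_nonneg k
    push_cast
    have hSc : ContDiffOn ℝ 1 S (Icc 0 (k + 1)) := B.S_C1 ih fun x hx =>
      ⟨hx.1, by constructor <;> linarith [hx.1, hx.2]⟩
    have hn : ContDiffOn ℝ 1 (Zlab q S χ) (Icc (-((k:ℝ) + 1)) 0) := by
      have h1 : ContDiffOn ℝ 1 (fun a => -S (-a)) (Icc (-((k:ℝ) + 1)) 0) :=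
        (hSc.comp (g := S) (f := fun a : ℝ => -a) (by fun_prop)
          fun x hx => ⟨by linarith [hx.2], by linarith [hx.1]⟩).neg
      have h2 : ContDiffOn ℝ 1 (fun a => χ (-a) (-S (-a))) (Icc (-((k:ℝ) + 1)) 0) :=
        (B.flow.contDiff_chi B.hS B.hK).comp_contDiffOn (contDiffOn_id.neg.prodMk h1)
      refine h2.congr fun x hx => ?_
      have := B.Z_neg (t := -x) (by linarith [hx.2])
      simpa using this
    refine glue_C1 (by linarith) one_pos hn base ?_
    have e1 : derivWithin (Zlab q S χ) (Icc 0 1) 0 = derivWithin Qinit (Icc 0 1) 0 :=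
      derivWithin_congr (fun x hx => B.Z_pos hx) (B.Z_pos (by simp))
    rw [e1]
    set d := derivWithin (Zlab q S χ) (Icc (-((k:ℝ) + 1)) 0) 0
    have hd : HasDerivWithinAt (Zlab q S χ) d (Icc (-((k:ℝ) + 1)) 0) 0 :=
      ((hn.differentiableOn one_ne_zero) 0 ⟨by linarith, le_rfl⟩).hasDerivWithinAt
    have h2 : HasDerivWithinAt (fun τ => Zlab q S χ (-τ)) (-d) (Icc 0 ((k:ℝ) + 1)) 0 := by
      have := HasDerivWithinAt.scomp (h := fun τ : ℝ => -τ) (h' := -1)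
        (s := Icc (0:ℝ) ((k:ℝ) + 1)) (0:ℝ)
        (by simpa using hd) (hasDerivAt_neg (0:ℝ)).hasDerivWithinAt
        (fun x hx => by constructor <;> linarith [hx.1, hx.2])
      simpa [Function.comp_def] using this
    have h3 := B.flow.chain B.hS B.hK (hasDerivWithinAt_id (0:ℝ) (Icc 0 ((k:ℝ) + 1))) h2
    have hmem : (0:ℝ) ∈ Icc 0 ((k:ℝ) + 1) := ⟨le_rfl, by linarith⟩
    have h4 := (B.S_deriv0.mono (Icc_subset_Ici_self : Icc (0:ℝ) ((k:ℝ) + 1) ⊆ Ici 0)).neg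
    have h5 := h4.congr_of_mem (f₁ := fun t => ψ (id t) (Zlab q S χ (-t)))
      (fun x hx => by simpa using B.psi_Z_neg hx.1) hmem
    have h6 := (uniqueDiffOn_Icc (by linarith : (0:ℝ) < (k:ℝ) + 1) 0 hmem).eq_deriv _ h3 h5
    have hc := B.compat
    simp [B.S0, B.flow.init, QFlow.E_zero, B.Z_pos, B.init0] at h6
    linarith

theorem Z_C1 (B : QBase K ΦF L Qinit q S ψ χ) : ContDiffOn ℝ 1 (Zlab q S χ) (Iic 1) := by
  intro x hx
  obtain ⟨k, hk⟩ := exists_nat_gt (-x)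
  refine (B.Z_C1_aux k x ⟨by linarith, hx⟩).mono_of_mem_nhdsWithin ?_
  filter_upwards [self_mem_nhdsWithin,
    mem_nhdsWithin_of_mem_nhds (Ioi_mem_nhds (by linarith : -(k:ℝ) < x))] with y hy hy'
  exact ⟨le_of_lt hy', hy⟩

theorem S_C1' (B : QBase K ΦF L Qinit q S ψ χ) : ContDiffOn ℝ 1 S (Ici 0) :=
  B.S_C1 B.Z_C1 fun x hx => ⟨hx, by simpa using hx⟩

end QBase

/-- the solution -/
def Qsol (q S : ℝ → ℝ) (ψ χ : ℝ → ℝ → ℝ) (τ η : ℝ) : ℝ := S τ + ψ τ (Zlab q S χ (η - τ))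

/-- inverse firing rate -/
noncomputable def nsol (S : ℝ → ℝ) (τ : ℝ) : ℝ := derivWithin S (Ici 0) τ

namespace QBase
variable {K : ℝ → ℝ} {ΦF L : ℝ} {Qinit q S : ℝ → ℝ} {ψ χ : ℝ → ℝ → ℝ}

theorem Q_C1 (B : QBase K ΦF L Qinit q S ψ χ) :
    ContDiffOn ℝ 1 (Function.uncurry (Qsol q S ψ χ)) (Ici 0 ×ˢ Icc 0 1) := by
  have h1 : ContDiffOn ℝ 1 (fun p : ℝ × ℝ => S p.1) (Ici 0 ×ˢ Icc 0 1) :=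
    B.S_C1'.comp (g := S) (f := fun p : ℝ × ℝ => p.1) (by fun_prop) fun p hp => hp.1
  have h2 : ContDiffOn ℝ 1 (fun p : ℝ × ℝ => Zlab q S χ (p.2 - p.1)) (Ici 0 ×ˢ Icc 0 1) :=
    B.Z_C1.comp (g := Zlab q S χ) (f := fun p : ℝ × ℝ => p.2 - p.1) (by fun_prop) fun p hp => by
      have := hp.1; have := hp.2.2; simp at *; linarith
  exact h1.add ((B.flow.contDiff B.hS B.hK).comp_contDiffOn (contDiffOn_fst.prodMk h2))

theorem n_cont (B : QBase K ΦF L Qinit q S ψ χ) : ContinuousOn (nsol S) (Ici 0) :=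
  ((contDiffOn_one_iff_derivWithin (uniqueDiffOn_Ici 0)).1 B.S_C1').2

theorem n_zero (B : QBase K ΦF L Qinit q S ψ χ) : 0 < nsol S 0 := by
  rw [nsol, B.S_deriv0.derivWithin (uniqueDiffOn_Ici 0 0 (by simp))]
  linarith [B.deriv1]

theorem S_hasDeriv (B : QBase K ΦF L Qinit q S ψ χ) {τ : ℝ} (hτ : 0 ≤ τ) :
    HasDerivWithinAt S (nsol S τ) (Ici 0) τ :=
  ((B.S_C1'.differentiableOn one_ne_zero) τ hτ).hasDerivWithinAt

theorem Z_hasDeriv (B : QBase K ΦF L Qinit q S ψ χ) {a : ℝ} (ha : a ≤ 1) :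
    HasDerivWithinAt (Zlab q S χ) (derivWithin (Zlab q S χ) (Iic 1) a) (Iic 1) a :=
  ((B.Z_C1.differentiableOn one_ne_zero) a ha).hasDerivWithinAt

theorem Q_eta (B : QBase K ΦF L Qinit q S ψ χ) {τ η : ℝ} (hτ : 0 ≤ τ) (hη : η ∈ Icc (0:ℝ) 1) :
    HasDerivWithinAt (fun x => Qsol q S ψ χ τ x)
      (flowE K S ψ τ (Zlab q S χ (η - τ)) * derivWithin (Zlab q S χ) (Iic 1) (η - τ)) (Icc 0 1) η := by
  have h2 : HasDerivWithinAt (fun x => Zlab q S χ (x - τ))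
      (derivWithin (Zlab q S χ) (Iic 1) (η - τ)) (Icc 0 1) η := by
    have := HasDerivWithinAt.scomp (h := fun x : ℝ => x - τ) (h' := 1) (s := Icc (0:ℝ) 1) η
      (B.Z_hasDeriv (by linarith [hη.2])) ((hasDerivAt_id η).sub_const τ).hasDerivWithinAt
      (fun x hx => by simp; linarith [hx.1, hx.2])
    simpa [Function.comp_def] using this
  have h3 := B.flow.chain B.hS B.hK (hasDerivWithinAt_const η (Icc 0 1) τ) h2
  exact (h3.const_add (S τ)).congr_deriv (by ring)

theorem Q_tau (B : QBase K ΦF L Qinit q S ψ χ) {τ η : ℝ} (hτ : 0 ≤ τ) (hη : η ∈ Icc (0:ℝ) 1) :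
    HasDerivWithinAt (fun t => Qsol q S ψ χ t η)
      (nsol S τ + (K (Qsol q S ψ χ τ η) -
        flowE K S ψ τ (Zlab q S χ (η - τ)) * derivWithin (Zlab q S χ) (Iic 1) (η - τ))) (Ici 0) τ := by
  have h2 : HasDerivWithinAt (fun t => Zlab q S χ (η - t))
      (-derivWithin (Zlab q S χ) (Iic 1) (η - τ)) (Ici 0) τ := by
    have := HasDerivWithinAt.scomp (h := fun x : ℝ => η - x) (h' := -1) (s := Ici (0:ℝ)) τ
      (B.Z_hasDeriv (by linarith [hη.2])) ((hasDerivAt_id τ).const_sub η).hasDerivWithinAt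
      (fun x hx => by simp at *; linarith [hη.2])
    simpa [Function.comp_def] using this
  have h3 := B.flow.chain B.hS B.hK (hasDerivWithinAt_id τ (Ici 0)) h2
  exact ((B.S_hasDeriv hτ).add h3).congr_deriv (by simp [Qsol]; ring)

theorem Q_zero (B : QBase K ΦF L Qinit q S ψ χ) {τ : ℝ} (hτ : 0 ≤ τ) : Qsol q S ψ χ τ 0 = 0 := by
  rw [Qsol, zero_sub, B.psi_Z_neg hτ]; ring

theorem Q_one (B : QBase K ΦF L Qinit q S ψ χ) {τ : ℝ} (hτ : 0 ≤ τ) : Qsol q S ψ χ τ 1 = ΦF := by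
  rw [Qsol]; linarith [B.fix τ hτ]

theorem Q_init (B : QBase K ΦF L Qinit q S ψ χ) {η : ℝ} (hη : η ∈ Icc (0:ℝ) 1) :
    Qsol q S ψ χ 0 η = Qinit η := by
  rw [Qsol, B.flow.init, B.S0, sub_zero, B.Z_pos hη, zero_add]

theorem flux_zero (B : QBase K ΦF L Qinit q S ψ χ) {τ : ℝ} (hτ : 0 ≤ τ) :
    flowE K S ψ τ (Zlab q S χ (0 - τ)) * derivWithin (Zlab q S χ) (Iic 1) (0 - τ)
      = nsol S τ + K 0 := by
  have h1 := B.Q_tau hτ (η := 0) (by simp)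
  have h2 := (hasDerivWithinAt_const τ (Ici (0:ℝ)) (0:ℝ)).congr_of_mem
    (f₁ := fun t => Qsol q S ψ χ t 0) (fun x hx => B.Q_zero hx) hτ
  have := (uniqueDiffOn_Ici 0 τ hτ).eq_deriv _ h1 h2
  rw [B.Q_zero hτ] at this
  linarith

theorem flux_one (B : QBase K ΦF L Qinit q S ψ χ) {τ : ℝ} (hτ : 0 ≤ τ) :
    flowE K S ψ τ (Zlab q S χ (1 - τ)) * derivWithin (Zlab q S χ) (Iic 1) (1 - τ)
      = nsol S τ + K ΦF := by
  have h1 := B.Q_tau hτ (η := 1) (by simp)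
  have h2 := (hasDerivWithinAt_const τ (Ici (0:ℝ)) ΦF).congr_of_mem
    (f₁ := fun t => Qsol q S ψ χ t 1) (fun x hx => B.Q_one hx) hτ
  have := (uniqueDiffOn_Ici 0 τ hτ).eq_deriv _ h1 h2
  rw [B.Q_one hτ] at this
  linarith

theorem Q_mono (B : QBase K ΦF L Qinit q S ψ χ) {τ : ℝ} (hτ : 0 ≤ τ) (hK0 : 0 < K 0)
    (hn : ∀ t ∈ Icc 0 τ, 0 < nsol S t) : MonotoneOn (Qsol q S ψ χ τ) (Icc 0 1) := by
  have hZ1 : MonotoneOn (Zlab q S χ) (Icc 0 1) := fun x hx y hy hxy => by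
    rw [B.Z_pos hx, B.Z_pos hy]; exact B.mono hx hy hxy
  have hZ2 : MonotoneOn (Zlab q S χ) (Icc (-τ) 0) := by
    refine monotoneOn_of_deriv_nonneg (convex_Icc _ _)
      (Zlab_cont B.flow B.hS B.hq B.hK).continuousOn ?_ ?_
    · rw [interior_Icc]
      intro x hx
      exact ((B.Z_hasDeriv (by linarith [hx.2])).hasDerivAt
        (Iic_mem_nhds (by linarith [hx.2]))).differentiableAt.differentiableWithinAt
    · rw [interior_Icc]
      intro x hx
      rw [((B.Z_hasDeriv (a := x) (by linarith [hx.2])).hasDerivAt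
        (Iic_mem_nhds (by linarith [hx.2]))).deriv]
      have h1 := B.flux_zero (τ := -x) (by linarith [hx.2])
      have h2 := hn (-x) ⟨by linarith [hx.2], by linarith [hx.1]⟩
      rw [zero_sub, neg_neg] at h1
      have h3 := QFlow.E_pos (K := K) (S := S) (ψ := ψ) (-x) (Zlab q S χ x)
      by_contra hneg
      push Not at hneg
      have := mul_neg_of_pos_of_neg h3 hneg
      linarith
  have hZ : MonotoneOn (Zlab q S χ) (Icc (-τ) 1) := by
    have := hZ2.union_right hZ1 (c := 0) ⟨⟨by linarith, le_rfl⟩, fun x hx => hx.2⟩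
      ⟨⟨le_rfl, zero_le_one⟩, fun x hx => hx.1⟩
    rwa [Icc_union_Icc_eq_Icc (by linarith) zero_le_one] at this
  intro x hx y hy hxy
  have := (B.flow.strictMono B.hS B.hK τ).monotone
    (hZ (a := x - τ) (b := y - τ) ⟨by linarith [hx.1], by linarith [hx.2]⟩
      ⟨by linarith [hy.1], by linarith [hy.2]⟩ (by linarith))
  simp only [Qsol]; linarith

end QBase

theorem Ico0_mono {T : ℝ≥0∞} {τ t : ℝ} (hτ : τ ∈ Ico0 T) (h0 : 0 ≤ t) (ht : t ≤ τ) : t ∈ Ico0 T :=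
  ⟨h0, (ENNReal.ofReal_le_ofReal ht).trans_lt hτ.2⟩

theorem Ico0_gt {T : ℝ≥0∞} {τ : ℝ} (hτ : τ ∈ Ico0 T) : ∃ t ∈ Ico0 T, τ < t := by
  obtain ⟨c, h1, h2⟩ := exists_between hτ.2
  have hc : c ≠ ⊤ := (h2.trans_le le_top).ne
  refine ⟨c.toReal, ⟨ENNReal.toReal_nonneg, by rwa [ENNReal.ofReal_toReal hc]⟩, ?_⟩
  exact (ENNReal.ofReal_lt_iff_lt_toReal hτ.1 hc).1 h1

section uniq
variable {K : ℝ → ℝ} {ΦF L : ℝ} {T : ℝ≥0∞} {Qinit q : ℝ → ℝ} {Q : ℝ → ℝ → ℝ} {N : ℝ → ℝ}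

theorem sub_dom {τ1 : ℝ} (hτ1 : τ1 ∈ Ico0 T) :
    Icc 0 τ1 ×ˢ Icc (0:ℝ) 1 ⊆ Ico0 T ×ˢ Icc (0:ℝ) 1 :=
  prod_mono (fun _ ht => Ico0_mono hτ1 ht.1 ht.2) subset_rfl

theorem pde_closed (hK : KReg K L) (h : IsQSol K ΦF T Qinit Q N) {τ1 : ℝ} (hτ1 : τ1 ∈ Ico0 T)
    (hpos : 0 < τ1) :
    ∃ F' : ℝ × ℝ → ℝ × ℝ →L[ℝ] ℝ,
      (∀ p ∈ Icc 0 τ1 ×ˢ Icc (0:ℝ) 1,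
        HasFDerivWithinAt (Function.uncurry Q) (F' p) (Icc 0 τ1 ×ˢ Icc (0:ℝ) 1) p) ∧
      (∀ τ ∈ Ico 0 τ1, ∀ η ∈ Icc (0:ℝ) 1, F' (τ, η) (1, 1) = 1 / N τ + K (Q τ η)) ∧
      (∀ τ ∈ Ico 0 τ1, F' (τ, 1) (0, 1) = pdEta Q τ 1) := by
  have hC := h.reg.mono (sub_dom hτ1)
  have hu : UniqueDiffOn ℝ (Icc 0 τ1 ×ˢ Icc (0:ℝ) 1) :=
    (uniqueDiffOn_Icc hpos).prod (uniqueDiffOn_Icc one_pos)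
  set F' := fderivWithin ℝ (Function.uncurry Q) (Icc 0 τ1 ×ˢ Icc (0:ℝ) 1)
  have hd : ∀ p ∈ Icc 0 τ1 ×ˢ Icc (0:ℝ) 1,
        HasFDerivWithinAt (Function.uncurry Q) (F' p) (Icc 0 τ1 ×ˢ Icc (0:ℝ) 1) p :=
    fun p hp => ((hC.differentiableOn one_ne_zero) p hp).hasFDerivWithinAt
  have hF'c : ContinuousOn F' (Icc 0 τ1 ×ˢ Icc (0:ℝ) 1) :=
    hC.continuousOn_fderivWithin hu le_rfl
  have ht : ∀ τ ∈ Ico 0 τ1, ∀ η ∈ Icc (0:ℝ) 1, pdTau Q τ η = F' (τ, η) (1, 0) := by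
    intro τ hτ η hη
    have h1 := (hd (τ, η) ⟨⟨hτ.1, hτ.2.le⟩, hη⟩).comp_hasDerivWithinAt (f := fun t => (t, η))
      (s := Icc 0 τ1) τ ((hasDerivWithinAt_id τ (Icc 0 τ1)).prodMk
        (hasDerivWithinAt_const τ (Icc 0 τ1) η)) (fun t ht => ⟨ht, hη⟩)
    have h2 : HasDerivWithinAt (fun t => Q t η) (F' (τ, η) (1, 0)) (Ici 0) τ := by
      refine HasDerivWithinAt.mono_of_mem_nhdsWithin h1 ?_
      filter_upwards [self_mem_nhdsWithin, mem_nhdsWithin_of_mem_nhds (Iio_mem_nhds hτ.2)]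
        with y hy hy'
      exact ⟨hy, le_of_lt hy'⟩
    exact h2.derivWithin (uniqueDiffOn_Ici 0 τ hτ.1)
  have he : ∀ τ ∈ Ico 0 τ1, ∀ η ∈ Icc (0:ℝ) 1, pdEta Q τ η = F' (τ, η) (0, 1) := by
    intro τ hτ η hη
    have h1 := (hd (τ, η) ⟨⟨hτ.1, hτ.2.le⟩, hη⟩).comp_hasDerivWithinAt (f := fun x => (τ, x))
      (s := Icc 0 1) η ((hasDerivWithinAt_const η (Icc 0 1) τ).prodMk
        (hasDerivWithinAt_id η (Icc 0 1))) (fun t ht => ⟨⟨hτ.1, hτ.2.le⟩, ht⟩)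
    exact HasDerivWithinAt.derivWithin (f := fun x => Q τ x) h1 (uniqueDiffOn_Icc one_pos η hη)
  refine ⟨F', hd, ?_, fun τ hτ => (he τ hτ 1 (by simp)).symm⟩
  intro τ hτ
  have hmaps : MapsTo (fun η : ℝ => (τ, η)) (Icc (0:ℝ) 1) (Icc 0 τ1 ×ˢ Icc (0:ℝ) 1) :=
    fun x hx => ⟨⟨hτ.1, hτ.2.le⟩, hx⟩
  have hpc : ContinuousOn (fun η : ℝ => (τ, η)) (Icc (0:ℝ) 1) := by fun_prop
  have key : EqOn (fun η => F' (τ, η) (1, 1)) (fun η => 1 / N τ + K (Q τ η)) (Icc 0 1) := by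
    refine EqOn.of_subset_closure (s := Ioo 0 1) ?_ ?_ ?_ Ioo_subset_Icc_self ?_
    · intro η hη
      have := h.pde τ (Ico0_mono hτ1 hτ.1 hτ.2.le) η hη
      rw [ht τ hτ η (Ioo_subset_Icc_self hη), he τ hτ η (Ioo_subset_Icc_self hη), ← map_add] at this
      simpa using this
    · exact (hF'c.comp hpc hmaps).clm_apply continuousOn_const
    · exact continuousOn_const.add (hK.cont.comp_continuousOn (hC.continuousOn.comp hpc hmaps))
    · rw [closure_Ioo zero_ne_one]
  exact key

theorem Q_at_one (hK : KReg K L) (h : IsQSol K ΦF T Qinit Q N) {τ1 : ℝ} (hτ1 : τ1 ∈ Ico0 T)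
    (hpos : 0 < τ1) : ∀ τ ∈ Icc 0 τ1, Q τ 1 = ΦF := by
  obtain ⟨F', hd, hp, hE⟩ := pde_closed hK h hτ1 hpos
  have hderiv : ∀ τ ∈ Icc 0 τ1, HasDerivWithinAt (fun t => Q t 1) (F' (τ, 1) (1, 0)) (Icc 0 τ1) τ :=
    fun τ hτ => (hd (τ, 1) ⟨hτ, by simp⟩).comp_hasDerivWithinAt (f := fun t => (t, (1:ℝ)))
      (s := Icc 0 τ1) τ ((hasDerivWithinAt_id τ (Icc 0 τ1)).prodMk
        (hasDerivWithinAt_const τ (Icc 0 τ1) 1)) (fun t ht => ⟨ht, by simp⟩)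
  have := ODE_solution_unique_of_mem_Icc_right (v := fun _ x => K x - K ΦF) (s := fun _ => univ)
    (K := L.toNNReal) (f := fun t => Q t 1) (g := fun _ => ΦF) (a := 0) (b := τ1)
    (fun t _ => (LipschitzWith.of_dist_le_mul fun a b => by
      rw [Real.dist_eq, Real.dist_eq, Real.coe_toNNReal _ (by linarith [hK.one_le])]
      simpa using hK.lip a b).lipschitzOnWith)
    (fun t ht => (hderiv t ht).continuousWithinAt)
    (fun t ht => by
      refine ((hderiv t ⟨ht.1, ht.2.le⟩).mono_of_mem_nhdsWithin ?_).congr_deriv ?_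
      · exact mem_of_superset (Icc_mem_nhdsGE ht.2) (Icc_subset_Icc_left ht.1)
      · have h1 := hp t ht 1 (by simp)
        have h2 := hE t ht
        have h3 := h.Ndef t (Ico0_mono hτ1 ht.1 ht.2.le)
        have h4 : F' (t, 1) (1, 1) = F' (t, 1) (1, 0) + F' (t, 1) (0, 1) := by
          rw [← map_add]; simp
        linarith)
    (fun _ _ => mem_univ _) continuousOn_const
    (fun t _ => by simpa using hasDerivWithinAt_const t (Ici t) ΦF)
    (fun _ _ => mem_univ _) (by
      show Q 0 1 = ΦF
      rw [h.init 1 (by simp), h.init1])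
  exact this

theorem characteristic (hK : KReg K L) (h : IsQSol K ΦF T Qinit Q N) {τ1 : ℝ} (hτ1 : τ1 ∈ Ico0 T)
    (hpos : 0 < τ1) (hqeq : ∀ x ∈ Icc (0:ℝ) 1, q x = Qinit x)
    {S : ℝ → ℝ} {ψ χ : ℝ → ℝ → ℝ} (hS0 : S 0 = 0) (hflow : QFlow K S ψ χ)
    (hSd : ∀ t ∈ Icc 0 τ1, HasDerivWithinAt S (1 / N t) (Icc 0 τ1) t) :
    ∀ τ ∈ Icc 0 τ1, ∀ η ∈ Icc (0:ℝ) 1, Q τ η = S τ + ψ τ (Zlab q S χ (η - τ)) := by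
  obtain ⟨F', hd, hp, -⟩ := pde_closed hK h hτ1 hpos
  intro τ hτ η hη
  set c := η - τ with hc
  set t0 := max (-c) 0 with ht0
  have ht00 : 0 ≤ t0 := le_max_right _ _
  have ht0c : 0 ≤ t0 + c := by have := le_max_left (-c) 0; linarith
  have ht0τ : t0 ≤ τ := max_le (by linarith [hη.1]) hτ.1
  have hf0 : Q t0 (t0 + c) = q (max c 0) := by
    rcases le_total 0 c with h0 | h0
    · have e : t0 = 0 := max_eq_right (by linarith)
      have hc1 : c ∈ Icc (0:ℝ) 1 := ⟨h0, by linarith [hη.2, hτ.1]⟩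
      rw [e, max_eq_left h0, zero_add, h.init c hc1, hqeq c hc1]
    · have e : t0 = -c := max_eq_left (by linarith)
      rw [e, max_eq_right h0, neg_add_cancel, hqeq 0 (by simp), h.init0]
      exact h.bc _ (Ico0_mono hτ1 (by linarith) (by linarith [hτ.2]))
  have hmaps : MapsTo (fun s => (s, s + c)) (Icc t0 τ) (Icc 0 τ1 ×ˢ Icc (0:ℝ) 1) := fun s hs =>
    ⟨⟨ht00.trans hs.1, hs.2.trans hτ.2⟩, by linarith [hs.1], by linarith [hs.2, hη.2]⟩
  have hderiv : ∀ s ∈ Icc t0 τ, HasDerivWithinAt (fun s => Q s (s + c)) (F' (s, s + c) (1, 1))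
      (Icc t0 τ) s := fun s hs =>
    (hd (s, s + c) (hmaps hs)).comp_hasDerivWithinAt (f := fun s => (s, s + c))
      (s := Icc t0 τ) s ((hasDerivWithinAt_id s (Icc t0 τ)).prodMk
        ((hasDerivWithinAt_id s (Icc t0 τ)).add_const c)) hmaps
  have hsub : Icc t0 τ ⊆ Icc 0 τ1 := Icc_subset_Icc ht00 hτ.2
  have hyd : ∀ s ∈ Icc t0 τ, HasDerivWithinAt (fun s => S s + ψ s (Zlab q S χ c))
      (1 / N s + K (S s + ψ s (Zlab q S χ c))) (Icc t0 τ) s := fun s hs =>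
    ((hSd s (hsub hs)).mono hsub).add (hflow.sol _ s).hasDerivWithinAt
  have := ODE_solution_unique_of_mem_Icc_right (v := fun t x => 1 / N t + K x) (s := fun _ => univ)
    (K := L.toNNReal) (f := fun s => Q s (s + c)) (g := fun s => S s + ψ s (Zlab q S χ c))
    (a := t0) (b := τ)
    (fun t _ => (LipschitzWith.of_dist_le_mul fun a b => by
      rw [Real.dist_eq, Real.dist_eq, Real.coe_toNNReal _ (by linarith [hK.one_le])]
      simpa using hK.lip a b).lipschitzOnWith)
    (fun t ht => (hderiv t ht).continuousWithinAt)
    (fun t ht => by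
      refine ((hderiv t ⟨ht.1, ht.2.le⟩).mono_of_mem_nhdsWithin ?_).congr_deriv ?_
      · exact mem_of_superset (Icc_mem_nhdsGE ht.2) (Icc_subset_Icc_left ht.1)
      · have hm := hmaps ⟨ht.1, ht.2.le⟩
        exact hp t ⟨ht00.trans ht.1, ht.2.trans_le hτ.2⟩ _ hm.2)
    (fun _ _ => mem_univ _) (fun t ht => (hyd t ht).continuousWithinAt)
    (fun t ht => (hyd t ⟨ht.1, ht.2.le⟩).mono_of_mem_nhdsWithin
      (mem_of_superset (Icc_mem_nhdsGE ht.2) (Icc_subset_Icc_left ht.1)))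
    (fun _ _ => mem_univ _) (by
      show Q t0 (t0 + c) = S t0 + ψ t0 (Zlab q S χ c)
      rw [hf0, Zlab, ← ht0, hflow.inv, hS0]; ring)
  have h1 := this ⟨ht0τ, le_rfl⟩
  have e : τ + c = η := by rw [hc]; ring
  simp only [e] at h1
  exact h1

theorem uniq_S {S : ℝ → ℝ} {ψ χ : ℝ → ℝ → ℝ} (B : QBase K ΦF L Qinit q S ψ χ)
    (h : IsQSol K ΦF T Qinit Q N) {τ1 : ℝ} (hτ1 : τ1 ∈ Ico0 T) (hpos : 0 < τ1) :
    ∀ t ∈ Icc 0 τ1, HasDerivWithinAt S (1 / N t) (Icc 0 τ1) t := by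
  have hK := B.hK
  have hsub : Icc 0 τ1 ⊆ Ico0 T := fun t ht => Ico0_mono hτ1 ht.1 ht.2
  set m : ℝ → ℝ := fun t => 1 / N (max 0 (min t τ1)) with hm
  have hcl : Continuous fun t : ℝ => max 0 (min t τ1) := by fun_prop
  have hclm : ∀ t, max 0 (min t τ1) ∈ Icc 0 τ1 := fun t =>
    ⟨le_max_left _ _, max_le hpos.le (min_le_right _ _)⟩
  have hcle : ∀ t ∈ Icc 0 τ1, max 0 (min t τ1) = t := fun t ht => by
    rw [min_eq_left ht.2, max_eq_right ht.1]
  have hmc : Continuous m := by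
    have : ContinuousOn (fun t => 1 / N t) (Icc 0 τ1) :=
      continuousOn_const.div (h.Ncont.mono hsub) fun t ht => (h.Npos t (hsub ht)).ne'
    exact this.comp_continuous hcl hclm
  set I : ℝ → ℝ := fun t => ∫ r in (0:ℝ)..t, m r with hI
  have hId : ∀ t, HasDerivAt I (m t) t := fun t => by
    exact intervalIntegral.integral_hasDerivAt_right (hmc.intervalIntegrable _ _)
      (hmc.stronglyMeasurableAtFilter _ _) hmc.continuousAt
  have hIc : Continuous I := continuous_iff_continuousAt.2 fun t => (hId t).continuousAt
  set S₂ : ℝ → ℝ := fun t => I (max 0 (min t τ1)) with hS₂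
  have hS₂c : Continuous S₂ := hIc.comp hcl
  obtain ⟨C, hC⟩ := (isCompact_Icc (a := (0:ℝ)) (b := τ1)).exists_bound_of_continuousOn
    hIc.continuousOn
  have hC0 : 0 ≤ C := (norm_nonneg _).trans (hC 0 ⟨le_rfl, hpos.le⟩)
  have hW : WGood (fun t => cosh (9 * L * t)) S₂ := ⟨hS₂c, C, fun t =>
    (hC _ (hclm t)).trans (le_mul_of_one_le_right hC0 (one_le_cosh _))⟩
  obtain ⟨⟨ψ₂, χ₂⟩, hflow⟩ := exists_flow K S₂ L (9 * L) hK.one_le (by linarith [hK.one_le])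
    hK.cont hK.lip hW
  simp only at hflow
  have hS₂0 : S₂ 0 = 0 := by
    simp only [hS₂]; rw [hcle 0 ⟨le_rfl, hpos.le⟩]; simp [hI]
  have hS₂d : ∀ t ∈ Icc 0 τ1, HasDerivWithinAt S₂ (1 / N t) (Icc 0 τ1) t := by
    intro t ht
    have h1 : HasDerivWithinAt I (1 / N t) (Icc 0 τ1) t := by
      have := (hId t).hasDerivWithinAt (s := Icc 0 τ1)
      simp only [hm] at this
      rwa [hcle t ht] at this
    exact h1.congr_of_mem (fun x hx => by simp only [hS₂]; rw [hcle x hx]) ht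
  have hfix : ∀ τ ∈ Icc 0 τ1, S₂ τ = ΦF - ψ₂ τ (Zlab q S₂ χ₂ (1 - τ)) := by
    intro τ hτ
    have h1 := characteristic hK h hτ1 hpos B.qeq hS₂0 hflow hS₂d τ hτ 1 (by simp)
    rw [Q_at_one hK h hτ1 hpos τ hτ] at h1
    linarith
  have heq : ∀ t ∈ Icc 0 τ1, S t = S₂ t := by
    have hc : Continuous fun t => |S t - S₂ t| * exp (-(9 * L * t)) := by
      have := B.hS
      fun_prop
    obtain ⟨t, ht, hmax⟩ := (isCompact_Icc (a := (0:ℝ)) (b := τ1)).exists_isMaxOn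
      ⟨0, le_rfl, hpos.le⟩ hc.continuousOn
    set M := |S t - S₂ t| * exp (-(9 * L * t)) with hMdef
    have hexp : ∀ s, exp (-(9 * L * s)) * exp (9 * L * s) = 1 := fun s => by
      rw [← exp_add]; simp
    have hM : ∀ s ∈ Icc 0 τ1, |S s - S₂ s| ≤ M * exp (9 * L * s) := by
      intro s hs
      have h1 : |S s - S₂ s| * exp (-(9 * L * s)) ≤ M := hmax hs
      have h2 := mul_le_mul_of_nonneg_right h1 (exp_pos (9 * L * s)).le
      rwa [mul_assoc, hexp, mul_one] at h2
    have h1 := gamma_est (q := q) hK B.flow hflow ht.1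
      (fun s hs => hM s ⟨hs.1, hs.2.trans ht.2⟩)
    have h2 : |S t - S₂ t| ≤ M / 4 * exp (9 * L * t) := by
      rw [B.fix t ht.1, hfix t ht, ← abs_neg]
      convert h1 using 2
      ring
    have h3 := mul_le_mul_of_nonneg_right h2 (exp_pos (-(9 * L * t))).le
    rw [← hMdef, mul_assoc (M / 4), mul_comm (exp (9 * L * t)), hexp, mul_one] at h3
    intro s hs
    have h4 := hM s hs
    have h5 : M * exp (9 * L * s) ≤ 0 := mul_nonpos_of_nonpos_of_nonneg (by linarith) (exp_pos _).le
    have h6 := abs_nonpos_iff.1 (h4.trans h5)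
    linarith
  exact fun t ht => (hS₂d t ht).congr_of_mem heq ht

theorem uniq_Q {S : ℝ → ℝ} {ψ χ : ℝ → ℝ → ℝ} (B : QBase K ΦF L Qinit q S ψ χ)
    (h : IsQSol K ΦF T Qinit Q N) {τ : ℝ} (hτ : τ ∈ Ico0 T) :
    (∀ η ∈ Icc (0:ℝ) 1, Q τ η = Qsol q S ψ χ τ η) ∧ nsol S τ = 1 / N τ := by
  obtain ⟨τ1, hτ1, hlt⟩ := Ico0_gt hτ
  have hpos : 0 < τ1 := hτ.1.trans_lt hlt
  have hd := uniq_S B h hτ1 hpos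
  refine ⟨characteristic B.hK h hτ1 hpos B.qeq B.S0 B.flow hd τ ⟨hτ.1, hlt.le⟩, ?_⟩
  refine HasDerivWithinAt.derivWithin ((hd τ ⟨hτ.1, hlt.le⟩).mono_of_mem_nhdsWithin ?_)
    (uniqueDiffOn_Ici 0 τ hτ.1)
  filter_upwards [self_mem_nhdsWithin, mem_nhdsWithin_of_mem_nhds (Iio_mem_nhds hlt)] with y hy hy'
  exact ⟨hy, le_of_lt hy'⟩

end uniq

theorem exists_base {K : ℝ → ℝ} {ΦF : ℝ} (hK : KAssump K ΦF) {Qinit : ℝ → ℝ} (hA : A2 K ΦF Qinit) :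
    ∃ L q S ψ χ, QBase K ΦF L Qinit q S ψ χ := by
  obtain ⟨C, hC⟩ := hK.bdd1
  have hdiff : Differentiable ℝ K := hK.smooth.differentiable two_ne_zero
  have hreg : KReg K (max C 1) :=
    { one_le := le_max_right _ _
      diff := fun x => (hdiff x).hasDerivAt
      dcont := hK.smooth.continuous_deriv (by norm_num)
      lip := fun x y => by
        have := convex_univ.norm_image_sub_le_of_norm_deriv_le (f := K) (C := max C 1)
          (fun x _ => hdiff x) (fun x _ => (hC x).trans (le_max_left _ _)) (mem_univ y) (mem_univ x)
        simpa using this }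
  set q : ℝ → ℝ := fun x => Qinit (max 0 (min x 1)) with hq
  have hcl : Continuous fun t : ℝ => max 0 (min t 1) := by fun_prop
  have hclm : ∀ t : ℝ, max 0 (min t 1) ∈ Icc (0:ℝ) 1 := fun t =>
    ⟨le_max_left _ _, max_le zero_le_one (min_le_right _ _)⟩
  have hcle : ∀ t ∈ Icc (0:ℝ) 1, max 0 (min t 1) = t := fun t ht => by
    rw [min_eq_left ht.2, max_eq_right ht.1]
  have hqc : Continuous q := hA.reg.continuousOn.comp_continuous hcl hclm
  have hqeq : ∀ x ∈ Icc (0:ℝ) 1, q x = Qinit x := fun x hx => by simp only [hq]; rw [hcle x hx]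
  obtain ⟨Cq, hCq⟩ := (isCompact_Icc (a := (0:ℝ)) (b := 1)).exists_bound_of_continuousOn
    hA.reg.continuousOn
  obtain ⟨S, ψ, χ, hS, hf, hS0, hfix⟩ := exists_S (ΦF := ΦF) hreg hqc
    (fun x => hCq _ (hclm x)) (by rw [hqeq 1 (by simp), hA.init1])
  exact ⟨_, q, S, ψ, χ, hreg, hS.1, hS0, hf, hqc, hqeq, hfix, hA.reg, hA.mono, hA.init0, hA.init1,
    hA.deriv1, hA.compat⟩

theorem base_sol {K : ℝ → ℝ} {ΦF L : ℝ} {Qinit q S : ℝ → ℝ} {ψ χ : ℝ → ℝ → ℝ}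
    (B : QBase K ΦF L Qinit q S ψ χ) (hK0 : 0 < K 0) {T : ℝ≥0∞}
    (hT : ∀ τ ∈ Ico0 T, 0 < nsol S τ) :
    IsQSol K ΦF T Qinit (Qsol q S ψ χ) (fun τ => 1 / nsol S τ) := by
  have hp : ∀ τ, 0 ≤ τ → ∀ η ∈ Icc (0:ℝ) 1, pdEta (Qsol q S ψ χ) τ η =
      flowE K S ψ τ (Zlab q S χ (η - τ)) * derivWithin (Zlab q S χ) (Iic 1) (η - τ) :=
    fun τ hτ η hη => (B.Q_eta hτ hη).derivWithin (uniqueDiffOn_Icc one_pos η hη)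
  have h1 : ∀ τ, 0 ≤ τ → pdEta (Qsol q S ψ χ) τ 1 = nsol S τ + K ΦF := fun τ hτ => by
    rw [hp τ hτ 1 (by simp), B.flux_one hτ]
  exact
  { initReg := B.reg
    initMono := B.mono
    init0 := B.init0
    init1 := B.init1
    initDeriv := B.deriv1
    reg := B.Q_C1.mono (prod_mono (fun _ h => h.1) subset_rfl)
    mono := fun τ hτ => B.Q_mono hτ.1 hK0 fun t ht => hT t (Ico0_mono hτ ht.1 ht.2)
    Ncont := continuousOn_const.div (B.n_cont.mono fun _ h => h.1) fun t ht => (hT t ht).ne'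
    Npos := fun τ hτ => one_div_pos.2 (hT τ hτ)
    pde := fun τ hτ η hη => by
      rw [hp τ hτ.1 η (Ioo_subset_Icc_self hη), pdTau,
        (B.Q_tau hτ.1 (Ioo_subset_Icc_self hη)).derivWithin (uniqueDiffOn_Ici 0 τ hτ.1), one_div_one_div]
      ring
    bc := fun τ hτ => B.Q_zero hτ.1
    Ndef := fun τ hτ => by rw [h1 τ hτ.1, one_div_one_div]; ring
    init := fun η hη => B.Q_init hη
    constraint := fun τ hτ => by rw [h1 τ hτ.1]; linarith [hT τ hτ] }

theorem pos_ext {n : ℝ → ℝ} (hn : ContinuousOn n (Ici 0)) {b : ℝ} (hb : 0 ≤ b) (hnb : 0 < n b)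
    (hlt : ∀ t, 0 ≤ t → t < b → 0 < n t) :
    ∃ c, b < c ∧ ∀ τ ∈ Ico0 (ENNReal.ofReal c), 0 < n τ := by
  have h1 : ∀ᶠ x in 𝓝[≥] b, 0 < n x :=
    ((hn b hb).mono (Ici_subset_Ici.2 hb)).eventually_const_lt hnb
  obtain ⟨c, hc, hsub⟩ := (mem_nhdsGE_iff_exists_Ico_subset).1 h1
  refine ⟨c, hc, fun τ hτ => ?_⟩
  have h2 : τ < c := (ENNReal.ofReal_lt_ofReal_iff_of_nonneg hτ.1).1 hτ.2
  rcases lt_or_ge τ b with h | h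
  · exact hlt τ hτ.1 h
  · exact hsub ⟨h, h2⟩

/-- Theorem 3.1: well-posedness of the Q-system up to a maximal time, with blow-up of the
firing rate at the maximal time when it is finite. -/
theorem stmt2 (ΦF : ℝ) (hΦF : 0 < ΦF) (K : ℝ → ℝ) (hK : KAssump K ΦF)
    (Qinit : ℝ → ℝ) (hA2 : A2 K ΦF Qinit) :
    ∃ (τstar : ℝ≥0∞) (Q : ℝ → ℝ → ℝ) (N : ℝ → ℝ),
      0 < τstar ∧
      IsQSol K ΦF τstar Qinit Q N ∧
      (∀ (T : ℝ≥0∞) (Q' : ℝ → ℝ → ℝ) (N' : ℝ → ℝ),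
        IsQSol K ΦF T Qinit Q' N' →
          T ≤ τstar ∧
          (∀ τ ∈ Ico0 T, ∀ η ∈ Icc (0 : ℝ) 1, Q' τ η = Q τ η) ∧
          (∀ τ ∈ Ico0 T, N' τ = N τ)) ∧
      (τstar < ⊤ → Tendsto N (𝓝[<] τstar.toReal) atTop) := by
  obtain ⟨L, q, S, ψ, χ, B⟩ := exists_base hK hA2
  have hK0 : 0 < K 0 := hK.pos 0 ⟨le_rfl, hΦF.le⟩
  set G : Set ℝ≥0∞ := {T | ∀ τ ∈ Ico0 T, 0 < nsol S τ} with hG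
  have hmem : ∀ τ ∈ Ico0 (sSup G), 0 < nsol S τ := by
    intro τ hτ
    obtain ⟨T, hT, hlt⟩ := lt_sSup_iff.1 hτ.2
    exact hT τ ⟨hτ.1, hlt⟩
  refine ⟨sSup G, Qsol q S ψ χ, fun τ => 1 / nsol S τ, ?_, base_sol B hK0 hmem, ?_, ?_⟩
  · obtain ⟨c, hc, hc'⟩ := pos_ext B.n_cont le_rfl B.n_zero (fun t h1 h2 => by linarith)
    exact (ENNReal.ofReal_pos.2 hc).trans_le (le_sSup (show ENNReal.ofReal c ∈ G from hc'))
  · intro T Q' N' h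
    refine ⟨le_sSup fun τ hτ => ?_, fun τ hτ => (uniq_Q B h hτ).1, fun τ hτ => ?_⟩
    · rw [(uniq_Q B h hτ).2]; exact one_div_pos.2 (h.Npos τ hτ)
    · show N' τ = 1 / nsol S τ
      rw [(uniq_Q B h hτ).2, one_div_one_div]
  · intro hfin
    set b := (sSup G).toReal with hb
    have hbG : ENNReal.ofReal b = sSup G := ENNReal.ofReal_toReal hfin.ne
    have hb0 : 0 ≤ b := ENNReal.toReal_nonneg
    have hlt : ∀ t, 0 ≤ t → t < b → 0 < nsol S t := fun t h0 ht =>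
      hmem t ⟨h0, by rw [← hbG]; exact (ENNReal.ofReal_lt_ofReal_iff_of_nonneg h0).2 ht⟩
    have hbpos : 0 < b := by
      rcases hb0.eq_or_lt with h | h
      · exfalso
        obtain ⟨c, hc, hc'⟩ := pos_ext B.n_cont le_rfl B.n_zero (fun t h1 h2 => by linarith)
        have := le_sSup (show ENNReal.ofReal c ∈ G from hc')
        rw [← hbG, ← h] at this
        simp at this
        linarith
      · exact h
    have hcb : Tendsto (nsol S) (𝓝[<] b) (𝓝 (nsol S b)) :=
      ((B.n_cont b hb0).continuousAt (Ici_mem_nhds hbpos)).mono_left nhdsWithin_le_nhds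
    have hev : ∀ᶠ t in 𝓝[<] b, 0 < nsol S t := by
      filter_upwards [self_mem_nhdsWithin, mem_nhdsWithin_of_mem_nhds (Ioi_mem_nhds hbpos)]
        with t h1 h2
      exact hlt t (le_of_lt h2) h1
    have hnb : nsol S b = 0 := by
      refine le_antisymm ?_ (ge_of_tendsto hcb (hev.mono fun _ h => h.le))
      by_contra hcon
      push Not at hcon
      obtain ⟨c, hc, hc'⟩ := pos_ext B.n_cont hb0 hcon hlt
      have := le_sSup (show ENNReal.ofReal c ∈ G from hc')
      rw [← hbG, ENNReal.ofReal_le_ofReal_iff hb0] at this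
      linarith
    rw [hnb] at hcb
    simp only [one_div]
    exact tendsto_inv_nhdsGT_zero.comp (tendsto_nhdsWithin_iff.2 ⟨hcb, hev⟩)
end
end

section
/- Let (Q_init,ε)_{ε≥0} be a family of initial data, each satisfying Assumption (A2), such that Q_init,ε → Q_init,0 in C¹([0,1]) as ε → 0⁺. Let (Q_ε, N_ε) denote the classical solution of the Q-system with initial datum Q_init,ε, with maximal existence time τ*_ε. Then liminf_{ε→0⁺} τ*_ε ≥ τ*_0, and for every 0 < T < τ*_0: N_ε → N_0 in C([0,T]) as ε → 0⁺, and Q_ε(T,·) → Q_0(T,·) in C¹([0,1]) as ε → 0⁺. -/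
open Real Set MeasureTheory Filter Topology
open scoped ENNReal

noncomputable section

namespace QS

lemma gron {f f' D : ℝ → ℝ} {a b L : ℝ} (hab : a ≤ b) (hL : 0 ≤ L)
    (hf : ContinuousOn f (Icc a b)) (hd : ∀ x ∈ Ioo a b, HasDerivAt f (f' x) x)
    (hD : Continuous D) (hD0 : ∀ x ∈ Ioo a b, 0 ≤ D x)
    (hb : ∀ x ∈ Ioo a b, |f' x| ≤ L * |f x| + D x) :
    |f b| ≤ exp (L * (b - a)) * (|f a| + ∫ x in a..b, D x) := by
  have key : ∀ ε > 0, |f b| ≤ exp (L * (b - a)) * (|f a| + ε + ∫ x in a..b, D x) := by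
    intro ε hε
    set g : ℝ → ℝ := fun x => √(f x ^ 2 + ε ^ 2) with hg
    have gpos : ∀ x, 0 < g x := fun x => Real.sqrt_pos.2 (by positivity)
    have gge : ∀ x, |f x| ≤ g x := fun x => by
      rw [hg]; apply Real.abs_le_sqrt; nlinarith [sq_nonneg ε]
    have hdu : ∀ x ∈ Ioo a b, HasDerivAt (fun x => exp (-L * (x - a)) * g x - ∫ t in a..x, D t)
        ((exp (-L * (x - a)) * (-L * 1)) * g x + exp (-L * (x - a)) *
          ((2 * f x * f' x) / (2 * √(f x ^ 2 + ε ^ 2))) - D x) x := by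
      intro x hx
      have h1 : HasDerivAt (fun x => exp (-L * (x - a))) (exp (-L * (x - a)) * (-L * 1)) x :=
        (((hasDerivAt_id x).sub_const a).const_mul (-L)).exp
      have h2 : HasDerivAt (fun x => f x ^ 2 + ε ^ 2) (2 * f x * f' x) x := by
        have := ((hd x hx).pow 2).add_const (ε ^ 2)
        simpa using this
      have h3 := h2.sqrt (by positivity)
      have h4 : HasDerivAt (fun x => ∫ t in a..x, D t) (D x) x :=
        intervalIntegral.integral_hasDerivAt_right (hD.intervalIntegrable _ _)
          (hD.stronglyMeasurableAtFilter _ _) hD.continuousAt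
      exact (h1.mul h3).sub h4
    have anti : AntitoneOn (fun x => exp (-L * (x - a)) * g x - ∫ t in a..x, D t) (Icc a b) := by
      apply antitoneOn_of_deriv_nonpos (convex_Icc a b)
      · apply ContinuousOn.sub
        · apply ContinuousOn.mul (by fun_prop)
          exact ((hf.pow 2).add continuousOn_const).sqrt
        · exact (intervalIntegral.continuous_primitive
            (fun a b => hD.intervalIntegrable a b) a).continuousOn
      · rw [interior_Icc]
        intro x hx
        exact (hdu x hx).differentiableAt.differentiableWithinAt
      · rw [interior_Icc]
        intro x hx
        rw [(hdu x hx).deriv]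
        have e1 : exp (-L * (x - a)) ≤ 1 := by
          rw [Real.exp_le_one_iff]; nlinarith [hx.1]
        have e0 := Real.exp_pos (-L * (x - a))
        have : (2 * f x * f' x) / (2 * √(f x ^ 2 + ε ^ 2)) ≤ L * g x + D x := by
          have hgx : √(f x ^ 2 + ε ^ 2) = g x := rfl
          rw [hgx, div_le_iff₀ (by have := gpos x; positivity)]
          have h1 : f x * f' x ≤ |f x| * |f' x| := by rw [← abs_mul]; exact le_abs_self _
          have h2 : |f x| * |f' x| ≤ g x * (L * g x + D x) := by
            apply mul_le_mul (gge x) _ (abs_nonneg _) (gpos x).le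
            have := hb x hx
            nlinarith [gge x]
          nlinarith
        have hDx := hD0 x hx
        have := mul_le_mul_of_nonneg_left this e0.le
        nlinarith [mul_nonneg (sub_nonneg.2 e1) hDx]
    have hub := anti (left_mem_Icc.2 hab) (right_mem_Icc.2 hab) hab
    simp only [sub_self, mul_zero, Real.exp_zero, one_mul, intervalIntegral.integral_same,
      sub_zero] at hub
    have hga : g a ≤ |f a| + ε := by
      rw [hg]
      apply Real.sqrt_le_iff.2 ⟨by positivity, _⟩
      rw [← sq_abs (f a)]; nlinarith [abs_nonneg (f a)]
    have hE : exp (L * (b - a)) * exp (-L * (b - a)) = 1 := by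
      rw [← Real.exp_add]; simp
    have : exp (-L * (b - a)) * g b ≤ |f a| + ε + ∫ x in a..b, D x := by linarith
    have := mul_le_mul_of_nonneg_left this (Real.exp_pos (L * (b - a))).le
    rw [← mul_assoc, hE, one_mul] at this
    exact (gge b).trans this
  apply le_of_forall_pos_le_add
  intro ε hε
  have hE := Real.exp_pos (L * (b - a))
  have := key (ε / exp (L * (b - a))) (by positivity)
  refine this.trans (le_of_eq ?_)
  field_simp
  ring

lemma weight_int (t0 t lam : ℝ) (hl : 0 < lam) :
    |∫ s in t0..t, exp (lam * |s - t0|)| ≤ exp (lam * |t - t0|) / lam := by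
  rcases le_total t0 t with h | h
  · have : ∫ s in t0..t, exp (lam * |s - t0|) = ∫ s in t0..t, exp (lam * (s - t0)) := by
      apply intervalIntegral.integral_congr
      intro s hs
      rw [uIcc_of_le h] at hs
      simp only
      rw [abs_of_nonneg (by linarith [hs.1])]
    rw [this]
    have : ∫ s in t0..t, exp (lam * (s - t0)) =
        exp (lam * (t - t0)) / lam - exp (lam * (t0 - t0)) / lam := by
      apply intervalIntegral.integral_eq_sub_of_hasDerivAt
        (f := fun s => exp (lam * (s - t0)) / lam)
      · intro x _
        have h5 : HasDerivAt (fun s => exp (lam * (s - t0)) / lam)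
            (exp (lam * (x - t0)) * (lam * 1) / lam) x :=
          ((((hasDerivAt_id x).sub_const t0).const_mul lam).exp).div_const lam
        have e5 : exp (lam * (x - t0)) * (lam * 1) / lam = exp (lam * (x - t0)) := by
          field_simp
        rwa [e5] at h5
      · exact Continuous.intervalIntegrable (by fun_prop) _ _
    rw [this, abs_of_nonneg (a := t - t0) (by linarith), sub_self, mul_zero, Real.exp_zero]
    have h1 : 1 ≤ exp (lam * (t - t0)) := Real.one_le_exp (by
      apply mul_nonneg hl.le; linarith)
    rw [abs_of_nonneg]
    · have : 0 < 1 / lam := by positivity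
      linarith
    · rw [← sub_div]; apply div_nonneg <;> linarith
  · rw [intervalIntegral.integral_symm, abs_neg]
    have : ∫ s in t..t0, exp (lam * |s - t0|) = ∫ s in t..t0, exp (-lam * (s - t0)) := by
      apply intervalIntegral.integral_congr
      intro s hs
      rw [uIcc_of_le h] at hs
      simp only
      rw [abs_of_nonpos (by linarith [hs.2])]
      ring_nf
    rw [this]
    have : ∫ s in t..t0, exp (-lam * (s - t0)) =
        exp (-lam * (t0 - t0)) / (-lam) - exp (-lam * (t - t0)) / (-lam) := by
      apply intervalIntegral.integral_eq_sub_of_hasDerivAt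
        (f := fun s => exp (-lam * (s - t0)) / (-lam))
      · intro x _
        have h5 : HasDerivAt (fun s => exp (-lam * (s - t0)) / (-lam))
            (exp (-lam * (x - t0)) * (-lam * 1) / (-lam)) x :=
          ((((hasDerivAt_id x).sub_const t0).const_mul (-lam)).exp).div_const (-lam)
        have e5 : exp (-lam * (x - t0)) * (-lam * 1) / (-lam) = exp (-lam * (x - t0)) := by
          field_simp
        rwa [e5] at h5
      · exact Continuous.intervalIntegrable (by fun_prop) _ _
    rw [this, abs_of_nonpos (a := t - t0) (by linarith), sub_self, mul_zero, Real.exp_zero]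
    have e : lam * -(t - t0) = -lam * (t - t0) := by ring
    rw [e]
    have h1 : 1 ≤ exp (-lam * (t - t0)) := Real.one_le_exp (by nlinarith)
    rw [div_neg, div_neg, abs_of_nonneg]
    · have : 0 < 1 / lam := by positivity
      linarith
    · have : 0 ≤ (exp (-lam * (t - t0)) - 1) / lam := div_nonneg (by linarith) hl.le
      rw [sub_div] at this; linarith

open BoundedContinuousFunction in
theorem global_ode {E : Type*} [NormedAddCommGroup E] [NormedSpace ℝ E] [CompleteSpace E]
    (v : ℝ → E → E) (L M : ℝ) (hL : 0 ≤ L)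
    (hlip : ∀ t x y, ‖v t x - v t y‖ ≤ L * ‖x - y‖) (hcont : ∀ x, Continuous fun t => v t x)
    (hM : ∀ t, ‖v t 0‖ ≤ M) (t0 : ℝ) (x0 : E) :
    ∃ f : ℝ → E, f t0 = x0 ∧ ∀ t, HasDerivAt f (v t (f t)) t := by
  have hM0 : 0 ≤ M := (norm_nonneg _).trans (hM 0)
  set lam : ℝ := 2 * L + 1 with hlam
  have hl : 0 < lam := by positivity
  set w : ℝ → ℝ := fun t => exp (lam * |t - t0|) with hw
  have wc : Continuous w := by fun_prop
  have w1 : ∀ t, 1 ≤ w t := fun t => Real.one_le_exp (by positivity)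
  have wpos : ∀ t, 0 < w t := fun t => Real.exp_pos _
  have vc : Continuous (fun p : ℝ × E => v p.1 p.2) := by
    apply continuous_prod_of_continuous_lipschitzWith' _ ⟨L, hL⟩
    swap
    · exact hcont
    · intro a
      apply LipschitzWith.of_dist_le_mul
      intro x y
      rw [dist_eq_norm, dist_eq_norm]; exact hlip a x y
  have vb : ∀ t x, ‖v t x‖ ≤ M + L * ‖x‖ := by
    intro t x
    have h1 := hlip t x 0
    have h2 := norm_le_norm_add_norm_sub' (v t x) (v t 0)
    rw [sub_zero] at h1
    linarith [hM t]
  have ib : ∀ (h : ℝ → E) (A : ℝ), 0 ≤ A → (∀ s, ‖h s‖ ≤ A * w s) → ∀ t,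
      ‖∫ s in t0..t, h s‖ ≤ A * (w t / lam) := by
    intro h A hA hh t
    have h1 : ‖∫ s in t0..t, h s‖ ≤ |∫ s in t0..t, A * w s| := by
      apply intervalIntegral.norm_integral_le_abs_of_norm_le
      · exact ae_of_all _ (fun s => hh s)
      · exact Continuous.intervalIntegrable (by fun_prop) _ _
    refine h1.trans ?_
    rw [intervalIntegral.integral_const_mul, abs_mul, abs_of_nonneg hA]
    exact mul_le_mul_of_nonneg_left (weight_int t0 t lam hl) hA
  have hc : ∀ u : ℝ →ᵇ E, Continuous (fun s => v s (w s • u s)) := by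
    intro u
    exact vc.comp (continuous_id.prodMk (wc.smul u.continuous))
  have hprim : ∀ u : ℝ →ᵇ E, ∀ t, HasDerivAt (fun t => x0 + ∫ s in t0..t, v s (w s • u s))
      (v t (w t • u t)) t := by
    intro u t
    exact (intervalIntegral.integral_hasDerivAt_right ((hc u).intervalIntegrable _ _)
          ((hc u).stronglyMeasurableAtFilter _ _) (hc u).continuousAt).const_add x0
  let Φ : (ℝ →ᵇ E) → (ℝ →ᵇ E) := fun u =>
    BoundedContinuousFunction.ofNormedAddCommGroup
      (fun t => (w t)⁻¹ • (x0 + ∫ s in t0..t, v s (w s • u s)))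
      (by
        apply Continuous.smul
        · exact wc.inv₀ (fun t => (wpos t).ne')
        · exact continuous_iff_continuousAt.2 (fun t => (hprim u t).continuousAt))
      (‖x0‖ + (M + L * ‖u‖) / lam)
      (by
        intro t
        rw [norm_smul, norm_inv, Real.norm_of_nonneg (wpos t).le, inv_mul_le_iff₀ (wpos t)]
        refine (norm_add_le _ _).trans ?_
        have := ib (fun s => v s (w s • u s)) (M + L * ‖u‖) (by positivity) (by
          intro s
          refine (vb _ _).trans ?_
          rw [norm_smul, Real.norm_of_nonneg (wpos s).le]
          have h1 := u.norm_coe_le_norm s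
          have h2 := mul_le_mul_of_nonneg_left h1 (mul_nonneg hL (wpos s).le)
          nlinarith [w1 s]) t
        have hx : ‖x0‖ ≤ w t * ‖x0‖ := by nlinarith [w1 t, norm_nonneg x0]
        have e : (M + L * ‖u‖) * (w t / lam) = w t * ((M + L * ‖u‖) / lam) := by ring
        rw [e] at this
        linarith)
  have Φap : ∀ u t, Φ u t = (w t)⁻¹ • (x0 + ∫ s in t0..t, v s (w s • u s)) := fun u t => rfl
  have hcontr : ContractingWith (1 / 2) Φ := by
    refine ⟨by norm_num, LipschitzWith.of_dist_le_mul fun u u' => ?_⟩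
    rw [BoundedContinuousFunction.dist_le (by positivity)]
    intro t
    rw [dist_eq_norm, Φap, Φap, ← smul_sub, norm_smul, norm_inv,
      Real.norm_of_nonneg (wpos t).le, inv_mul_le_iff₀ (wpos t), add_sub_add_left_eq_sub,
      ← intervalIntegral.integral_sub ((hc u).intervalIntegrable _ _)
        ((hc u').intervalIntegrable _ _)]
    refine (ib _ (L * dist u u') (by positivity) ?_ t).trans ?_
    · intro s
      refine (hlip _ _ _).trans ?_
      rw [← smul_sub, norm_smul, Real.norm_of_nonneg (wpos s).le, ← dist_eq_norm]
      have h1 := BoundedContinuousFunction.dist_coe_le_dist (f := u) (g := u') s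
      have := mul_le_mul_of_nonneg_left h1 (mul_nonneg hL (wpos s).le)
      linarith
    · have hll : L / lam ≤ 1 / 2 := by
        rw [div_le_iff₀ hl]; linarith
      have e : L * dist u u' * (w t / lam) = (L / lam) * (w t * dist u u') := by ring
      rw [e]
      have := mul_le_mul_of_nonneg_right hll
        (mul_nonneg (wpos t).le (dist_nonneg (x := u) (y := u')))
      refine this.trans (le_of_eq ?_)
      simp
      ring
  let u := hcontr.fixedPoint Φ
  have hu : Φ u = u := hcontr.fixedPoint_isFixedPt
  have hfu : ∀ t, w t • u t = x0 + ∫ s in t0..t, v s (w s • u s) := by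
    intro t
    conv_lhs => rw [← hu, Φap, smul_smul, mul_inv_cancel₀ (wpos t).ne', one_smul]
  refine ⟨fun t => x0 + ∫ s in t0..t, v s (w s • u s), by simp, fun t => ?_⟩
  have := hprim u t
  rwa [hfu t] at this

end QS

namespace QS

structure GK (K K' : ℝ → ℝ) (L : ℝ) : Prop where
  hL : 0 ≤ L
  der : ∀ x, HasDerivAt K (K' x) x
  b1 : ∀ x, |K' x| ≤ L
  lip : ∀ x y, |K' x - K' y| ≤ L * |x - y|

structure NB (n : ℝ → ℝ) : Prop where
  cont : Continuous n
  bdd : ∃ M, ∀ t, |n t| ≤ M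

def IsTraj (K n y : ℝ → ℝ) : Prop := ∀ t, HasDerivAt y (n t + K (y t)) t

section
variable {K K' : ℝ → ℝ} {L : ℝ}

lemma GK.contK (h : GK K K' L) : Continuous K :=
  continuous_iff_continuousAt.2 fun x => (h.der x).continuousAt

lemma GK.contK' (h : GK K K' L) : Continuous K' := by
  have : LipschitzWith ⟨L, h.hL⟩ K' := LipschitzWith.of_dist_le_mul fun x y => by
    rw [Real.dist_eq, Real.dist_eq]; exact h.lip x y
  exact this.continuous

lemma GK.lipK (h : GK K K' L) (x y : ℝ) : |K x - K y| ≤ L * |x - y| := by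
  have := Convex.norm_image_sub_le_of_norm_hasDerivWithin_le (f := K) (f' := K') (s := univ)
    (C := L) (x := y) (y := x)
    (fun z _ => (h.der z).hasDerivWithinAt) (fun z _ => h.b1 z) convex_univ trivial trivial
  simpa [Real.norm_eq_abs] using this

lemma GK.taylor (h : GK K K' L) (x y : ℝ) :
    |K x - K y - K' y * (x - y)| ≤ L * |x - y| ^ 2 := by
  have := Convex.norm_image_sub_le_of_norm_hasDerivWithin_le (f := fun z => K z - K' y * z)
    (f' := fun z => K' z - K' y * 1) (s := uIcc y x)
    (C := L * |x - y|) (x := y) (y := x)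
    (fun z _ => ((h.der z).sub ((hasDerivAt_id z).const_mul (K' y))).hasDerivWithinAt)
    (fun z hz => by
      rw [mul_one, Real.norm_eq_abs]
      refine (h.lip z y).trans (mul_le_mul_of_nonneg_left ?_ h.hL)
      exact abs_sub_left_of_mem_uIcc hz) (convex_uIcc y x) left_mem_uIcc right_mem_uIcc
  rw [Real.norm_eq_abs, Real.norm_eq_abs] at this
  calc _ = |K x - K' y * x - (K y - K' y * y)| := by congr 1; ring
    _ ≤ _ := this
    _ = _ := by ring

lemma gron2 {f f' : ℝ → ℝ} {a b L D : ℝ} (hL : 0 ≤ L) (hD : 0 ≤ D)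
    (hd : ∀ x, HasDerivAt f (f' x) x)
    (hb : ∀ x ∈ uIcc a b, |f' x| ≤ L * |f x| + D) :
    |f b| ≤ exp (L * |b - a|) * (|f a| + D * |b - a|) := by
  have hc : Continuous f := continuous_iff_continuousAt.2 fun x => (hd x).continuousAt
  rcases le_total a b with h | h
  · have := gron (f := f) (f' := f') (D := fun _ => D) h hL hc.continuousOn (fun x _ => hd x)
      continuous_const (fun _ _ => hD) (fun x hx => hb x (by
        rw [uIcc_of_le h]; exact Ioo_subset_Icc_self hx))
    rw [abs_of_nonneg (sub_nonneg.2 h)]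
    simpa [mul_comm] using this
  · have := gron (f := fun x => f (-x)) (f' := fun x => - f' (-x)) (D := fun _ => D)
      (neg_le_neg h) hL (hc.comp continuous_neg).continuousOn
      (fun x _ => by
        have := (hd (-x)).comp x (hasDerivAt_neg x)
        simpa using! this)
      continuous_const (fun _ _ => hD) (fun x hx => by
        rw [abs_neg]
        apply hb
        rw [uIcc_of_ge h]; constructor <;> linarith [hx.1, hx.2])
    rw [abs_of_nonpos (sub_nonpos.2 h)]
    have e : -b - -a = -(b - a) := by ring
    rw [e] at this
    simpa [mul_comm, e] using this

lemma IsTraj.cont {n y : ℝ → ℝ} (h : IsTraj K n y) : Continuous y :=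
  continuous_iff_continuousAt.2 fun x => (h x).continuousAt

lemma traj_exists (h : GK K K' L) {n : ℝ → ℝ} (hn : NB n) (t0 z : ℝ) :
    ∃ y, y t0 = z ∧ IsTraj K n y := by
  obtain ⟨M, hM⟩ := hn.bdd
  obtain ⟨f, hf, hf'⟩ := global_ode (fun t x => n t + K x) L (M + |K 0|) h.hL (fun t x y => by
    simpa using h.lipK x y) (fun x => hn.cont.add continuous_const) (fun t => by
    rw [Real.norm_eq_abs]; exact (abs_add_le _ _).trans (by linarith [hM t])) t0 z
  exact ⟨f, hf, hf'⟩

lemma traj_diff (h : GK K K' L) {n1 n2 y1 y2 : ℝ → ℝ} (c1 : Continuous n1) (c2 : Continuous n2)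
    (h1 : IsTraj K n1 y1) (h2 : IsTraj K n2 y2) {a b : ℝ} (hab : a ≤ b) :
    |y1 b - y2 b| ≤ exp (L * (b - a)) * (|y1 a - y2 a| + ∫ x in a..b, |n1 x - n2 x|) := by
  apply gron (f := fun t => y1 t - y2 t)
    (f' := fun t => (n1 t + K (y1 t)) - (n2 t + K (y2 t)))
    (D := fun t => |n1 t - n2 t|) hab h.hL (h1.cont.sub h2.cont).continuousOn
    (fun x _ => (h1 x).sub (h2 x)) (by fun_prop) (fun x _ => abs_nonneg _)
  intro x _
  have e : n1 x + K (y1 x) - (n2 x + K (y2 x)) = (K (y1 x) - K (y2 x)) + (n1 x - n2 x) := by ring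
  rw [e]
  exact (abs_add_le _ _).trans (by linarith [h.lipK (y1 x) (y2 x)])

lemma traj_diff' (h : GK K K' L) {n y1 y2 : ℝ → ℝ}
    (h1 : IsTraj K n y1) (h2 : IsTraj K n y2) (a b : ℝ) :
    |y1 b - y2 b| ≤ exp (L * |b - a|) * |y1 a - y2 a| := by
  have := gron2 (f := fun t => y1 t - y2 t)
    (f' := fun t => (n t + K (y1 t)) - (n t + K (y2 t))) (a := a) (b := b) (D := 0)
    h.hL le_rfl (fun x => (h1 x).sub (h2 x)) (fun x _ => by
      simpa using h.lipK (y1 x) (y2 x))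
  simpa using this

lemma traj_unique (h : GK K K' L) {n y1 y2 : ℝ → ℝ}
    (h1 : IsTraj K n y1) (h2 : IsTraj K n y2) {a : ℝ} (ha : y1 a = y2 a) : y1 = y2 := by
  funext b
  have := traj_diff' h h1 h2 a b
  rw [ha, sub_self, abs_zero, mul_zero] at this
  linarith [abs_nonpos_iff.1 this]

/-- flow from time `0`. -/
def psi (K n : ℝ → ℝ) (z : ℝ) : ℝ → ℝ :=
  Classical.epsilon fun y => y 0 = z ∧ IsTraj K n y

/-- flow vanishing at time `σ`. -/
def chi (K n : ℝ → ℝ) (σ : ℝ) : ℝ :=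
  (Classical.epsilon fun y : ℝ → ℝ => y σ = 0 ∧ IsTraj K n y) 0

def VV (K K' n : ℝ → ℝ) (t z : ℝ) : ℝ := exp (∫ s in (0 : ℝ)..t, K' (psi K n z s))

variable {n : ℝ → ℝ}

lemma psi_zero (h : GK K K' L) (hn : NB n) (z : ℝ) : psi K n z 0 = z :=
  (Classical.epsilon_spec (traj_exists h hn 0 z)).1

lemma psi_traj (h : GK K K' L) (hn : NB n) (z : ℝ) : IsTraj K n (psi K n z) :=
  (Classical.epsilon_spec (traj_exists h hn 0 z)).2

lemma psi_eq (h : GK K K' L) (hn : NB n) {y : ℝ → ℝ} (hy : IsTraj K n y) :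
    psi K n (y 0) = y :=
  traj_unique h (psi_traj h hn _) hy (psi_zero h hn _)

lemma psi_chi (h : GK K K' L) (hn : NB n) (σ : ℝ) : psi K n (chi K n σ) σ = 0 := by
  have := Classical.epsilon_spec (traj_exists h hn σ 0)
  unfold chi
  rw [psi_eq h hn this.2]
  exact this.1

lemma psi_inj (h : GK K K' L) (hn : NB n) {z1 z2 t : ℝ} (e : psi K n z1 t = psi K n z2 t) :
    z1 = z2 := by
  have := traj_unique h (psi_traj h hn z1) (psi_traj h hn z2) e
  rw [← psi_zero h hn z1, this, psi_zero h hn]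

lemma psi_cont (h : GK K K' L) (hn : NB n) : Continuous fun p : ℝ × ℝ => psi K n p.2 p.1 := by
  rw [continuous_iff_continuousAt]
  rintro ⟨t0, z0⟩
  unfold ContinuousAt
  rw [tendsto_iff_dist_tendsto_zero]
  have hc := (psi_traj h hn z0).cont
  have hlim : Tendsto (fun p : ℝ × ℝ => exp (L * |p.1|) * |p.2 - z0| +
      |psi K n z0 p.1 - psi K n z0 t0|) (𝓝 (t0, z0)) (𝓝 0) := by
    have : Continuous (fun p : ℝ × ℝ => exp (L * |p.1|) * |p.2 - z0| +
      |psi K n z0 p.1 - psi K n z0 t0|) := by fun_prop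
    have := this.tendsto (t0, z0)
    simpa using this
  refine squeeze_zero (fun _ => dist_nonneg) (fun p => ?_) hlim
  rw [Real.dist_eq]
  have h1 := traj_diff' h (psi_traj h hn p.2) (psi_traj h hn z0) 0 p.1
  rw [psi_zero h hn, psi_zero h hn, sub_zero] at h1
  have := abs_sub_le (psi K n p.2 p.1) (psi K n z0 p.1) (psi K n z0 t0)
  linarith

lemma VV_cont (h : GK K K' L) (hn : NB n) : Continuous fun p : ℝ × ℝ => VV K K' n p.1 p.2 := by
  unfold VV
  apply Real.continuous_exp.comp
  apply intervalIntegral.continuous_parametric_intervalIntegral_of_continuous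
    (f := fun (p : ℝ × ℝ) s => K' (psi K n p.2 s)) _ continuous_fst
  apply h.contK'.comp
  exact (psi_cont h hn).comp (continuous_snd.prodMk (continuous_snd.comp continuous_fst))

lemma VV_pos (t z : ℝ) : 0 < VV K K' n t z := Real.exp_pos _

lemma psi_deriv_z (h : GK K K' L) (hn : NB n) (t z : ℝ) :
    HasDerivAt (fun z => psi K n z t) (VV K K' n t z) z := by
  rw [hasDerivAt_iff_isLittleO_nhds_zero]
  have hVd : ∀ s, HasDerivAt (fun s => VV K K' n s z)
      (VV K K' n s z * K' (psi K n z s)) s := by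
    intro s
    have hc : Continuous fun s => K' (psi K n z s) := h.contK'.comp (psi_traj h hn z).cont
    exact (intervalIntegral.integral_hasDerivAt_right (hc.intervalIntegrable _ _)
          (hc.stronglyMeasurableAtFilter _ _) hc.continuousAt).exp
  have hbound : ∀ w : ℝ, |psi K n (z + w) t - psi K n z t - w * VV K K' n t z| ≤
      (exp (L * |t|) * (L * exp (2 * (L * |t|)) * |t|)) * |w ^ 2| := by
    intro w
    have := gron2 (f := fun s => psi K n (z + w) s - psi K n z s - w * VV K K' n s z)
      (f' := fun s => (n s + K (psi K n (z + w) s)) - (n s + K (psi K n z s))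
        - w * (VV K K' n s z * K' (psi K n z s))) (a := 0) (b := t)
      (D := L * exp (2 * (L * |t|)) * w ^ 2) h.hL (by have := h.hL; positivity)
      (fun s => (((psi_traj h hn (z + w) s).sub (psi_traj h hn z s)).sub ((hVd s).const_mul w)))
      (fun s hs => by
        have h1 := h.taylor (psi K n (z + w) s) (psi K n z s)
        have h2 := traj_diff' h (psi_traj h hn (z + w)) (psi_traj h hn z) 0 s
        rw [psi_zero h hn, psi_zero h hn, sub_zero, add_sub_cancel_left] at h2
        have hst : |s| ≤ |t| := by
          have := abs_sub_left_of_mem_uIcc hs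
          simpa using this
        have h3 : exp (L * |s|) ≤ exp (L * |t|) :=
          Real.exp_le_exp.2 (mul_le_mul_of_nonneg_left hst h.hL)
        have h4 : |psi K n (z + w) s - psi K n z s| ^ 2 ≤ exp (2 * (L * |t|)) * w ^ 2 := by
          have e : exp (2 * (L * |t|)) * w ^ 2 = (exp (L * |t|) * |w|) ^ 2 := by
            rw [mul_pow, sq_abs, ← Real.exp_nat_mul]; simp
          rw [e]
          apply pow_le_pow_left₀ (abs_nonneg _)
          exact h2.trans (mul_le_mul_of_nonneg_right h3 (abs_nonneg _))
        have e : n s + K (psi K n (z + w) s) - (n s + K (psi K n z s)) -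
            w * (VV K K' n s z * K' (psi K n z s)) =
            K' (psi K n z s) * (psi K n (z + w) s - psi K n z s - w * VV K K' n s z) +
            (K (psi K n (z + w) s) - K (psi K n z s) - K' (psi K n z s) *
              (psi K n (z + w) s - psi K n z s)) := by ring
        rw [e]
        refine (abs_add_le _ _).trans ?_
        rw [abs_mul]
        have h5 := mul_le_mul_of_nonneg_right (h.b1 (psi K n z s))
          (abs_nonneg (psi K n (z + w) s - psi K n z s - w * VV K K' n s z))
        have h6 := mul_le_mul_of_nonneg_left h4 h.hL
        linarith)
    have hV0 : VV K K' n 0 z = 1 := by simp [VV]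
    simp only [psi_zero h hn, hV0, sub_zero] at this
    have e0 : z + w - z - w * 1 = 0 := by ring
    rw [e0, abs_zero, zero_add] at this
    refine this.trans (le_of_eq ?_)
    rw [abs_of_nonneg (sq_nonneg w)]
    ring
  have hO : (fun w : ℝ => psi K n (z + w) t - psi K n z t - w • VV K K' n t z)
      =O[𝓝 0] fun w : ℝ => w ^ 2 := by
    apply Asymptotics.IsBigO.of_bound (exp (L * |t|) * (L * exp (2 * (L * |t|)) * |t|))
    exact Eventually.of_forall fun w => by simpa [Real.norm_eq_abs] using hbound w
  refine hO.trans_isLittleO ?_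
  exact Asymptotics.isLittleO_pow_id one_lt_two

abbrev sp (x : ℝ) : ℝ →L[ℝ] ℝ := ContinuousLinearMap.toSpanSingleton ℝ x

lemma sp_cont : Continuous sp :=
  (ContinuousLinearMap.toSpanSingletonCLE (𝕜 := ℝ) (E := ℝ)).continuous

lemma psi_dt_cont (h : GK K K' L) (hn : NB n) :
    Continuous fun p : ℝ × ℝ => sp (n p.1 + K (psi K n p.2 p.1)) :=
  sp_cont.comp ((hn.cont.comp continuous_fst).add (h.contK.comp (psi_cont h hn)))

lemma psi_dz_cont (h : GK K K' L) (hn : NB n) :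
    Continuous fun p : ℝ × ℝ => sp (VV K K' n p.1 p.2) :=
  sp_cont.comp (VV_cont h hn)

lemma psi_fderiv (h : GK K K' L) (hn : NB n) (p : ℝ × ℝ) :
    HasStrictFDerivAt (fun p : ℝ × ℝ => psi K n p.2 p.1)
      ((sp (n p.1 + K (psi K n p.2 p.1))).coprod (sp (VV K K' n p.1 p.2))) p :=
  hasStrictFDerivAt_uncurry_coprod (f := fun t z => psi K n z t)
    (f₁ := fun t z => sp (n t + K (psi K n z t))) (f₂ := fun t z => sp (VV K K' n t z))
    (Eventually.of_forall fun v => (psi_traj h hn v.2 v.1).hasFDerivAt)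
    (Eventually.of_forall fun v => (psi_deriv_z h hn v.1 v.2).hasFDerivAt)
    (psi_dt_cont h hn).continuousAt (psi_dz_cont h hn).continuousAt

lemma psi_contDiff (h : GK K K' L) (hn : NB n) :
    ContDiff ℝ 1 (fun p : ℝ × ℝ => psi K n p.2 p.1) := by
  rw [contDiff_one_iff_hasFDerivAt]
  refine ⟨_, ?_, fun p => (psi_fderiv h hn p).hasFDerivAt⟩
  have h1 := psi_dt_cont h hn
  have h2 := psi_dz_cont h hn
  have e : (fun x : ℝ × ℝ => (sp (n x.1 + K (psi K n x.2 x.1))).coprod (sp (VV K K' n x.1 x.2))) =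
    fun x : ℝ × ℝ => (sp (n x.1 + K (psi K n x.2 x.1))) ∘L (ContinuousLinearMap.fst ℝ ℝ ℝ) +
      (sp (VV K K' n x.1 x.2)) ∘L (ContinuousLinearMap.snd ℝ ℝ ℝ) := by
    funext x; ext <;> simp
  rw [e]
  exact (h1.clm_comp continuous_const).add (h2.clm_comp continuous_const)

lemma chi_deriv (h : GK K K' L) (hn : NB n) (σ : ℝ) :
    HasDerivAt (chi K n) (-(n σ + K 0) / VV K K' n σ (chi K n σ)) σ := by
  have hs := hasStrictFDerivAt_implicitFunctionOfBivariate (u := (σ, chi K n σ))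
    (f := fun t z => psi K n z t)
    (f₁ := fun t z => sp (n t + K (psi K n z t))) (f₂ := fun t z => sp (VV K K' n t z))
    (Eventually.of_forall fun v => (psi_traj h hn v.2 v.1).hasFDerivAt)
    (Eventually.of_forall fun v => (psi_deriv_z h hn v.1 v.2).hasFDerivAt)
    (psi_dt_cont h hn).continuousAt (psi_dz_cont h hn).continuousAt
    (by
      refine ⟨ContinuousLinearEquiv.unitsEquivAut ℝ
        (Units.mk0 _ (VV_pos (K := K) (K' := K') (n := n) σ (chi K n σ)).ne'), ?_⟩
      ext; simp)
  have he := eventually_apply_implicitFunctionOfBivariate (u := (σ, chi K n σ))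
    (f := fun t z => psi K n z t)
    (f₁ := fun t z => sp (n t + K (psi K n z t))) (f₂ := fun t z => sp (VV K K' n t z))
    (Eventually.of_forall fun v => (psi_traj h hn v.2 v.1).hasFDerivAt)
    (Eventually.of_forall fun v => (psi_deriv_z h hn v.1 v.2).hasFDerivAt)
    (psi_dt_cont h hn).continuousAt (psi_dz_cont h hn).continuousAt
    (by
      refine ⟨ContinuousLinearEquiv.unitsEquivAut ℝ
        (Units.mk0 _ (VV_pos (K := K) (K' := K') (n := n) σ (chi K n σ)).ne'), ?_⟩
      ext; simp)
  have h1 := hs.hasFDerivAt.hasDerivAt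
  have h2 := h1.congr_of_eventuallyEq (f₁ := chi K n) (by
    filter_upwards [he] with x hx
    simp only [psi_chi h hn] at hx
    exact psi_inj h hn ((psi_chi h hn x).trans hx.symm))
  have hinv : (sp (VV K K' n σ (chi K n σ))).inverse = sp (VV K K' n σ (chi K n σ))⁻¹ := by
    apply ContinuousLinearMap.inverse_eq
    · ext; simp [(VV_pos (K := K) (K' := K') (n := n) σ (chi K n σ)).ne']
    · ext; simp [(VV_pos (K := K) (K' := K') (n := n) σ (chi K n σ)).ne']
  have e : ((-(sp (VV K K' n σ (chi K n σ))).inverse ∘SL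
      sp (n σ + K (psi K n (chi K n σ) σ))) : ℝ →L[ℝ] ℝ) 1 =
      -(n σ + K 0) / VV K K' n σ (chi K n σ) := by
    rw [hinv]
    simp [psi_chi h hn]
    ring
  rw [← e]
  exact h2

end
end QS

namespace QS

def gg (K n q : ℝ → ℝ) (σ : ℝ) : ℝ := if σ ≤ 0 then ∫ x in (0 : ℝ)..(-σ), q x else chi K n σ

def gd (K K' n q : ℝ → ℝ) (σ : ℝ) : ℝ :=
  if σ ≤ 0 then -q (-σ) else -(n σ + K 0) / VV K K' n σ (chi K n σ)

def QQ (K n q : ℝ → ℝ) (τ η : ℝ) : ℝ := psi K n (gg K n q (τ - η)) τ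

def PP (K K' n q : ℝ → ℝ) (τ η : ℝ) : ℝ :=
  -(VV K K' n τ (gg K n q (τ - η)) * gd K K' n q (τ - η))

def Sol (K K' : ℝ → ℝ) (κ : ℝ) (q n : ℝ → ℝ) (T : ℝ) : Prop :=
  ∀ τ ∈ Icc (0 : ℝ) T, n τ = PP K K' n q τ 1 - κ

section
variable {K K' : ℝ → ℝ} {L : ℝ} {n q : ℝ → ℝ}

lemma chi_zero (h : GK K K' L) (hn : NB n) : chi K n 0 = 0 := by
  have := psi_chi h hn 0
  rwa [psi_zero h hn] at this

lemma gg_pos (h : GK K K' L) (hn : NB n) {σ : ℝ} (hσ : 0 ≤ σ) : gg K n q σ = chi K n σ := by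
  unfold gg
  split_ifs with h1
  · have : σ = 0 := le_antisymm h1 hσ
    subst this
    simp [chi_zero h hn]
  · rfl

lemma gd_pos (h : GK K K' L) (hn : NB n) (hc : n 0 + K 0 = q 0) {σ : ℝ} (hσ : 0 ≤ σ) :
    gd K K' n q σ = -(n σ + K 0) / VV K K' n σ (chi K n σ) := by
  unfold gd
  split_ifs with h1
  · have : σ = 0 := le_antisymm h1 hσ
    subst this
    simp [VV, hc]
  · rfl

lemma gg_deriv (h : GK K K' L) (hn : NB n) (hq : Continuous q) (hc : n 0 + K 0 = q 0) (σ : ℝ) :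
    HasDerivAt (gg K n q) (gd K K' n q σ) σ := by
  have h1 : ∀ σ, HasDerivAt (fun σ : ℝ => ∫ x in (0 : ℝ)..(-σ), q x) (-q (-σ)) σ := by
    intro σ
    have := (intervalIntegral.integral_hasDerivAt_right (hq.intervalIntegrable 0 (-σ))
          (hq.stronglyMeasurableAtFilter _ _) hq.continuousAt).comp σ (hasDerivAt_neg σ)
    simpa using! this
  have hl : ∀ σ ≤ 0, HasDerivWithinAt (gg K n q) (gd K K' n q σ) (Iic 0) σ := by
    intro σ hσ
    have e : gd K K' n q σ = -q (-σ) := if_pos hσ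
    rw [e]
    refine (h1 σ).hasDerivWithinAt.congr (fun x hx => if_pos hx) (if_pos hσ)
  have hr : ∀ σ ≥ 0, HasDerivWithinAt (gg K n q) (gd K K' n q σ) (Ici 0) σ := by
    intro σ hσ
    rw [gd_pos h hn hc hσ]
    exact (chi_deriv h hn σ).hasDerivWithinAt.congr (fun x hx => gg_pos h hn hx) (gg_pos h hn hσ)
  rcases lt_trichotomy σ 0 with hσ | hσ | hσ
  · exact (hl σ hσ.le).hasDerivAt (Iic_mem_nhds hσ)
  · subst hσ
    have := (hl 0 le_rfl).union (hr 0 le_rfl)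
    rwa [Iic_union_Ici, hasDerivWithinAt_univ] at this
  · exact (hr σ hσ.le).hasDerivAt (Ici_mem_nhds hσ)

lemma chi_cont (h : GK K K' L) (hn : NB n) : Continuous (chi K n) :=
  continuous_iff_continuousAt.2 fun x => (chi_deriv h hn x).continuousAt

lemma gd_cont (h : GK K K' L) (hn : NB n) (hq : Continuous q) (hc : n 0 + K 0 = q 0) :
    Continuous (gd K K' n q) := by
  unfold gd
  apply Continuous.if_le (by fun_prop) _ continuous_id continuous_const
  · intro x hx
    have hx : x = 0 := hx
    subst hx
    simp [VV, hc]
  · apply Continuous.div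
    · exact (hn.cont.add continuous_const).neg
    · exact (VV_cont h hn).comp (continuous_id.prodMk (chi_cont h hn))
    · intro x; exact (VV_pos _ _).ne'

lemma gg_contDiff (h : GK K K' L) (hn : NB n) (hq : Continuous q) (hc : n 0 + K 0 = q 0) :
    ContDiff ℝ 1 (gg K n q) := by
  rw [contDiff_one_iff_deriv]
  refine ⟨fun x => (gg_deriv h hn hq hc x).differentiableAt, ?_⟩
  have : deriv (gg K n q) = gd K K' n q := funext fun x => (gg_deriv h hn hq hc x).deriv
  rw [this]
  exact gd_cont h hn hq hc

lemma QQ_contDiff (h : GK K K' L) (hn : NB n) (hq : Continuous q) (hc : n 0 + K 0 = q 0) :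
    ContDiff ℝ 1 (Function.uncurry (QQ K n q)) := by
  have h1 : ContDiff ℝ 1 (fun p : ℝ × ℝ => (p.1, gg K n q (p.1 - p.2))) :=
    contDiff_fst.prodMk ((gg_contDiff h hn hq hc).comp (contDiff_fst.sub contDiff_snd))
  exact (psi_contDiff h hn).comp h1

lemma PP_cont (h : GK K K' L) (hn : NB n) (hq : Continuous q) (hc : n 0 + K 0 = q 0) :
    Continuous (Function.uncurry (PP K K' n q)) := by
  have h1 : Continuous (fun p : ℝ × ℝ => (p.1, gg K n q (p.1 - p.2))) :=
    continuous_fst.prodMk ((gg_contDiff h hn hq hc).continuous.comp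
      (continuous_fst.sub continuous_snd))
  exact (((VV_cont h hn).comp h1).mul ((gd_cont h hn hq hc).comp
    (continuous_fst.sub continuous_snd))).neg

lemma QQ_deta (h : GK K K' L) (hn : NB n) (hq : Continuous q) (hc : n 0 + K 0 = q 0) (τ η : ℝ) :
    HasDerivAt (fun x => QQ K n q τ x) (PP K K' n q τ η) η := by
  have h1 : HasDerivAt (fun x : ℝ => τ - x) (-1) η := by
    simpa using (hasDerivAt_id η).const_sub τ
  have h2 := (gg_deriv h hn hq hc (τ - η)).comp η h1
  have h3 := (psi_deriv_z h hn τ (gg K n q (τ - η))).comp η h2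
  refine h3.congr_deriv ?_
  unfold PP
  ring

lemma QQ_dtau (h : GK K K' L) (hn : NB n) (hq : Continuous q) (hc : n 0 + K 0 = q 0) (τ η : ℝ) :
    HasDerivAt (fun s => QQ K n q s η) (n τ + K (QQ K n q τ η) - PP K K' n q τ η) τ := by
  have h1 : HasDerivAt (fun x : ℝ => x - η) 1 τ := by
    simpa using (hasDerivAt_id τ).sub_const η
  have h2 := (gg_deriv h hn hq hc (τ - η)).comp τ h1
  have h3 := (psi_fderiv h hn (τ, gg K n q (τ - η))).hasFDerivAt.comp_hasDerivAt τ
    ((hasDerivAt_id τ).prodMk h2)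
  refine h3.congr_deriv ?_
  unfold PP QQ
  simp
  ring

lemma PP_neg {τ η : ℝ} (hσ : τ ≤ η) : PP K K' n q τ η =
    q (η - τ) * exp (∫ s in (0 : ℝ)..τ, K' (psi K n (gg K n q (τ - η)) s)) := by
  unfold PP gd VV
  rw [if_pos (by linarith), neg_sub]
  ring

lemma PP_pos (h : GK K K' L) (hn : NB n) (hc : n 0 + K 0 = q 0) {τ η : ℝ} (hσ : η ≤ τ) :
    PP K K' n q τ η = (n (τ - η) + K 0) *
      exp (∫ s in (τ - η)..τ, K' (psi K n (gg K n q (τ - η)) s)) := by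
  unfold PP
  rw [gd_pos h hn hc (by linarith), ← gg_pos (q := q) h hn (by linarith)]
  unfold VV
  have hcont : Continuous fun s => K' (psi K n (gg K n q (τ - η)) s) :=
    h.contK'.comp (psi_traj h hn _).cont
  rw [← intervalIntegral.integral_add_adjacent_intervals (hcont.intervalIntegrable 0 (τ - η))
    (hcont.intervalIntegrable (τ - η) τ), Real.exp_add]
  have := (Real.exp_pos (∫ s in (0 : ℝ)..(τ - η), K' (psi K n (gg K n q (τ - η)) s))).ne'
  field_simp

lemma psi_gg_neg (h : GK K K' L) (hn : NB n) {σ : ℝ} (hσ : σ ≤ 0) :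
    psi K n (gg K n q σ) 0 = ∫ x in (0 : ℝ)..(-σ), q x := by
  rw [psi_zero h hn, gg, if_pos hσ]

lemma psi_gg_pos (h : GK K K' L) (hn : NB n) {σ : ℝ} (hσ : 0 ≤ σ) :
    psi K n (gg K n q σ) σ = 0 := by
  rw [gg_pos h hn hσ, psi_chi h hn]

end
end QS

namespace QS

section
variable {K K' : ℝ → ℝ} {L : ℝ}

lemma exp_sub_le {x y B : ℝ} (hx : x ≤ B) (hy : y ≤ B) : |exp x - exp y| ≤ exp B * |x - y| := by
  have := Convex.norm_image_sub_le_of_norm_hasDerivWithin_le (f := exp) (f' := exp) (s := Iic B)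
    (C := exp B) (x := y) (y := x)
    (fun z _ => (Real.hasDerivAt_exp z).hasDerivWithinAt)
    (fun z hz => by rw [Real.norm_eq_abs, abs_of_pos (Real.exp_pos z)]; exact Real.exp_le_exp.2 hz)
    (convex_Iic B) hy hx
  simpa [Real.norm_eq_abs] using this

lemma int_K'_le (h : GK K K' L) (y : ℝ → ℝ) {a b : ℝ} (hab : a ≤ b) :
    |∫ s in a..b, K' (y s)| ≤ L * (b - a) := by
  have := intervalIntegral.norm_integral_le_of_norm_le_const (a := a) (b := b) (C := L)
    (f := fun s => K' (y s)) (fun s _ => h.b1 _)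
  rwa [abs_of_nonneg (sub_nonneg.2 hab)] at this

lemma core (h : GK K K' L) {n1 n2 y1 y2 : ℝ → ℝ} (hn1 : NB n1) (hn2 : NB n2)
    (h1 : IsTraj K n1 y1) (h2 : IsTraj K n2 y2) {a τ T d0 M1 c1 c2 : ℝ} (ha : 0 ≤ a)
    (haτ : a ≤ τ) (hτT : τ ≤ T) (hM1 : 0 ≤ M1) (hd : |y1 a - y2 a| ≤ d0) (hc : |c1| ≤ M1) :
    |y1 τ - y2 τ| ≤ exp (L * T) * (d0 + ∫ s in (0 : ℝ)..τ, |n1 s - n2 s|) ∧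
    |c1 * exp (∫ s in a..τ, K' (y1 s)) - c2 * exp (∫ s in a..τ, K' (y2 s))| ≤
      (exp (L * T) + M1 * exp (L * T) * exp (L * T) * L * T) *
        (d0 + |c1 - c2| + ∫ s in (0 : ℝ)..τ, |n1 s - n2 s|) := by
  have hL := h.hL
  have cD : Continuous fun s => |n1 s - n2 s| := (hn1.cont.sub hn2.cont).abs
  have hT : 0 ≤ T := by linarith
  set I := ∫ s in (0 : ℝ)..τ, |n1 s - n2 s| with hI
  have hd0 : 0 ≤ d0 := (abs_nonneg _).trans hd
  have hI0 : 0 ≤ I := intervalIntegral.integral_nonneg (by linarith) fun _ _ => abs_nonneg _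
  have hsub : ∀ s, a ≤ s → s ≤ τ → |y1 s - y2 s| ≤ exp (L * T) * (d0 + I) := by
    intro s h3 h4
    refine (traj_diff h hn1.cont hn2.cont h1 h2 h3).trans ?_
    have e1 : exp (L * (s - a)) ≤ exp (L * T) :=
      Real.exp_le_exp.2 (mul_le_mul_of_nonneg_left (by linarith) hL)
    have e2 : ∫ x in a..s, |n1 x - n2 x| ≤ I := by
      apply intervalIntegral.integral_mono_interval ha h3 h4
      · exact Eventually.of_forall fun _ => abs_nonneg _
      · exact cD.intervalIntegrable _ _
    have e3 : 0 ≤ ∫ x in a..s, |n1 x - n2 x| :=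
      intervalIntegral.integral_nonneg h3 fun _ _ => abs_nonneg _
    apply mul_le_mul e1 (by linarith) (by positivity) (by positivity)
  refine ⟨hsub τ haτ le_rfl, ?_⟩
  set e1 := ∫ s in a..τ, K' (y1 s)
  set e2 := ∫ s in a..τ, K' (y2 s)
  have hLT : L * (τ - a) ≤ L * T := mul_le_mul_of_nonneg_left (by linarith) hL
  have he1 : e1 ≤ L * T := (le_abs_self _).trans ((int_K'_le h y1 haτ).trans hLT)
  have he2 : e2 ≤ L * T := (le_abs_self _).trans ((int_K'_le h y2 haτ).trans hLT)
  have hk1 : Continuous fun s => K' (y1 s) := h.contK'.comp h1.cont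
  have hk2 : Continuous fun s => K' (y2 s) := h.contK'.comp h2.cont
  have he : |e1 - e2| ≤ L * (exp (L * T) * (d0 + I)) * T := by
    have e : e1 - e2 = ∫ s in a..τ, (K' (y1 s) - K' (y2 s)) :=
      (intervalIntegral.integral_sub (hk1.intervalIntegrable _ _)
        (hk2.intervalIntegrable _ _)).symm
    rw [e]
    have := intervalIntegral.norm_integral_le_of_norm_le_const (a := a) (b := τ)
      (C := L * (exp (L * T) * (d0 + I)))
      (f := fun s => K' (y1 s) - K' (y2 s)) (fun s hs => by
        rw [uIoc_of_le haτ] at hs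
        exact (h.lip _ _).trans (mul_le_mul_of_nonneg_left (hsub s hs.1.le hs.2) hL))
    rw [Real.norm_eq_abs] at this
    refine this.trans ?_
    apply mul_le_mul_of_nonneg_left _ (by positivity)
    rw [abs_of_nonneg (sub_nonneg.2 haτ)]; linarith
  have hx := exp_sub_le he1 he2
  have hx2 : exp e2 ≤ exp (L * T) := Real.exp_le_exp.2 he2
  have e : c1 * exp e1 - c2 * exp e2 = c1 * (exp e1 - exp e2) + (c1 - c2) * exp e2 := by ring
  rw [e]
  refine (abs_add_le _ _).trans ?_
  rw [abs_mul, abs_mul, abs_of_pos (Real.exp_pos e2)]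
  have i1 : |c1| * |exp e1 - exp e2| ≤
      M1 * (exp (L * T) * (L * (exp (L * T) * (d0 + I)) * T)) := by
    apply mul_le_mul hc _ (abs_nonneg _) hM1
    exact hx.trans (mul_le_mul_of_nonneg_left he (Real.exp_pos _).le)
  have i2 : |c1 - c2| * exp e2 ≤ |c1 - c2| * exp (L * T) :=
    mul_le_mul_of_nonneg_left hx2 (abs_nonneg _)
  have i3 : 0 ≤ exp (L * T) * (d0 + I) := by positivity
  have i4 : 0 ≤ (M1 * exp (L * T) * exp (L * T) * L * T) * |c1 - c2| := by positivity
  nlinarith [i1, i2, i3, i4]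

structure Data (K n q : ℝ → ℝ) : Prop where
  nb : NB n
  cq : Continuous q
  c0 : n 0 + K 0 = q 0

lemma int_q_diff {q1 q2 : ℝ → ℝ} (c1 : Continuous q1) (c2 : Continuous q2) {δ x : ℝ}
    (hδ : ∀ x ∈ Icc (0 : ℝ) 1, |q1 x - q2 x| ≤ δ) (hx : x ∈ Icc (0 : ℝ) 1) :
    |(∫ s in (0 : ℝ)..x, q1 s) - ∫ s in (0 : ℝ)..x, q2 s| ≤ δ := by
  have hδ0 : 0 ≤ δ := (abs_nonneg _).trans (hδ x hx)
  rw [← intervalIntegral.integral_sub (c1.intervalIntegrable _ _) (c2.intervalIntegrable _ _)]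
  have := intervalIntegral.norm_integral_le_of_norm_le_const (a := 0) (b := x)
      (C := δ) (f := fun s => q1 s - q2 s) (fun s hs => by
        rw [uIoc_of_le hx.1] at hs
        exact hδ s ⟨hs.1.le, hs.2.trans hx.2⟩)
  rw [Real.norm_eq_abs, sub_zero, abs_of_nonneg hx.1] at this
  nlinarith [hx.2]

lemma QP_diff (h : GK K K' L) {n1 n2 q1 q2 : ℝ → ℝ} (d1 : Data K n1 q1) (d2 : Data K n2 q2)
    {T M δ : ℝ} (hM : 0 ≤ M) (hn : ∀ t ∈ Icc (0 : ℝ) T, |n1 t| ≤ M)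
    (hq : ∀ x ∈ Icc (0 : ℝ) 1, |q1 x| ≤ M) (hδ : ∀ x ∈ Icc (0 : ℝ) 1, |q1 x - q2 x| ≤ δ)
    {τ η : ℝ} (hτ : τ ∈ Icc (0 : ℝ) T) (hη : η ∈ Icc (0 : ℝ) 1) {B : ℝ} (hB0 : 0 ≤ B)
    (hB : η ≤ τ → |n1 (τ - η) - n2 (τ - η)| ≤ B) :
    |QQ K n1 q1 τ η - QQ K n2 q2 τ η| ≤
      exp (L * T) * (δ + ∫ s in (0 : ℝ)..τ, |n1 s - n2 s|) ∧
    |PP K K' n1 q1 τ η - PP K K' n2 q2 τ η| ≤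
      (exp (L * T) + (M + |K 0|) * exp (L * T) * exp (L * T) * L * T) *
        (2 * δ + B + ∫ s in (0 : ℝ)..τ, |n1 s - n2 s|) := by
  have hL := h.hL
  have hT : 0 ≤ T := hτ.1.trans hτ.2
  have hδ0 : 0 ≤ δ := (abs_nonneg _).trans (hδ η hη)
  have hM1 : 0 ≤ M + |K 0| := by positivity
  have hC : 0 ≤ exp (L * T) + (M + |K 0|) * exp (L * T) * exp (L * T) * L * T := by positivity
  rcases le_total τ η with hle | hle
  · have hx : η - τ ∈ Icc (0 : ℝ) 1 := ⟨by linarith, by linarith [hη.2, hτ.1]⟩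
    have := core (d0 := δ) (c1 := q1 (η - τ)) (c2 := q2 (η - τ)) h d1.nb d2.nb
      (psi_traj h d1.nb (gg K n1 q1 (τ - η)))
      (psi_traj h d2.nb (gg K n2 q2 (τ - η))) le_rfl hτ.1 hτ.2 hM1 (by
        rw [psi_gg_neg h d1.nb (by linarith), psi_gg_neg h d2.nb (by linarith), neg_sub]
        exact int_q_diff d1.cq d2.cq hδ hx) ((hq _ hx).trans (by linarith [abs_nonneg (K 0)]))
    refine ⟨this.1, ?_⟩
    rw [PP_neg hle, PP_neg hle]
    refine this.2.trans (mul_le_mul_of_nonneg_left ?_ hC)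
    linarith [hδ _ hx]
  · have hx : τ - η ∈ Icc (0 : ℝ) T := ⟨by linarith, by linarith [hη.1, hτ.2]⟩
    have := core (d0 := 0) (c1 := n1 (τ - η) + K 0) (c2 := n2 (τ - η) + K 0) h d1.nb d2.nb
      (psi_traj h d1.nb (gg K n1 q1 (τ - η)))
      (psi_traj h d2.nb (gg K n2 q2 (τ - η))) hx.1 (by linarith [hη.1]) hτ.2 hM1 (by
        rw [psi_gg_pos h d1.nb hx.1, psi_gg_pos h d2.nb hx.1]; simp)
        ((abs_add_le _ _).trans (by linarith [hn _ hx]))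
    constructor
    · refine this.1.trans (mul_le_mul_of_nonneg_left (by linarith) (Real.exp_pos _).le)
    rw [PP_pos h d1.nb d1.c0 hle, PP_pos h d2.nb d2.c0 hle]
    refine this.2.trans (mul_le_mul_of_nonneg_left ?_ hC)
    have := hB hle
    rw [add_sub_add_right_eq_sub]
    linarith

lemma stab (h : GK K K' L) {T M κ : ℝ} (hT : 0 ≤ T) (hM : 0 ≤ M) : ∃ C : ℝ, 0 ≤ C ∧
    ∀ n1 n2 q1 q2 : ℝ → ℝ, ∀ δ : ℝ, Data K n1 q1 → Data K n2 q2 →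
    (∀ t ∈ Icc (0 : ℝ) T, |n1 t| ≤ M) → (∀ x ∈ Icc (0 : ℝ) 1, |q1 x| ≤ M) →
    (∀ x ∈ Icc (0 : ℝ) 1, |q1 x - q2 x| ≤ δ) → Sol K K' κ q1 n1 T → Sol K K' κ q2 n2 T →
    ∀ τ ∈ Icc (0 : ℝ) T, |n1 τ - n2 τ| ≤ C * δ ∧ ∀ η ∈ Icc (0 : ℝ) 1,
      |QQ K n1 q1 τ η - QQ K n2 q2 τ η| ≤ C * δ ∧
      |PP K K' n1 q1 τ η - PP K K' n2 q2 τ η| ≤ C * δ := by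
  have hL := h.hL
  set C0 := exp (L * T) + (M + |K 0|) * exp (L * T) * exp (L * T) * L * T with hC0
  have hC0p : 0 < C0 := by positivity
  set lam := 4 * C0 with hlam
  have hlamp : 0 < lam := by positivity
  set C1 := 4 * C0 * exp (lam * T) with hC1
  have hC1p : 0 < C1 := by positivity
  have hC2 : exp (L * T) ≤ C0 := by
    rw [hC0]
    have : 0 ≤ (M + |K 0|) * exp (L * T) * exp (L * T) * L * T := by positivity
    linarith
  refine ⟨C1 + C0 * (2 + C1 + C1 * T), by positivity, ?_⟩
  intro n1 n2 q1 q2 δ d1 d2 hn hq hδ s1 s2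
  have hδ0 : 0 ≤ δ := (abs_nonneg _).trans (hδ 0 (by simp))
  have cD : Continuous fun s => |n1 s - n2 s| := (d1.nb.cont.sub d2.nb.cont).abs
  have cw : Continuous fun s => exp (-(lam * s)) * |n1 s - n2 s| := by fun_prop
  obtain ⟨ts, hts, hmax⟩ := isCompact_Icc.exists_isMaxOn (nonempty_Icc.2 hT) cw.continuousOn
  set S := exp (-(lam * ts)) * |n1 ts - n2 ts| with hS
  have hS0 : 0 ≤ S := by positivity
  have hD : ∀ t ∈ Icc (0 : ℝ) T, |n1 t - n2 t| ≤ S * exp (lam * t) := by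
    intro t ht
    have h1 : exp (-(lam * t)) * |n1 t - n2 t| ≤ S := hmax ht
    have h2 := mul_le_mul_of_nonneg_right h1 (Real.exp_pos (lam * t)).le
    have e : exp (-(lam * t)) * |n1 t - n2 t| * exp (lam * t) = |n1 t - n2 t| := by
      rw [mul_right_comm, ← Real.exp_add]; simp
    rwa [e] at h2
  have hI : ∀ t ∈ Icc (0 : ℝ) T, ∫ s in (0 : ℝ)..t, |n1 s - n2 s| ≤ S * exp (lam * t) / lam := by
    intro t ht
    have h1 : ∫ s in (0 : ℝ)..t, |n1 s - n2 s| ≤ ∫ s in (0 : ℝ)..t, S * exp (lam * s) := by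
      apply intervalIntegral.integral_mono_on ht.1 (cD.intervalIntegrable _ _)
      · exact Continuous.intervalIntegrable (by fun_prop) _ _
      · intro s hs
        exact hD s ⟨hs.1, hs.2.trans ht.2⟩
    have h2 : ∫ s in (0 : ℝ)..t, S * exp (lam * s) = S * exp (lam * t) / lam - S / lam := by
      have := intervalIntegral.integral_eq_sub_of_hasDerivAt (a := 0) (b := t)
        (f := fun s => S * exp (lam * s) / lam) (f' := fun s => S * exp (lam * s)) (fun s _ => by
          have h3 : HasDerivAt (fun s : ℝ => lam * s) lam s := by
            simpa using (hasDerivAt_id s).const_mul lam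
          have := ((h3.exp).const_mul S).div_const lam
          refine this.congr_deriv ?_
          field_simp) (Continuous.intervalIntegrable (by fun_prop) _ _)
      rw [this]; simp
    have h3 : 0 ≤ S / lam := by positivity
    linarith
  have hSδ : S ≤ 4 * C0 * δ := by
    set W := S * exp (lam * ts) / lam with hW
    have hW0 : 0 ≤ W := by positivity
    have h1 := (QP_diff h d1 d2 hM hn hq hδ (τ := ts) (η := 1) hts (by simp) (B := W) hW0 (by
      intro hle
      have h2 := hD (ts - 1) ⟨by linarith, by linarith [hts.2]⟩
      refine h2.trans ?_
      have e : lam * (ts - 1) = lam * ts + -lam := by ring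
      rw [e, Real.exp_add, Real.exp_neg, hW]
      have h3 : lam ≤ exp lam := by linarith [Real.add_one_le_exp lam]
      have h4 : (exp lam)⁻¹ ≤ lam⁻¹ := inv_anti₀ hlamp h3
      rw [div_eq_mul_inv, mul_assoc S]
      gcongr)).2
    have h5 : |n1 ts - n2 ts| ≤ C0 * (2 * δ + W + W) := by
      rw [s1 ts hts, s2 ts hts, sub_sub_sub_cancel_right]
      refine h1.trans (mul_le_mul_of_nonneg_left ?_ hC0p.le)
      linarith [hI ts hts]
    have h6 : S * exp (lam * ts) = |n1 ts - n2 ts| := by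
      rw [hS, mul_right_comm, ← Real.exp_add]; simp
    have h7 : C0 * W = S * exp (lam * ts) / 4 := by
      rw [hW, hlam]; field_simp
    have h8 : S * exp (lam * ts) ≤ 4 * C0 * δ := by nlinarith
    have h9 : 1 ≤ exp (lam * ts) := Real.one_le_exp (mul_nonneg hlamp.le hts.1)
    nlinarith
  have hD1 : ∀ t ∈ Icc (0 : ℝ) T, |n1 t - n2 t| ≤ C1 * δ := by
    intro t ht
    refine (hD t ht).trans ?_
    have h1 : exp (lam * t) ≤ exp (lam * T) :=
      Real.exp_le_exp.2 (mul_le_mul_of_nonneg_left ht.2 hlamp.le)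
    calc S * exp (lam * t) ≤ (4 * C0 * δ) * exp (lam * T) :=
        mul_le_mul hSδ h1 (by positivity) (by positivity)
      _ = _ := by rw [hC1]; ring
  intro τ hτ
  have hI1 : ∫ s in (0 : ℝ)..τ, |n1 s - n2 s| ≤ C1 * δ * T := by
    have := intervalIntegral.norm_integral_le_of_norm_le_const (a := 0) (b := τ)
      (C := C1 * δ) (f := fun s => |n1 s - n2 s|) (fun s hs => by
        rw [uIoc_of_le hτ.1] at hs
        rw [Real.norm_eq_abs, abs_abs]
        exact hD1 s ⟨hs.1.le, hs.2.trans hτ.2⟩)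
    rw [Real.norm_eq_abs, sub_zero, abs_of_nonneg hτ.1] at this
    refine (le_abs_self _).trans (this.trans ?_)
    exact mul_le_mul_of_nonneg_left hτ.2 (by positivity)
  have hI0 : 0 ≤ ∫ s in (0 : ℝ)..τ, |n1 s - n2 s| :=
    intervalIntegral.integral_nonneg hτ.1 fun _ _ => abs_nonneg _
  constructor
  · refine (hD1 τ hτ).trans (mul_le_mul_of_nonneg_right ?_ hδ0)
    have : 0 ≤ C0 * (2 + C1 + C1 * T) := by positivity
    linarith
  intro η hη
  have hqp := QP_diff h d1 d2 hM hn hq hδ hτ hη (B := C1 * δ) (by positivity) (fun hle =>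
    hD1 _ ⟨by linarith, by linarith [hη.1, hτ.2]⟩)
  have hfin : C0 * (2 * δ + C1 * δ + C1 * δ * T) ≤ (C1 + C0 * (2 + C1 + C1 * T)) * δ := by
    have : 0 ≤ C1 * δ := by positivity
    nlinarith
  constructor
  · refine hqp.1.trans (le_trans ?_ hfin)
    have h0 : 0 ≤ C1 * δ := by positivity
    exact mul_le_mul hC2 (by linarith) (by positivity) hC0p.le
  · refine hqp.2.trans (le_trans ?_ hfin)
    exact mul_le_mul_of_nonneg_left (by linarith) hC0p.le

end
end QS

namespace QS

section
variable {K K' : ℝ → ℝ} {L : ℝ}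

lemma traj_unique_on (h : GK K K' L) {n y1 y2 : ℝ → ℝ} {a b : ℝ} (h1 : IsTraj K n y1)
    (c2 : ContinuousOn y2 (Icc a b)) (h2 : ∀ t ∈ Ioo a b, HasDerivAt y2 (n t + K (y2 t)) t)
    (e : y1 a = y2 a) {t : ℝ} (ht : t ∈ Icc a b) : y1 t = y2 t := by
  have := gron (f := fun t => y1 t - y2 t)
    (f' := fun t => (n t + K (y1 t)) - (n t + K (y2 t))) (a := a) (b := t) (D := fun _ => 0)
    ht.1 h.hL (h1.cont.continuousOn.sub (c2.mono (Icc_subset_Icc_right ht.2)))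
    (fun x hx => (h1 x).sub (h2 x ⟨hx.1, hx.2.trans_le ht.2⟩))
    continuous_const (fun _ _ => le_rfl) (fun x _ => by
      simpa using h.lipK (y1 x) (y2 x))
  rw [e] at this
  simp only [sub_self, abs_zero, intervalIntegral.integral_zero, add_zero, mul_zero] at this
  linarith [abs_nonpos_iff.1 this]

section loc
variable {n n' q : ℝ → ℝ} {k : ℝ}

lemma psi_loc (h : GK K K' L) (hn : NB n) (hn' : NB n') (e : ∀ t ∈ Icc 0 k, n' t = n t)
    (z : ℝ) {t : ℝ} (ht : t ∈ Icc 0 k) : psi K n' z t = psi K n z t := by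
  refine (traj_unique_on h (psi_traj h hn z) (a := 0) (b := k)
    (psi_traj h hn' z).cont.continuousOn ?_ ?_ ht).symm
  · intro s hs
    rw [← e s (Ioo_subset_Icc_self hs)]
    exact psi_traj h hn' z s
  · rw [psi_zero h hn, psi_zero h hn']

lemma VV_loc (h : GK K K' L) (hn : NB n) (hn' : NB n') (e : ∀ t ∈ Icc 0 k, n' t = n t)
    (z : ℝ) {t : ℝ} (ht : t ∈ Icc 0 k) : VV K K' n' t z = VV K K' n t z := by
  unfold VV
  congr 1
  apply intervalIntegral.integral_congr
  intro s hs
  rw [uIcc_of_le ht.1] at hs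
  simp only
  rw [psi_loc h hn hn' e z ⟨hs.1, hs.2.trans ht.2⟩]

lemma chi_loc (h : GK K K' L) (hn : NB n) (hn' : NB n') (e : ∀ t ∈ Icc 0 k, n' t = n t)
    {σ : ℝ} (hσ : σ ∈ Icc 0 k) : chi K n' σ = chi K n σ := by
  apply psi_inj h hn (t := σ)
  rw [psi_chi h hn, ← psi_loc h hn hn' e _ hσ, psi_chi h hn']

lemma gg_loc (h : GK K K' L) (hn : NB n) (hn' : NB n') (e : ∀ t ∈ Icc 0 k, n' t = n t)
    {σ : ℝ} (hσ : σ ≤ k) : gg K n' q σ = gg K n q σ := by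
  unfold gg
  split_ifs with h1
  · rfl
  · exact chi_loc h hn hn' e ⟨(not_le.1 h1).le, hσ⟩

lemma gd_loc (h : GK K K' L) (hn : NB n) (hn' : NB n') (e : ∀ t ∈ Icc 0 k, n' t = n t)
    {σ : ℝ} (hσ : σ ≤ k) : gd K K' n' q σ = gd K K' n q σ := by
  unfold gd
  split_ifs with h1
  · rfl
  · have hs : σ ∈ Icc 0 k := ⟨(not_le.1 h1).le, hσ⟩
    rw [chi_loc h hn hn' e hs, VV_loc h hn hn' e _ hs, e _ hs]

lemma QQ_loc (h : GK K K' L) (hn : NB n) (hn' : NB n') (e : ∀ t ∈ Icc 0 k, n' t = n t)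
    {τ η : ℝ} (hτ : τ ∈ Icc 0 k) (hη : 0 ≤ η) : QQ K n' q τ η = QQ K n q τ η := by
  unfold QQ
  rw [gg_loc h hn hn' e (by linarith [hτ.2]), psi_loc h hn hn' e _ hτ]

lemma PP_loc (h : GK K K' L) (hn : NB n) (hn' : NB n') (e : ∀ t ∈ Icc 0 k, n' t = n t)
    {τ η : ℝ} (hτ : τ ∈ Icc 0 k) (hη : 0 ≤ η) : PP K K' n' q τ η = PP K K' n q τ η := by
  unfold PP
  rw [gg_loc h hn hn' e (by linarith [hτ.2]), gd_loc h hn hn' e (by linarith [hτ.2]),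
    VV_loc h hn hn' e _ hτ]

lemma PP_shift (h : GK K K' L) (hn : NB n) (τ η k : ℝ) : PP K K' n q τ η =
    PP K K' n q k (η - (τ - k)) * exp (∫ s in k..τ, K' (psi K n (gg K n q (τ - η)) s)) := by
  have e : k - (η - (τ - k)) = τ - η := by ring
  unfold PP
  rw [e]
  have hcont : Continuous fun s => K' (psi K n (gg K n q (τ - η)) s) :=
    h.contK'.comp (psi_traj h hn _).cont
  have hV : VV K K' n τ (gg K n q (τ - η)) = VV K K' n k (gg K n q (τ - η)) *
      exp (∫ s in k..τ, K' (psi K n (gg K n q (τ - η)) s)) := by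
    unfold VV
    rw [← Real.exp_add, intervalIntegral.integral_add_adjacent_intervals
      (hcont.intervalIntegrable _ _) (hcont.intervalIntegrable _ _)]
  rw [hV]
  ring

end loc

abbrev CI := C(Icc (0 : ℝ) 1, ℝ)

lemma ext_ode (h : GK K K' L) (p r : CI) (κ k : ℝ) : ∃ (Y E : ℝ → CI) (m : ℝ → ℝ), NB m ∧
    Y k = p ∧ E k = 0 ∧
    (∀ t, m t = r (projIcc 0 1 zero_le_one (t - k)) *
      exp (min (E t (projIcc 0 1 zero_le_one (t - k))) L) - κ) ∧
    (∀ x t, HasDerivAt (fun t => Y t x) (m t + K (Y t x)) t) ∧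
    (∀ x t, HasDerivAt (fun t => E t x) (K' (Y t x)) t) := by
  have hL := h.hL
  let pj : ℝ → Icc (0 : ℝ) 1 := fun t => projIcc 0 1 zero_le_one (t - k)
  have hpj : Continuous pj := continuous_projIcc.comp (continuous_id.sub continuous_const)
  let mm : ℝ → CI → ℝ := fun t e => r (pj t) * exp (min (e (pj t)) L) - κ
  let v : ℝ → CI × CI → CI × CI := fun t x =>
    (ContinuousMap.const _ (mm t x.2) + (ContinuousMap.mk K h.contK).comp x.1,
      (ContinuousMap.mk K' h.contK').comp x.1)
  have hmm : ∀ t e1 e2, |mm t e1 - mm t e2| ≤ ‖r‖ * exp L * ‖e1 - e2‖ := by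
    intro t e1 e2
    have e : mm t e1 - mm t e2 = r (pj t) * (exp (min (e1 (pj t)) L) - exp (min (e2 (pj t)) L)) := by
      simp only [mm]; ring
    rw [e, abs_mul]
    have h1 : |r (pj t)| ≤ ‖r‖ := r.norm_coe_le_norm _
    have h2 := exp_sub_le (min_le_right (e1 (pj t)) L) (min_le_right (e2 (pj t)) L)
    have h3 : |min (e1 (pj t)) L - min (e2 (pj t)) L| ≤ ‖e1 - e2‖ := by
      refine (abs_min_sub_min_le_max _ _ _ _).trans ?_
      rw [sub_self, abs_zero, max_eq_left (abs_nonneg _)]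
      exact (e1 - e2).norm_coe_le_norm _
    calc _ ≤ ‖r‖ * (exp L * ‖e1 - e2‖) :=
          mul_le_mul h1 (h2.trans (mul_le_mul_of_nonneg_left h3 (Real.exp_pos _).le))
            (abs_nonneg _) (norm_nonneg _)
      _ = _ := by ring
  have hmb : ∀ t e, |mm t e| ≤ ‖r‖ * exp L + |κ| := by
    intro t e
    have h1 : |r (pj t)| ≤ ‖r‖ := r.norm_coe_le_norm _
    have h2 : exp (min (e (pj t)) L) ≤ exp L := Real.exp_le_exp.2 (min_le_right _ _)
    refine (abs_sub _ _).trans ?_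
    rw [abs_mul, abs_of_pos (Real.exp_pos _)]
    gcongr
  have hlip : ∀ t x y, ‖v t x - v t y‖ ≤ (‖r‖ * exp L + L) * ‖x - y‖ := by
    intro t x y
    have hx1 : ‖x.1 - y.1‖ ≤ ‖x - y‖ := norm_fst_le (x - y)
    have hx2 : ‖x.2 - y.2‖ ≤ ‖x - y‖ := norm_snd_le (x - y)
    have hr : 0 ≤ ‖r‖ * exp L := by positivity
    have hpt : ∀ s, |x.1 s - y.1 s| ≤ ‖x - y‖ := fun s =>
      ((x.1 - y.1).norm_coe_le_norm s).trans hx1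
    rw [Prod.norm_def]
    apply max_le
    · rw [ContinuousMap.norm_le _ (by positivity)]
      intro s
      have e : (v t x - v t y).1 s = (mm t x.2 - mm t y.2) + (K (x.1 s) - K (y.1 s)) := by
        simp [v]; ring
      rw [e, Real.norm_eq_abs]
      refine (abs_add_le _ _).trans ?_
      have h1 := (hmm t x.2 y.2).trans (mul_le_mul_of_nonneg_left hx2 hr)
      have h2 := (h.lipK (x.1 s) (y.1 s)).trans (mul_le_mul_of_nonneg_left (hpt s) hL)
      linarith
    · rw [ContinuousMap.norm_le _ (by positivity)]
      intro s
      have e : (v t x - v t y).2 s = K' (x.1 s) - K' (y.1 s) := by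
        simp [v]
      rw [e, Real.norm_eq_abs]
      have h2 := (h.lip (x.1 s) (y.1 s)).trans (mul_le_mul_of_nonneg_left (hpt s) hL)
      have : 0 ≤ ‖r‖ * exp L * ‖x - y‖ := by positivity
      linarith
  have hcont : ∀ x, Continuous fun t => v t x := by
    intro x
    apply Continuous.prodMk _ continuous_const
    apply Continuous.add _ continuous_const
    apply ContinuousMap.continuous_const'.comp
    have h1 : Continuous fun t => r (pj t) := r.continuous.comp hpj
    have h2 : Continuous fun t => x.2 (pj t) := x.2.continuous.comp hpj
    exact (h1.mul (Real.continuous_exp.comp (h2.min continuous_const))).sub continuous_const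
  have hM : ∀ t, ‖v t 0‖ ≤ ‖r‖ * exp L + |κ| + |K 0| + L := by
    intro t
    have hr : 0 ≤ ‖r‖ * exp L := by positivity
    rw [Prod.norm_def]
    apply max_le
    · rw [ContinuousMap.norm_le _ (by positivity)]
      intro s
      have e : (v t 0).1 s = mm t 0 + K 0 := by simp [v]
      rw [e, Real.norm_eq_abs]
      refine (abs_add_le _ _).trans ?_
      linarith [hmb t 0]
    · rw [ContinuousMap.norm_le _ (by positivity)]
      intro s
      have e : (v t 0).2 s = K' 0 := by simp [v]
      rw [e, Real.norm_eq_abs]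
      linarith [h.b1 0, abs_nonneg κ, abs_nonneg (K 0)]
  obtain ⟨f, hf, hf'⟩ := global_ode v _ _ (by positivity) hlip hcont hM k (p, 0)
  have hfc : Continuous f := continuous_iff_continuousAt.2 fun x => (hf' x).continuousAt
  refine ⟨fun t => (f t).1, fun t => (f t).2, fun t => mm t (f t).2, ⟨?_, _, fun t => hmb t _⟩,
    by simp [hf], by simp [hf], fun t => rfl, ?_, ?_⟩
  · have h1 : Continuous fun t => r (pj t) := r.continuous.comp hpj
    have h2 : Continuous fun t => (f t).2 (pj t) := by fun_prop
    exact (h1.mul (Real.continuous_exp.comp (h2.min continuous_const))).sub continuous_const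
  · intro x t
    have := ((ContinuousMap.evalCLM ℝ x).comp
      (ContinuousLinearMap.fst ℝ CI CI)).hasFDerivAt.comp_hasDerivAt t (hf' t)
    refine this.congr_deriv ?_
    simp [v]
  · intro x t
    have := ((ContinuousMap.evalCLM ℝ x).comp
      (ContinuousLinearMap.snd ℝ CI CI)).hasFDerivAt.comp_hasDerivAt t (hf' t)
    refine this.congr_deriv ?_
    simp [v]

lemma sol_step (h : GK K K' L) {κ k : ℝ} {q n : ℝ → ℝ} (hk : 0 ≤ k) (hd : Data K n q)
    (hs : Sol K K' κ q n k) : ∃ n', Data K n' q ∧ Sol K K' κ q n' (k + 1) := by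
  have hQc : Continuous fun x : ℝ => QQ K n q k (1 - x) :=
    (QQ_contDiff h hd.nb hd.cq hd.c0).continuous.comp
      (continuous_const.prodMk (continuous_const.sub continuous_id))
  have hPc : Continuous fun x : ℝ => PP K K' n q k (1 - x) :=
    (PP_cont h hd.nb hd.cq hd.c0).comp
      (continuous_const.prodMk (continuous_const.sub continuous_id))
  obtain ⟨Y, E, m, hm, hYk, hEk, hmt, hY, hE⟩ := ext_ode h
    ⟨fun x : Icc (0 : ℝ) 1 => QQ K n q k (1 - x), hQc.comp continuous_subtype_val⟩
    ⟨fun x : Icc (0 : ℝ) 1 => PP K K' n q k (1 - x), hPc.comp continuous_subtype_val⟩ κ k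
  have hmk : m k = n k := by
    rw [hmt k, hEk, hs k ⟨hk, le_rfl⟩]
    simp [h.hL]
  let n' : ℝ → ℝ := fun t => n (min t k) + m (max t k) - m k
  have hle : ∀ t, t ≤ k → n' t = n t := by
    intro t ht
    simp [n', min_eq_left ht, max_eq_right ht]
  have hge : ∀ t, k ≤ t → n' t = m t := by
    intro t ht
    simp [n', min_eq_right ht, max_eq_left ht, hmk]
  have hn' : NB n' := by
    obtain ⟨M1, hM1⟩ := hd.nb.bdd
    obtain ⟨M2, hM2⟩ := hm.bdd
    constructor
    · exact ((hd.nb.cont.comp (continuous_id.min continuous_const)).add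
        (hm.cont.comp (continuous_id.max continuous_const))).sub continuous_const
    · refine ⟨M1 + M2 + M2, fun t => ?_⟩
      refine (abs_sub _ _).trans ?_
      exact add_le_add ((abs_add_le _ _).trans (add_le_add (hM1 _) (hM2 _))) (hM2 _)
  have hloc : ∀ t ∈ Icc 0 k, n' t = n t := fun t ht => hle t ht.2
  refine ⟨n', ⟨hn', hd.cq, by rw [hle 0 hk]; exact hd.c0⟩, ?_⟩
  intro τ hτ
  rcases le_total τ k with h1 | h1
  · rw [hle τ h1, PP_loc h hd.nb hn' hloc ⟨hτ.1, h1⟩ zero_le_one]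
    exact hs τ ⟨hτ.1, h1⟩
  · have hx : τ - k ∈ Icc (0 : ℝ) 1 := ⟨by linarith, by linarith [hτ.2]⟩
    have hpj : projIcc (0 : ℝ) 1 zero_le_one (τ - k) = ⟨τ - k, hx⟩ := projIcc_of_mem _ hx
    rw [hge τ h1, hmt τ, hpj, PP_shift h hn' τ 1 k,
      PP_loc h hd.nb hn' hloc ⟨hk, le_rfl⟩ (by linarith [hx.2])]
    set x : Icc (0 : ℝ) 1 := ⟨τ - k, hx⟩ with hxd
    have hYpsi : ∀ s ∈ Icc k τ, psi K n' (gg K n' q (τ - 1)) s = Y s x := by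
      intro s hs
      refine traj_unique_on h (psi_traj h hn' _) (a := k) (b := τ) (y2 := fun t => Y t x)
        (fun t _ => (hY x t).continuousAt.continuousWithinAt) ?_ ?_ hs
      · intro t ht
        rw [hge t ht.1.le]
        exact hY x t
      · rw [hYk, psi_loc h hd.nb hn' hloc _ ⟨hk, le_rfl⟩,
          gg_loc h hd.nb hn' hloc (by linarith [hτ.2])]
        have e : τ - 1 = k - (1 - (τ - k)) := by ring
        rw [e]
        rfl
    have hIntE : ∫ s in k..τ, K' (psi K n' (gg K n' q (τ - 1)) s) = E τ x := by
      have h2 : ∫ s in k..τ, K' (psi K n' (gg K n' q (τ - 1)) s) = ∫ s in k..τ, K' (Y s x) := by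
        apply intervalIntegral.integral_congr
        intro s hs
        rw [uIcc_of_le h1] at hs
        simp only
        rw [hYpsi s hs]
      have hYc : Continuous fun t => Y t x :=
        continuous_iff_continuousAt.2 fun t => (hY x t).continuousAt
      rw [h2, intervalIntegral.integral_eq_sub_of_hasDerivAt (fun t _ => hE x t)
        ((h.contK'.comp hYc).intervalIntegrable _ _), hEk]
      simp
    have hEL : E τ x ≤ L := by
      rw [← hIntE]
      refine (le_abs_self _).trans ((int_K'_le h _ h1).trans ?_)
      have := mul_le_mul_of_nonneg_left hx.2 h.hL
      linarith
    rw [hIntE, min_eq_left hEL]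
    rfl

lemma sol_exists (h : GK K K' L) {κ : ℝ} {q : ℝ → ℝ} (hq : Continuous q)
    (hc : q 1 - q 0 = κ - K 0) (T : ℝ) : ∃ n, Data K n q ∧ Sol K K' κ q n T := by
  have : ∀ k : ℕ, ∃ n, Data K n q ∧ Sol K K' κ q n k := by
    intro k
    induction k with
    | zero =>
      refine ⟨fun _ => q 1 - κ, ⟨⟨continuous_const, _, fun _ => le_rfl⟩, hq, by
        linarith⟩, ?_⟩
      intro τ hτ
      have : τ = 0 := le_antisymm (by simpa using hτ.2) hτ.1
      subst this
      rw [PP_neg zero_le_one]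
      simp
    | succ k ih =>
      obtain ⟨n, hd, hs⟩ := ih
      have := sol_step h (Nat.cast_nonneg k) hd hs
      simpa using this
  obtain ⟨k, hk⟩ := exists_nat_ge T
  obtain ⟨n, hd, hs⟩ := this k
  exact ⟨n, hd, fun τ hτ => hs τ ⟨hτ.1, hτ.2.trans hk⟩⟩

end
end QS

namespace QS

section
variable {K K' : ℝ → ℝ} {L ΦF : ℝ}

lemma gk_of (hK : KAssump K ΦF) : ∃ L, GK K (deriv K) L := by
  obtain ⟨C1, h1⟩ := hK.bdd1
  obtain ⟨C2, h2⟩ := hK.bdd2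
  have hd1 : Differentiable ℝ K := hK.smooth.differentiable (by norm_num)
  have hs : ContDiff ℝ (1 + 1) K := hK.smooth
  have hd2 : Differentiable ℝ (deriv K) :=
    ((contDiff_succ_iff_deriv.1 hs).2.2).differentiable (by norm_num)
  refine ⟨max (max C1 C2) 0, le_max_right _ _, fun x => (hd1 x).hasDerivAt,
    fun x => (h1 x).trans ((le_max_left _ _).trans (le_max_left _ _)), fun x y => ?_⟩
  have := Convex.norm_image_sub_le_of_norm_hasDerivWithin_le (f := deriv K)
    (f' := deriv (deriv K)) (s := univ)
    (C := max (max C1 C2) 0) (x := y) (y := x)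
    (fun z _ => (hd2 z).hasDerivAt.hasDerivWithinAt)
    (fun z _ => (h2 z).trans ((le_max_right _ _).trans (le_max_left _ _)))
    convex_univ trivial trivial
  simpa [Real.norm_eq_abs] using this

def qq (Qi : ℝ → ℝ) (x : ℝ) : ℝ := derivWithin Qi (Icc 0 1) (projIcc 0 1 zero_le_one x : Icc (0:ℝ) 1)

lemma qq_eq (Qi : ℝ → ℝ) {x : ℝ} (hx : x ∈ Icc (0 : ℝ) 1) :
    qq Qi x = derivWithin Qi (Icc 0 1) x := by
  unfold qq
  rw [projIcc_of_mem _ hx]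

lemma qq_cont {Qi : ℝ → ℝ} (hr : ContDiffOn ℝ 1 Qi (Icc 0 1)) : Continuous (qq Qi) := by
  have h1 := hr.continuousOn_derivWithin (uniqueDiffOn_Icc zero_lt_one) le_rfl
  exact (continuousOn_iff_continuous_domRestrict.1 h1).comp continuous_projIcc

lemma qq_int {Qi : ℝ → ℝ} (hr : ContDiffOn ℝ 1 Qi (Icc 0 1)) (h0 : Qi 0 = 0) {x : ℝ}
    (hx : x ∈ Icc (0 : ℝ) 1) : ∫ s in (0 : ℝ)..x, qq Qi s = Qi x := by
  rw [intervalIntegral.integral_eq_sub_of_hasDerivAt_of_le hx.1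
    (hr.continuousOn.mono (Icc_subset_Icc_right hx.2)) (fun s hs => ?_)
    ((qq_cont hr).intervalIntegrable _ _), h0, sub_zero]
  have hs' : s ∈ Ioo (0 : ℝ) 1 := ⟨hs.1, hs.2.trans_le hx.2⟩
  have := (hr.differentiableOn one_ne_zero s (Ioo_subset_Icc_self hs')).hasDerivWithinAt
  rw [qq_eq Qi (Ioo_subset_Icc_self hs')]
  exact this.hasDerivAt (Icc_mem_nhds hs'.1 hs'.2)

lemma pdEta_of {Q : ℝ → ℝ → ℝ} {τ η d : ℝ} (hη : η ∈ Icc (0 : ℝ) 1)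
    (hd : HasDerivAt (fun x => Q τ x) d η) : pdEta Q τ η = d :=
  hd.hasDerivWithinAt.derivWithin (uniqueDiffOn_Icc zero_lt_one η hη)

lemma pdTau_of {Q : ℝ → ℝ → ℝ} {τ η d : ℝ} (hτ : 0 ≤ τ)
    (hd : HasDerivAt (fun s => Q s η) d τ) : pdTau Q τ η = d :=
  hd.hasDerivWithinAt.derivWithin (uniqueDiffOn_Ici 0 τ hτ)

lemma Ico0_of {T : ℝ≥0∞} {T' : ℝ} (hT' : ENNReal.ofReal T' < T) {t : ℝ} (ht : t ∈ Icc 0 T') :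
    t ∈ Ico0 T := ⟨ht.1, (ENNReal.ofReal_le_ofReal ht.2).trans_lt hT'⟩

lemma lemA (h : GK K K' L) {T : ℝ≥0∞} {Qi : ℝ → ℝ} {Q : ℝ → ℝ → ℝ} {N : ℝ → ℝ}
    (hA : A2 K ΦF Qi) (hs : IsQSol K ΦF T Qi Q N) {T' : ℝ} (hT0 : 0 ≤ T')
    (hT' : ENNReal.ofReal T' < T) :
    ∃ n, Data K n (qq Qi) ∧ Sol K K' (K ΦF) (qq Qi) n T' ∧
      ∀ τ ∈ Icc 0 T', n τ = 1 / N τ ∧ ∀ η ∈ Icc (0 : ℝ) 1,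
        Q τ η = QQ K n (qq Qi) τ η ∧ pdEta Q τ η = PP K K' n (qq Qi) τ η := by
  have hsub : Icc 0 T' ⊆ Ico0 T := fun t ht => Ico0_of hT' ht
  have hNc : ContinuousOn (fun t => 1 / N t) (Icc 0 T') :=
    continuousOn_const.div (hs.Ncont.mono hsub) fun t ht => (hs.Npos t (hsub ht)).ne'
  let n : ℝ → ℝ := fun t => 1 / N (projIcc 0 T' hT0 t : Icc 0 T')
  have hn_eq : ∀ t ∈ Icc 0 T', n t = 1 / N t := by
    intro t ht
    simp only [n]
    rw [projIcc_of_mem _ ht]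
  have hn : NB n := by
    constructor
    · exact (continuousOn_iff_continuous_domRestrict.1 hNc).comp continuous_projIcc
    · obtain ⟨M, hM⟩ := isCompact_Icc.exists_bound_of_continuousOn hNc
      exact ⟨M, fun t => hM _ (projIcc 0 T' hT0 t).2⟩
  have h00 : (0 : ℝ) ∈ Icc 0 T' := ⟨le_rfl, hT0⟩
  have hcq : Continuous (qq Qi) := qq_cont hA.reg
  have hP0 : pdEta Q 0 1 = derivWithin Qi (Icc 0 1) 1 :=
    derivWithin_congr (fun x hx => hs.init x hx) (hs.init 1 (by simp))
  have hc0 : n 0 + K 0 = qq Qi 0 := by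
    rw [hn_eq 0 h00, hs.Ndef 0 (hsub h00), hP0, qq_eq Qi (by simp)]
    linarith [hA.compat]
  have hd : Data K n (qq Qi) := ⟨hn, hcq, hc0⟩
  have hQ : ∀ τ ∈ Icc 0 T', ∀ η ∈ Icc (0 : ℝ) 1, Q τ η = QQ K n (qq Qi) τ η := by
    intro τ hτ η hη
    have main : ∀ a, 0 ≤ a → 0 ≤ a - (τ - η) → a ≤ τ →
        psi K n (gg K n (qq Qi) (τ - η)) a = Q a (a - (τ - η)) → Q τ η = QQ K n (qq Qi) τ η := by
      intro a ha ha2 haτ he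
      have key := traj_unique_on h (psi_traj h hn (gg K n (qq Qi) (τ - η))) (a := a) (b := τ)
        (y2 := fun s => Q s (s - (τ - η))) ?_ ?_ he (t := τ) ⟨haτ, le_rfl⟩
      · unfold QQ
        rw [key, sub_sub_cancel]
      · have : ContinuousOn (fun s => Function.uncurry Q (s, s - (τ - η))) (Icc a τ) := by
          apply hs.reg.continuousOn.comp (by fun_prop)
          intro s hs'
          exact ⟨hsub ⟨by linarith [hs'.1], by linarith [hs'.2, hτ.2]⟩,
            ⟨by linarith [hs'.1], by linarith [hs'.2, hη.2]⟩⟩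
        exact this
      · intro s hs'
        have hs1 : s ∈ Ioo 0 T' := ⟨by linarith [hs'.1], by linarith [hs'.2, hτ.2]⟩
        have hx : s - (τ - η) ∈ Ioo (0 : ℝ) 1 :=
          ⟨by linarith [hs'.1], by linarith [hs'.2, hη.2]⟩
        have hnb : Ico0 T ×ˢ Icc (0 : ℝ) 1 ∈ 𝓝 (s, s - (τ - η)) :=
          prod_mem_nhds (mem_of_superset (Icc_mem_nhds hs1.1 hs1.2) hsub)
            (Icc_mem_nhds hx.1 hx.2)
        have hF := ((hs.reg.contDiffAt hnb).differentiableAt one_ne_zero).hasFDerivAt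
        set F := fderiv ℝ (Function.uncurry Q) (s, s - (τ - η))
        have d1 : HasDerivAt (fun r => Q r (s - (τ - η))) (F (1, 0)) s :=
          HasFDerivAt.comp_hasDerivAt (l := Function.uncurry Q)
            (f := fun r => (r, s - (τ - η))) s hF
            ((hasDerivAt_id s).prodMk (hasDerivAt_const s (s - (τ - η))))
        have d2 : HasDerivAt (fun x => Q s x) (F (0, 1)) (s - (τ - η)) :=
          hF.comp_hasDerivAt (s - (τ - η))
            ((hasDerivAt_const (s - (τ - η)) s).prodMk (hasDerivAt_id (s - (τ - η))))
        have d3 : HasDerivAt (fun r => Q r (r - (τ - η))) (F (1, 1)) s :=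
          HasFDerivAt.comp_hasDerivAt (l := Function.uncurry Q)
            (f := fun r => (r, r - (τ - η))) s hF
            ((hasDerivAt_id s).prodMk ((hasDerivAt_id s).sub_const (τ - η)))
        have hp := hs.pde s (hsub (Ioo_subset_Icc_self hs1)) _ hx
        rw [pdTau_of hs1.1.le d1, pdEta_of (Ioo_subset_Icc_self hx) d2, ← map_add] at hp
        rw [hn_eq s (Ioo_subset_Icc_self hs1), ← hp]
        simpa using d3
    rcases le_total τ η with hle | hle
    · refine main 0 le_rfl (by linarith) hτ.1 ?_
      have hx : η - τ ∈ Icc (0 : ℝ) 1 := ⟨by linarith, by linarith [hη.2, hτ.1]⟩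
      rw [psi_gg_neg h hn (by linarith), neg_sub, qq_int hA.reg hA.init0 hx, zero_sub, neg_sub,
        hs.init _ hx]
    · have hx : τ - η ∈ Icc (0 : ℝ) T' := ⟨by linarith, by linarith [hη.1, hτ.2]⟩
      refine main (τ - η) (by linarith) (by linarith) (by linarith [hη.1]) ?_
      rw [psi_gg_pos h hn hx.1, sub_self, hs.bc _ (hsub hx)]
  have hP : ∀ τ ∈ Icc 0 T', ∀ η ∈ Icc (0 : ℝ) 1, pdEta Q τ η = PP K K' n (qq Qi) τ η := by
    intro τ hτ η hη
    rw [← pdEta_of hη (QQ_deta h hn hcq hc0 τ η)]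
    exact derivWithin_congr (fun x hx => hQ τ hτ x hx) (hQ τ hτ η hη)
  refine ⟨n, hd, ?_, fun τ hτ => ⟨hn_eq τ hτ, fun η hη => ⟨hQ τ hτ η hη, hP τ hτ η hη⟩⟩⟩
  intro τ hτ
  rw [hn_eq τ hτ, hs.Ndef τ (hsub hτ), hP τ hτ 1 (by simp)]

lemma lemB (h : GK K K' L) (hΦ : 0 < ΦF) (hK : KAssump K ΦF) {Qi n : ℝ → ℝ}
    (hA : A2 K ΦF Qi) (hd : Data K n (qq Qi)) {T' : ℝ}
    (hs : Sol K K' (K ΦF) (qq Qi) n T') (hpos : ∀ t ∈ Icc 0 T', 0 < n t) :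
    IsQSol K ΦF (ENNReal.ofReal T') Qi (QQ K n (qq Qi)) (fun t => 1 / n t) := by
  have hsub : ∀ t ∈ Ico0 (ENNReal.ofReal T'), t ∈ Icc 0 T' := by
    intro t ht
    exact ⟨ht.1, ((ENNReal.ofReal_lt_ofReal_iff_of_nonneg ht.1).1 ht.2).le⟩
  have hq0 : ∀ x ∈ Icc (0 : ℝ) 1, 0 ≤ qq Qi x := by
    intro x hx
    rw [qq_eq Qi hx]
    exact hA.mono.derivWithin_nonneg
  have hN : ∀ τ ∈ Icc 0 T', n τ = pdEta (QQ K n (qq Qi)) τ 1 - K ΦF := by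
    intro τ hτ
    rw [pdEta_of (by simp) (QQ_deta h hd.nb hd.cq hd.c0 τ 1)]
    exact hs τ hτ
  refine ⟨hA.reg, hA.mono, hA.init0, hA.init1, hA.deriv1,
    (QQ_contDiff h hd.nb hd.cq hd.c0).contDiffOn, ?_, ?_, ?_, ?_, ?_, ?_, ?_, ?_⟩
  · intro τ hτ
    have hτ' := hsub τ hτ
    refine monotoneOn_of_deriv_nonneg (convex_Icc 0 1) ?_ ?_ ?_
    · exact fun η _ => (QQ_deta h hd.nb hd.cq hd.c0 τ η).continuousAt.continuousWithinAt
    · exact fun η _ =>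
        (QQ_deta h hd.nb hd.cq hd.c0 τ η).differentiableAt.differentiableWithinAt
    · intro η hη
      rw [interior_Icc] at hη
      have e : deriv (QQ K n (qq Qi) τ) η = PP K K' n (qq Qi) τ η :=
        (QQ_deta h hd.nb hd.cq hd.c0 τ η).deriv
      rw [e]
      rcases le_total τ η with hle | hle
      · rw [PP_neg hle]
        exact mul_nonneg (hq0 _ ⟨by linarith, by linarith [hη.2, hτ'.1]⟩) (Real.exp_pos _).le
      · rw [PP_pos h hd.nb hd.c0 hle]
        have h1 := hpos (τ - η) ⟨by linarith, by linarith [hη.1, hτ'.2]⟩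
        have h2 := hK.pos 0 ⟨le_rfl, hΦ.le⟩
        positivity
  · exact continuousOn_const.div hd.nb.cont.continuousOn fun t ht => (hpos t (hsub t ht)).ne'
  · intro t ht
    have := hpos t (hsub t ht)
    positivity
  · intro τ hτ η hη
    rw [pdEta_of (Ioo_subset_Icc_self hη) (QQ_deta h hd.nb hd.cq hd.c0 τ η),
      pdTau_of hτ.1 (QQ_dtau h hd.nb hd.cq hd.c0 τ η), one_div_one_div]
    ring
  · intro τ hτ
    unfold QQ
    rw [sub_zero, psi_gg_pos h hd.nb hτ.1]
  · intro τ hτ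
    rw [one_div_one_div]
    exact hN τ (hsub τ hτ)
  · intro η hη
    unfold QQ
    rw [psi_gg_neg h hd.nb (by linarith [hη.1]), zero_sub, neg_neg, qq_int hA.reg hA.init0 hη]
  · intro τ hτ
    have h1 := hN τ (hsub τ hτ)
    have h2 := hpos τ (hsub τ hτ)
    linarith

end
end QS

open QS

/-- Theorem 3.2: continuous dependence of the solution on the initial data, up to the first
blow-up time. -/
theorem stmt3 (ΦF : ℝ) (hΦF : 0 < ΦF) (K : ℝ → ℝ) (hK : KAssump K ΦF)
    (Qinit : ℝ → ℝ → ℝ) (hA2 : ∀ ε : ℝ, 0 ≤ ε → A2 K ΦF (Qinit ε))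
    (hconv : TendstoUniformlyOn (fun ε => Qinit ε) (Qinit 0) (𝓝[>] (0 : ℝ)) (Icc 0 1))
    (hconv' : TendstoUniformlyOn (fun ε η => derivWithin (Qinit ε) (Icc 0 1) η)
      (fun η => derivWithin (Qinit 0) (Icc 0 1) η) (𝓝[>] (0 : ℝ)) (Icc 0 1))
    (τfam : ℝ → ℝ≥0∞) (Qfam : ℝ → ℝ → ℝ → ℝ) (Nfam : ℝ → ℝ → ℝ)
    (hsol : ∀ ε : ℝ, 0 ≤ ε → IsQSol K ΦF (τfam ε) (Qinit ε) (Qfam ε) (Nfam ε))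
    (hmax : ∀ ε : ℝ, 0 ≤ ε → ∀ (T : ℝ≥0∞) (Q' : ℝ → ℝ → ℝ) (N' : ℝ → ℝ),
      IsQSol K ΦF T (Qinit ε) Q' N' → T ≤ τfam ε) :
    τfam 0 ≤ liminf τfam (𝓝[>] (0 : ℝ)) ∧
    ∀ T : ℝ, 0 < T → ENNReal.ofReal T < τfam 0 →
      TendstoUniformlyOn (fun ε => Nfam ε) (Nfam 0) (𝓝[>] (0 : ℝ)) (Icc 0 T) ∧
      TendstoUniformlyOn (fun ε η => Qfam ε T η) (fun η => Qfam 0 T η)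
        (𝓝[>] (0 : ℝ)) (Icc 0 1) ∧
      TendstoUniformlyOn (fun ε η => pdEta (Qfam ε) T η) (fun η => pdEta (Qfam 0) T η)
        (𝓝[>] (0 : ℝ)) (Icc 0 1) := by
  obtain ⟨L, h⟩ := gk_of hK
  have hq : ∀ ρ > 0, ∀ᶠ ε in 𝓝[>] (0 : ℝ), 0 ≤ ε ∧
      ∀ x ∈ Icc (0 : ℝ) 1, |qq (Qinit 0) x - qq (Qinit ε) x| ≤ ρ := by
    intro ρ hρ
    filter_upwards [Metric.tendstoUniformlyOn_iff.1 hconv' ρ hρ, self_mem_nhdsWithin] with ε h1 h2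
    refine ⟨le_of_lt h2, fun x hx => ?_⟩
    rw [qq_eq _ hx, qq_eq _ hx]
    exact (h1 x hx).le
  have key : ∀ T : ℝ, 0 ≤ T → ENNReal.ofReal T < τfam 0 → ∃ (n0 : ℝ → ℝ) (C c : ℝ), 0 ≤ C ∧
      0 < c ∧ Data K n0 (qq (Qinit 0)) ∧ (∀ t ∈ Icc 0 T, c ≤ n0 t) ∧
      (∀ τ ∈ Icc 0 T, n0 τ = 1 / Nfam 0 τ ∧ ∀ η ∈ Icc (0 : ℝ) 1,
        Qfam 0 τ η = QQ K n0 (qq (Qinit 0)) τ η ∧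
        pdEta (Qfam 0) τ η = PP K (deriv K) n0 (qq (Qinit 0)) τ η) ∧
      ∀ (n2 q2 : ℝ → ℝ) (δ : ℝ), Data K n2 q2 →
        (∀ x ∈ Icc (0 : ℝ) 1, |qq (Qinit 0) x - q2 x| ≤ δ) → Sol K (deriv K) (K ΦF) q2 n2 T →
        ∀ τ ∈ Icc (0 : ℝ) T, |n0 τ - n2 τ| ≤ C * δ ∧ ∀ η ∈ Icc (0 : ℝ) 1,
          |QQ K n0 (qq (Qinit 0)) τ η - QQ K n2 q2 τ η| ≤ C * δ ∧
          |PP K (deriv K) n0 (qq (Qinit 0)) τ η - PP K (deriv K) n2 q2 τ η| ≤ C * δ := by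
    intro T hT hT0
    obtain ⟨n0, hd0, hs0, hn0⟩ := lemA h (hA2 0 le_rfl) (hsol 0 le_rfl) hT hT0
    obtain ⟨M1, hM1⟩ := hd0.nb.bdd
    obtain ⟨M2, hM2⟩ := (isCompact_Icc (a := (0 : ℝ)) (b := 1)).exists_bound_of_continuousOn
      hd0.cq.continuousOn
    have hM : 0 ≤ max M1 M2 := (abs_nonneg _).trans ((hM1 0).trans (le_max_left _ _))
    obtain ⟨C, hC, hst⟩ := stab (κ := K ΦF) h hT hM
    obtain ⟨ts, hts, hmin⟩ := isCompact_Icc.exists_isMinOn (nonempty_Icc.2 hT)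
      hd0.nb.cont.continuousOn
    refine ⟨n0, C, n0 ts, hC, ?_, hd0, fun t ht => hmin ht, hn0, ?_⟩
    · rw [(hn0 ts hts).1]
      have := (hsol 0 le_rfl).Npos ts (Ico0_of hT0 hts)
      positivity
    · intro n2 q2 δ hd2 hδ hs2
      exact hst n0 n2 _ q2 δ hd0 hd2 (fun t _ => (hM1 t).trans (le_max_left _ _))
        (fun x hx => (hM2 x hx).trans (le_max_right _ _)) hδ hs0 hs2
  have hlow : ∀ T : ℝ, 0 ≤ T → ENNReal.ofReal T < τfam 0 →
      ∀ᶠ ε in 𝓝[>] (0 : ℝ), ENNReal.ofReal T ≤ τfam ε := by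
    intro T hT hT0
    obtain ⟨n0, C, c, hC, hc, hd0, hcn, hn0, hst⟩ := key T hT hT0
    have hρ : 0 < c / (2 * (C + 1)) := by positivity
    filter_upwards [hq _ hρ] with ε hε
    have hA := hA2 ε hε.1
    have hcm : qq (Qinit ε) 1 - qq (Qinit ε) 0 = K ΦF - K 0 := by
      rw [qq_eq _ (by simp), qq_eq _ (by simp)]
      exact hA.compat
    obtain ⟨n2, hd2, hs2⟩ := sol_exists h (qq_cont hA.reg) hcm T
    refine hmax ε hε.1 _ _ _ (lemB h hΦF hK hA hd2 hs2 fun t ht => ?_)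
    have h1 := (hst n2 _ _ hd2 hε.2 hs2 t ht).1
    have h2 := hcn t ht
    have h3 : C * (c / (2 * (C + 1))) ≤ c / 2 := by
      rw [← mul_div_assoc, div_le_div_iff₀ (by positivity) (by norm_num)]
      nlinarith
    have h4 := (abs_le.1 h1).2
    linarith
  constructor
  · apply le_of_forall_lt_imp_le_of_dense
    intro c hc
    have hct : c ≠ ⊤ := hc.ne_top
    have := hlow c.toReal ENNReal.toReal_nonneg (by rwa [ENNReal.ofReal_toReal hct])
    rw [ENNReal.ofReal_toReal hct] at this
    exact le_liminf_of_le (by isBoundedDefault) this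
  intro T hT hT0
  obtain ⟨b, hb1, hb2⟩ := exists_between hT0
  have hlt : ∀ᶠ ε in 𝓝[>] (0 : ℝ), ENNReal.ofReal T < τfam ε := by
    have hbt : b ≠ ⊤ := hb2.ne_top
    have := hlow b.toReal ENNReal.toReal_nonneg (by rwa [ENNReal.ofReal_toReal hbt])
    rw [ENNReal.ofReal_toReal hbt] at this
    filter_upwards [this] with ε hε
    exact hb1.trans_le hε
  obtain ⟨n0, C, c, hC, hc, hd0, hcn, hn0, hst⟩ := key T hT.le hT0
  have hfin : ∀ ρ > 0, ∀ᶠ ε in 𝓝[>] (0 : ℝ), 0 ≤ ε ∧ ENNReal.ofReal T < τfam ε ∧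
      ∀ τ ∈ Icc 0 T, |1 / Nfam 0 τ - 1 / Nfam ε τ| < ρ ∧ ∀ η ∈ Icc (0 : ℝ) 1,
        |Qfam 0 τ η - Qfam ε τ η| < ρ ∧ |pdEta (Qfam 0) τ η - pdEta (Qfam ε) τ η| < ρ := by
    intro ρ hρ
    have hρ' : 0 < ρ / (C + 1) := by positivity
    have hCρ : C * (ρ / (C + 1)) < ρ := by
      rw [← mul_div_assoc, div_lt_iff₀ (by positivity)]
      nlinarith
    filter_upwards [hq _ hρ', hlt] with ε hε hτε
    refine ⟨hε.1, hτε, ?_⟩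
    obtain ⟨n2, hd2, hs2, hn2⟩ := lemA h (hA2 ε hε.1) (hsol ε hε.1) hT.le hτε
    intro τ hτ
    have h1 := hst n2 _ _ hd2 hε.2 hs2 τ hτ
    rw [← (hn0 τ hτ).1, ← (hn2 τ hτ).1]
    refine ⟨h1.1.trans_lt hCρ, fun η hη => ?_⟩
    rw [((hn0 τ hτ).2 η hη).1, ((hn0 τ hτ).2 η hη).2, ((hn2 τ hτ).2 η hη).1,
      ((hn2 τ hτ).2 η hη).2]
    exact ⟨(h1.2 η hη).1.trans_lt hCρ, (h1.2 η hη).2.trans_lt hCρ⟩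
  have hTT : T ∈ Icc 0 T := ⟨hT.le, le_rfl⟩
  refine ⟨?_, ?_, ?_⟩
  · rw [Metric.tendstoUniformlyOn_iff]
    intro e he
    have hρ : 0 < min (c / 2) (e * (c * (c / 2))) := by positivity
    filter_upwards [hfin _ hρ] with ε hε τ hτ
    have h1 := (hε.2.2 τ hτ).1
    have p0 := (hsol 0 le_rfl).Npos τ (Ico0_of hT0 hτ)
    have p2 := (hsol ε hε.1).Npos τ (Ico0_of hε.2.1 hτ)
    have hc0 : c ≤ 1 / Nfam 0 τ := by
      rw [← (hn0 τ hτ).1]; exact hcn τ hτ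
    have hc2 : c / 2 ≤ 1 / Nfam ε τ := by
      have := (abs_lt.1 (h1.trans_le (min_le_left _ _))).2
      linarith
    have h3 := h1.trans_le (min_le_right _ _)
    rw [Real.dist_eq]
    have e1 : Nfam 0 τ - Nfam ε τ =
        -((1 / Nfam 0 τ - 1 / Nfam ε τ) * (Nfam 0 τ * Nfam ε τ)) := by
      field_simp
      ring
    rw [e1, abs_neg, abs_mul, abs_of_pos (mul_pos p0 p2)]
    have h4 : Nfam 0 τ * Nfam ε τ * (c * (c / 2)) ≤ 1 := by
      have i1 : Nfam 0 τ * c ≤ 1 := by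
        rw [le_div_iff₀ p0] at hc0; linarith
      have i2 : Nfam ε τ * (c / 2) ≤ 1 := by
        rw [le_div_iff₀ p2] at hc2; linarith
      have := mul_le_mul i1 i2 (by positivity) zero_le_one
      linarith
    calc _ < e * (c * (c / 2)) * (Nfam 0 τ * Nfam ε τ) :=
          mul_lt_mul_of_pos_right h3 (mul_pos p0 p2)
      _ = e * (Nfam 0 τ * Nfam ε τ * (c * (c / 2))) := by ring
      _ ≤ e * 1 := mul_le_mul_of_nonneg_left h4 he.le
      _ = e := mul_one e
  · rw [Metric.tendstoUniformlyOn_iff]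
    intro e he
    filter_upwards [hfin _ he] with ε hε η hη
    rw [Real.dist_eq]
    exact ((hε.2.2 T hTT).2 η hη).1
  · rw [Metric.tendstoUniformlyOn_iff]
    intro e he
    filter_upwards [hfin _ he] with ε hε η hη
    rw [Real.dist_eq]
    exact ((hε.2.2 T hTT).2 η hη).2
end
end
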